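/- arXiv:2303.12768 — 4 statements merged into one kernel-verified Lean document; each statement's English description precedes it below -/
import Mathlib

section
/- For every real ε > 0 there exist constants C1 and C2, with C1 ≤ 2^(c/ε) for an absolute constant c and C2 depending only on ε, such that: for every finite undirected unweighted simple graph G on n vertices and every subset U of its vertices, there is a subgraph H ⊆ G with at most C1 · n edges such that for every pair u, u' ∈ U connected in G, dist_H(u,u') ≤ dist_G(u,u') + C2 · |U|^(3/2) · n^ε. -/
open SimpleGraph
namespace SubsetSpanner

/-- A consistent system of canonical geodesics: `I u v x` says that `x` lies on the
canonical shortest path between `u` and `v`. -/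
structure IsGeo {V : Type} (G : SimpleGraph V) (I : V → V → V → Prop) : Prop where
  symm : ∀ u v x, I u v x → I v u x
  reach : ∀ u v x, I u v x → G.Reachable u v ∧ G.Reachable u x
  dist : ∀ u v x, I u v x → G.dist u x + G.dist x v = G.dist u v
  ex : ∀ u v k, G.Reachable u v → k ≤ G.dist u v → ∃ x, I u v x ∧ G.dist u x = k
  uniq : ∀ u v x y, I u v x → I u v y → G.dist u x = G.dist u y → x = y
  add : ∀ u v x y, I u v x → I u v y → G.dist u x ≤ G.dist u y →
    G.dist u x + G.dist x y = G.dist u y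
  sub : ∀ u v x y z, I u v x → I u v y → G.dist u x ≤ G.dist u y → I x y z → I u v z

section geo
variable {V : Type} {G : SimpleGraph V}

/-- Weighted length of a walk. -/
def wlen (w : Sym2 V → ℕ) {u v : V} (p : G.Walk u v) : ℕ := (p.edges.map w).sum

lemma wlen_append (w : Sym2 V → ℕ) {u v x : V} (p : G.Walk u v) (q : G.Walk v x) :
    wlen w (p.append q) = wlen w p + wlen w q := by
  simp [wlen, Walk.edges_append]

lemma wlen_reverse (w : Sym2 V → ℕ) {u v : V} (p : G.Walk u v) :
    wlen w p.reverse = wlen w p := by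
  simp [wlen, Walk.edges_reverse, List.sum_reverse]

/-- Weighted distance. -/
noncomputable def wd (G : SimpleGraph V) (w : Sym2 V → ℕ) (u v : V) : ℕ :=
  sInf (Set.range (wlen w : G.Walk u v → ℕ))

lemma wd_le (w : Sym2 V → ℕ) {u v : V} (p : G.Walk u v) : wd G w u v ≤ wlen w p :=
  Nat.sInf_le ⟨p, rfl⟩

lemma exists_wd (w : Sym2 V → ℕ) {u v : V} (h : G.Reachable u v) :
    ∃ p : G.Walk u v, wlen w p = wd G w u v :=
  Nat.sInf_mem (Set.range_nonempty_iff_nonempty.mpr h)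

lemma wd_tri (w : Sym2 V → ℕ) {u v x : V} (h : G.Reachable u v) (h' : G.Reachable v x) :
    wd G w u x ≤ wd G w u v + wd G w v x := by
  obtain ⟨p, hp⟩ := exists_wd w h
  obtain ⟨q, hq⟩ := exists_wd w h'
  have := wd_le w (p.append q)
  rw [wlen_append] at this
  omega

lemma wd_comm (w : Sym2 V → ℕ) {u v : V} (h : G.Reachable u v) :
    wd G w u v = wd G w v u := by
  obtain ⟨p, hp⟩ := exists_wd w h
  obtain ⟨q, hq⟩ := exists_wd w h.symm
  have h1 := wd_le w p.reverse
  have h2 := wd_le w q.reverse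
  rw [wlen_reverse] at h1 h2
  omega

theorem exists_geo [Fintype V] (G : SimpleGraph V) : ∃ I, IsGeo G I := by
  classical
  set N := Fintype.card (Sym2 V) with hN
  set idx : Sym2 V → ℕ := fun e => (Fintype.equivFin (Sym2 V) e : ℕ) with hidx
  have idx_inj : Function.Injective idx := fun a b h => by
    have := Fin.ext h
    exact (Fintype.equivFin (Sym2 V)).injective this
  have idx_lt : ∀ e, idx e < N := fun e => (Fintype.equivFin (Sym2 V) e).2
  set w : Sym2 V → ℕ := fun e => 2 ^ N + 2 ^ idx e with hw
  have wl : ∀ {u v : V} (p : G.Walk u v),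
      wlen w p = p.length * 2 ^ N + (p.edges.map (fun e => 2 ^ idx e)).sum := by
    intro u v p
    simp [wlen, hw, List.sum_map_add]
  have ps : ∀ {u v : V} (p : G.Walk u v), p.IsPath →
      (p.edges.map (fun e => 2 ^ idx e)).sum = ∑ k ∈ p.edges.toFinset.image idx, 2 ^ k := by
    intro u v p hp
    rw [Finset.sum_image (fun a _ b _ h => idx_inj h)]
    rw [List.sum_toFinset _ hp.isTrail.edges_nodup]
  have pl : ∀ {u v : V} (p : G.Walk u v), p.IsPath →
      (p.edges.map (fun e => 2 ^ idx e)).sum < 2 ^ N := by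
    intro u v p hp
    rw [ps p hp]
    apply Nat.geomSum_lt le_rfl
    intro k hk
    obtain ⟨e, _, rfl⟩ := Finset.mem_image.1 hk
    exact idx_lt e
  have opt : ∀ {u v : V} (p : G.Walk u v), wlen w p = wd G w u v → p.length = G.dist u v := by
    intro u v p hp
    obtain ⟨q, hq, hql⟩ := (p.reachable).exists_path_of_dist
    have h1 := wd_le w q
    rw [← hp, wl, wl, hql] at h1
    have h2 := pl q hq
    have h3 := dist_le p
    by_contra hne
    have h4 : G.dist u v + 1 ≤ p.length := by omega
    have h5 := Nat.mul_le_mul_right (2 ^ N) h4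
    rw [add_mul, one_mul] at h5
    omega
  -- combine
  have comb : ∀ {u v x : V}, G.Reachable u v → G.Reachable u x →
      wd G w u x + wd G w x v = wd G w u v → ∃ p : G.Walk u x, ∃ q : G.Walk x v,
      p.length = G.dist u x ∧ q.length = G.dist x v ∧ (p.append q).length = G.dist u v ∧
      wlen w (p.append q) = wd G w u v := by
    intro u v x h h' he
    obtain ⟨p, hp⟩ := exists_wd w h'
    obtain ⟨q, hq⟩ := exists_wd w (h'.symm.trans h)
    have : wlen w (p.append q) = wd G w u v := by rw [wlen_append]; omega
    exact ⟨p, q, opt _ hp, opt _ hq, opt _ this, this⟩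
  have hdist : ∀ u v x, G.Reachable u v → G.Reachable u x →
      wd G w u x + wd G w x v = wd G w u v → G.dist u x + G.dist x v = G.dist u v := by
    intro u v x h h' he
    obtain ⟨p, q, h1, h2, h3, -⟩ := comb h h' he
    rw [Walk.length_append] at h3
    omega
  have gv : ∀ {u v : V} (q : G.Walk u v), q.length = G.dist u v → ∀ i ≤ q.length,
      G.dist u (q.getVert i) = i := by
    intro u v q hq i hi
    have h1 := dist_le (q.take i)
    have h2 := dist_le (q.drop i)
    have h3 := (q.take i).reachable.dist_triangle_left v
    rw [Walk.take_length] at h1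
    rw [Walk.drop_length] at h2
    rw [min_eq_left hi] at h1
    omega
  have huniq : ∀ u v x y, G.Reachable u v → G.Reachable u x →
      wd G w u x + wd G w x v = wd G w u v → G.Reachable u y →
      wd G w u y + wd G w y v = wd G w u v → G.dist u x = G.dist u y → x = y := by
    intro u v x y h hx ex hy ey hxy
    obtain ⟨p1, p2, -, -, hp3, hp4⟩ := comb h hx ex
    obtain ⟨q1, q2, -, -, hq3, hq4⟩ := comb h hy ey
    have hxp : x ∈ (p1.append p2).support := by simp
    have hyq : y ∈ (q1.append q2).support := by simp
    generalize p1.append p2 = p at *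
    generalize q1.append q2 = q at *
    have pp := p.isPath_of_length_eq_dist hp3
    have qp := q.isPath_of_length_eq_dist hq3
    have e1 := wl p
    have e2 := wl q
    rw [hp4, ps p pp, hp3] at e1
    rw [hq4, ps q qp, hq3] at e2
    have e3 : ∑ k ∈ p.edges.toFinset.image idx, 2 ^ k = ∑ k ∈ q.edges.toFinset.image idx, 2 ^ k := by
      omega
    have e4 := Finset.geomSum_injective (le_refl 2) e3
    have e5 := Finset.image_injective idx_inj e4
    have hxq : x ∈ q.support := by
      rw [Walk.mem_support_iff_exists_mem_edges] at hxp ⊢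
      rcases hxp with hxp | ⟨e, he, hxe⟩
      · exact Or.inl hxp
      · refine Or.inr ⟨e, ?_, hxe⟩
        have : e ∈ p.edges.toFinset := by simpa using he
        rw [e5] at this
        simpa using this
    obtain ⟨i, hi, hil⟩ := Walk.mem_support_iff_exists_getVert.1 hxq
    obtain ⟨j, hj, hjl⟩ := Walk.mem_support_iff_exists_getVert.1 hyq
    have a1 := gv q hq3 i hil
    have a2 := gv q hq3 j hjl
    rw [hi] at a1
    rw [hj] at a2
    have : i = j := by omega
    subst this
    exact hi.symm.trans hj
  have hex : ∀ u v k, G.Reachable u v → k ≤ G.dist u v → ∃ x, (G.Reachable u x ∧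
      wd G w u x + wd G w x v = wd G w u v) ∧ G.dist u x = k := by
    intro u v k h hk
    obtain ⟨p, hp⟩ := exists_wd w h
    have hpl := opt p hp
    refine ⟨p.getVert k, ⟨(p.take k).reachable, ?_⟩, gv p hpl k (by omega)⟩
    have h1 := wd_le w (p.take k)
    have h2 := wd_le w (p.drop k)
    have h3 := wd_tri w (p.take k).reachable (p.drop k).reachable
    have h4 : wlen w (p.take k) + wlen w (p.drop k) = wlen w p := by
      rw [← wlen_append, Walk.append_take_drop_eq]
    omega
  -- intermediate
  have hmid : ∀ u v x y, G.Reachable u v → G.Reachable u x →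
      wd G w u x + wd G w x v = wd G w u v → G.Reachable u y →
      wd G w u y + wd G w y v = wd G w u v → G.dist u x ≤ G.dist u y →
      wd G w u x + wd G w x y = wd G w u y := by
    intro u v x y h hx ex hy ey hxy
    obtain ⟨x', ⟨hx', ex'⟩, hd⟩ := hex u y _ hy hxy
    have h1 := wd_tri w (hx'.symm.trans hy) (hy.symm.trans h)
    have h2 := wd_tri w hx' (hx'.symm.trans h)
    have : x' = x := huniq u v x' x h hx' (by omega) hx ex hd
    subst this
    exact ex'
  refine ⟨fun u v x => G.Reachable u v ∧ G.Reachable u x ∧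
    wd G w u x + wd G w x v = wd G w u v, ?_, ?_, ?_, ?_, ?_, ?_, ?_⟩
  · rintro u v x ⟨h, hx, e⟩
    refine ⟨h.symm, h.symm.trans hx, ?_⟩
    rw [wd_comm w h.symm, wd_comm w (h.symm.trans hx), wd_comm w hx.symm]
    omega
  · rintro u v x ⟨h, hx, e⟩
    exact ⟨h, hx⟩
  · rintro u v x ⟨h, hx, e⟩
    exact hdist u v x h hx e
  · intro u v k h hk
    obtain ⟨x, ⟨hx, e⟩, hd⟩ := hex u v k h hk
    exact ⟨x, ⟨h, hx, e⟩, hd⟩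
  · rintro u v x y ⟨h, hx, ex⟩ ⟨_, hy, ey⟩ hd
    exact huniq u v x y h hx ex hy ey hd
  · rintro u v x y ⟨h, hx, ex⟩ ⟨_, hy, ey⟩ hd
    exact hdist u y x hy hx (hmid u v x y h hx ex hy ey hd)
  · rintro u v x y z ⟨h, hx, ex⟩ ⟨_, hy, ey⟩ hd ⟨hxy, hz, ez⟩
    have h0 := hmid u v x y h hx ex hy ey hd
    have h1 := wd_tri w hx hz
    have h2 := wd_tri w (hz.symm.trans hxy) (hy.symm.trans h)
    have h3 := wd_tri w (hx.trans hz) ((hx.trans hz).symm.trans h)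
    exact ⟨h, hx.trans hz, by omega⟩

end geo
section count
variable {V : Type} {G : SimpleGraph V} {I : V → V → V → Prop}

lemma IsGeo.sub' (hI : IsGeo G I) {u v x y z : V} (hx : I u v x) (hy : I u v y)
    (hz : I x y z) : I u v z := by
  rcases le_total (G.dist u x) (G.dist u y) with h | h
  · exact hI.sub u v x y z hx hy h hz
  · exact hI.sub u v y x z hy hx h (hI.symm _ _ _ hz)

lemma IsGeo.mid (hI : IsGeo G I) {u v x y z : V} (hx : I u v x) (hy : I u v y)
    (hz : I u v z) (h1 : G.dist u x ≤ G.dist u z) (h2 : G.dist u z ≤ G.dist u y) :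
    I x y z := by
  have a1 := hI.add u v x y hx hy (h1.trans h2)
  have rx := (hI.reach _ _ _ hx).2
  have ry := (hI.reach _ _ _ hy).2
  obtain ⟨z', hz', hd⟩ := hI.ex x y (G.dist u z - G.dist u x) (rx.symm.trans ry) (by omega)
  have hz'' := hI.sub' hx hy hz'
  have b1 := hI.dist _ _ _ hz'
  have rz := (hI.reach _ _ _ hz').2
  have b2 := rx.dist_triangle_left z'
  have b3 := (rx.trans rz).dist_triangle_left y
  have : z' = z := hI.uniq u v z' z hz'' hz (by omega)
  exact this ▸ hz'

lemma card_nbr (hI : IsGeo G I) [Fintype V] (u v x : V) (hx : I u v x) :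
    by classical exact (Finset.univ.filter (fun y => G.Adj x y ∧ I u v y)).card ≤ 2 := by
  classical
  have : (Finset.univ.filter (fun y => G.Adj x y ∧ I u v y)).card ≤
      ({G.dist u x - 1, G.dist u x + 1} : Finset ℕ).card := by
    apply Finset.card_le_card_of_injOn (fun y => G.dist u y)
    · intro y hy
      simp only [Finset.coe_filter, Finset.mem_univ, true_and, Set.mem_ofPred_eq] at hy
      rcases hy.1.diff_dist_adj (u := u) with h | h | h
      · exact absurd (hI.uniq u v y x hy.2 hx h) hy.1.ne'
      · simp [h]
      · simp [h]
    · intro y hy z hz h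
      simp only [Finset.coe_filter, Finset.mem_univ, true_and, Set.mem_ofPred_eq] at hy hz
      exact hI.uniq u v y z hy.2 hz.2 h
  exact this.trans Finset.card_le_two

lemma card_branch (hI : IsGeo G I) [Fintype V] (u v a b : V) :
    by classical exact (Finset.univ.filter (fun x => I u v x ∧ I a b x ∧
      ∃ y, G.Adj x y ∧ I a b y ∧ ¬ I u v y)).card ≤ 2 := by
  classical
  set Z := Finset.univ.filter (fun x => I u v x ∧ I a b x) with hZ
  rcases Z.eq_empty_or_nonempty with hE | hne
  · rw [Finset.card_eq_zero.2]
    · omega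
    · rw [Finset.eq_empty_iff_forall_notMem] at hE ⊢
      intro x hx
      simp only [Finset.mem_filter, Finset.mem_univ, true_and, hZ] at hx hE
      exact hE x ⟨hx.1, hx.2.1⟩
  · obtain ⟨x1, hx1, m1⟩ := Z.exists_min_image (fun x => G.dist a x) hne
    obtain ⟨x2, hx2, m2⟩ := Z.exists_max_image (fun x => G.dist a x) hne
    simp only [Finset.mem_filter, Finset.mem_univ, true_and, hZ] at hx1 hx2 m1 m2
    refine (Finset.card_le_card (t := {x1, x2}) ?_).trans Finset.card_le_two
    intro x hx
    simp only [Finset.mem_filter, Finset.mem_univ, true_and] at hx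
    obtain ⟨h1, h2, y, hxy, hy, hny⟩ := hx
    by_contra hc
    simp only [Finset.mem_insert, Finset.mem_singleton, not_or] at hc
    have c1 := m1 x ⟨h1, h2⟩
    have c2 := m2 x ⟨h1, h2⟩
    have c3 : G.dist a x1 ≠ G.dist a x := fun h => hc.1 (hI.uniq _ _ _ _ hx1.2 h2 h).symm
    have c4 : G.dist a x2 ≠ G.dist a x := fun h => hc.2 (hI.uniq _ _ _ _ hx2.2 h2 h).symm
    have c5 : I x1 x2 y := by
      apply hI.mid hx1.2 hx2.2 hy <;>
      rcases hxy.diff_dist_adj (u := a) with h | h | h <;> omega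
    exact hny (hI.sub' hx1.1 hx2.1 c5)

lemma exists_cover (hI : IsGeo G I) [Fintype V] (P : Finset (V × V)) (x : V) :
    ∃ T : Finset (V × V), T ⊆ P ∧
    (by classical exact (Finset.univ.filter (fun y => G.Adj x y ∧
      ∃ i ∈ P, I i.1 i.2 x ∧ I i.1 i.2 y)).card ≤ 2 * T.card) ∧
    ∀ i ∈ T, ∀ j ∈ T, i ≠ j → I i.1 i.2 x ∧ I j.1 j.2 x ∧
      ∃ y, G.Adj x y ∧ I j.1 j.2 y ∧ ¬ I i.1 i.2 y := by
  classical
  set N := Finset.univ.filter (fun y => G.Adj x y ∧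
      ∃ i ∈ P, I i.1 i.2 x ∧ I i.1 i.2 y) with hN
  set F := P.powerset.filter (fun T => ∀ y ∈ N, ∃ i ∈ T, I i.1 i.2 x ∧ I i.1 i.2 y) with hF
  have hne : F.Nonempty := by
    refine ⟨P, ?_⟩
    simp only [hF, hN, Finset.mem_filter, Finset.mem_powerset, Finset.mem_univ, true_and]
    exact ⟨subset_rfl, fun y hy => hy.2⟩
  obtain ⟨T, hT, hmin⟩ := F.exists_min_image Finset.card hne
  simp only [hF, Finset.mem_filter, Finset.mem_powerset] at hT hmin
  have priv : ∀ j ∈ T, ∃ y ∈ N, I j.1 j.2 x ∧ I j.1 j.2 y ∧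
      ∀ i ∈ T, i ≠ j → ¬ (I i.1 i.2 x ∧ I i.1 i.2 y) := by
    intro j hj
    by_contra hc
    push Not at hc
    have := hmin (T.erase j) ⟨(Finset.erase_subset _ _).trans hT.1, by
      intro y hy
      obtain ⟨i, hi, h1, h2⟩ := hT.2 y hy
      by_cases hij : i = j
      · subst hij
        obtain ⟨k, hk, hki, hk2⟩ := hc y hy h1 h2
        exact ⟨k, Finset.mem_erase.2 ⟨hki, hk⟩, hk2⟩
      · exact ⟨i, Finset.mem_erase.2 ⟨hij, hi⟩, h1, h2⟩⟩
    have h2 := Finset.card_erase_lt_of_mem hj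
    omega
  refine ⟨T, hT.1, ?_, ?_⟩
  · have hsub : N ⊆ T.biUnion (fun i => if I i.1 i.2 x then
        Finset.univ.filter (fun y => G.Adj x y ∧ I i.1 i.2 y) else ∅) := by
      intro y hy
      obtain ⟨i, hi, h1, h2⟩ := hT.2 y hy
      refine Finset.mem_biUnion.2 ⟨i, hi, ?_⟩
      simp only [hN, Finset.mem_filter, Finset.mem_univ, true_and] at hy
      simp [h1, h2, hy.1]
    refine (Finset.card_le_card hsub).trans ?_
    refine Finset.card_biUnion_le.trans ?_
    rw [mul_comm]
    refine Finset.sum_le_card_nsmul _ _ _ ?_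
    intro i hi
    split_ifs with h
    · exact card_nbr hI _ _ _ h
    · simp
  · intro i hi j hj hij
    obtain ⟨y, hy, h1, h2, h3⟩ := priv j hj
    obtain ⟨_, _, h1', _⟩ := priv i hi
    simp only [hN, Finset.mem_filter, Finset.mem_univ, true_and] at hy
    exact ⟨h1', h1, y, hy.1, h2, fun h => h3 i hi hij ⟨h1', h⟩⟩

theorem card_darts (hI : IsGeo G I) [Fintype V] (P : Finset (V × V)) (X : Finset V) (M : ℕ)
    (hX : X.card ≤ M) (hP : P.card ^ 2 ≤ M) :
    by classical exact (Finset.univ.filter (fun d : V × V => d.1 ∈ X ∧ G.Adj d.1 d.2 ∧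
      ∃ i ∈ P, I i.1 i.2 d.1 ∧ I i.1 i.2 d.2)).card ≤ 4 * M := by
  classical
  choose T hTP hdeg hbr using exists_cover hI P
  have h1 : (Finset.univ.filter (fun d : V × V => d.1 ∈ X ∧ G.Adj d.1 d.2 ∧
      ∃ i ∈ P, I i.1 i.2 d.1 ∧ I i.1 i.2 d.2)).card ≤ ∑ x ∈ X, 2 * (T x).card := by
    have hsub : (Finset.univ.filter (fun d : V × V => d.1 ∈ X ∧ G.Adj d.1 d.2 ∧
      ∃ i ∈ P, I i.1 i.2 d.1 ∧ I i.1 i.2 d.2)) ⊆ X.biUnion (fun x =>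
        (Finset.univ.filter (fun y => G.Adj x y ∧
          ∃ i ∈ P, I i.1 i.2 x ∧ I i.1 i.2 y)).image (fun y => (x, y))) := by
      rintro ⟨x, y⟩ h
      simp only [Finset.mem_filter, Finset.mem_univ, true_and] at h
      refine Finset.mem_biUnion.2 ⟨x, h.1, Finset.mem_image.2 ⟨y, ?_, rfl⟩⟩
      simp only [Finset.mem_filter, Finset.mem_univ, true_and]
      exact h.2
    refine (Finset.card_le_card hsub).trans (Finset.card_biUnion_le.trans ?_)
    exact Finset.sum_le_sum fun x _ => Finset.card_image_le.trans (hdeg x)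
  have h2 : ∑ x ∈ X, (T x).offDiag.card ≤ 2 * P.card ^ 2 := by
    have e1 : ∀ x ∈ X, (T x).offDiag.card ≤ ∑ ij ∈ P ×ˢ P,
        if (I ij.1.1 ij.1.2 x ∧ I ij.2.1 ij.2.2 x ∧
          ∃ y, G.Adj x y ∧ I ij.2.1 ij.2.2 y ∧ ¬ I ij.1.1 ij.1.2 y) then 1 else 0 := by
      intro x _
      rw [← Finset.card_filter]
      apply Finset.card_le_card
      rintro ⟨i, j⟩ h
      rw [Finset.mem_offDiag] at h
      rw [Finset.mem_filter, Finset.mem_product]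
      exact ⟨⟨hTP x h.1, hTP x h.2.1⟩, hbr x i h.1 j h.2.1 h.2.2⟩
    refine (Finset.sum_le_sum e1).trans ?_
    rw [Finset.sum_comm]
    have e2 : 2 * P.card ^ 2 = (P ×ˢ P).card * 2 := by
      rw [Finset.card_product]; ring
    rw [e2]
    refine Finset.sum_le_card_nsmul _ _ _ ?_
    intro ij _
    rw [← Finset.card_filter]
    refine (Finset.card_le_card ?_).trans (card_branch hI ij.1.1 ij.1.2 ij.2.1 ij.2.2)
    exact Finset.filter_subset_filter _ (Finset.subset_univ _)
  have h3 : (∑ x ∈ X, (T x).card) ^ 2 ≤ X.card * ∑ x ∈ X, (T x).card ^ 2 :=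
    sq_sum_le_card_mul_sum_sq
  have h4 : ∑ x ∈ X, (T x).card ^ 2 = ∑ x ∈ X, (T x).offDiag.card + ∑ x ∈ X, (T x).card := by
    rw [← Finset.sum_add_distrib]
    refine Finset.sum_congr rfl fun x _ => ?_
    rw [Finset.offDiag_card, sq, Nat.sub_add_cancel]
    exact Nat.le_mul_self _
  rw [← Finset.mul_sum] at h1
  set S := ∑ x ∈ X, (T x).card
  have h5 : S ^ 2 ≤ M * (2 * M + S) := by
    rw [h4] at h3
    exact h3.trans (Nat.mul_le_mul hX (by omega))
  have h6 : S ≤ 2 * M := by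
    by_contra hc
    push Not at hc
    nlinarith
  omega

end count
section near
variable {V : Type} {G H : SimpleGraph V}

/-- There is a walk of length at most `L`. -/
def Near (H : SimpleGraph V) (L : ℕ) (x y : V) : Prop := ∃ p : H.Walk x y, p.length ≤ L

lemma near_iff {L : ℕ} {x y : V} : Near H L x y ↔ H.Reachable x y ∧ H.dist x y ≤ L := by
  constructor
  · rintro ⟨p, hp⟩
    exact ⟨p.reachable, (dist_le p).trans hp⟩
  · rintro ⟨h, hL⟩
    obtain ⟨p, hp⟩ := h.exists_walk_length_eq_dist
    exact ⟨p, by omega⟩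

lemma Near.trans {L M : ℕ} {x y z : V} (h : Near H L x y) (h' : Near H M y z) :
    Near H (L + M) x z := by
  obtain ⟨p, hp⟩ := h
  obtain ⟨q, hq⟩ := h'
  exact ⟨p.append q, by rw [Walk.length_append]; omega⟩

lemma Near.symm {L : ℕ} {x y : V} (h : Near H L x y) : Near H L y x := by
  obtain ⟨p, hp⟩ := h
  exact ⟨p.reverse, by simpa using hp⟩

lemma Near.mono {L M : ℕ} {x y : V} (h : Near H L x y) (hLM : L ≤ M) : Near H M x y := by
  obtain ⟨p, hp⟩ := h
  exact ⟨p, hp.trans hLM⟩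

lemma near_refl (L : ℕ) (x : V) : Near H L x x := ⟨Walk.nil, by simp⟩

lemma near_adj {x y : V} (h : H.Adj x y) : Near H 1 x y := ⟨h.toWalk, by simp⟩

/-- Balls. -/
noncomputable def ball [Fintype V] (G : SimpleGraph V) (v : V) (R : ℕ) : Finset V :=
  by classical exact Finset.univ.filter (fun x => Near G R v x)

lemma mem_ball [Fintype V] {v x : V} {R : ℕ} : x ∈ ball G v R ↔ Near G R v x := by
  simp [ball]

theorem clustering [Fintype V] (G : SimpleGraph V) (r0 J : ℕ) (hJ : 1 ≤ J)
    (A : ℝ) (hA : 0 ≤ A) (hAJ : (Fintype.card V : ℝ) ≤ A ^ J) :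
    ∃ (C : Finset V) (r : V → ℕ), (∀ v, r0 ≤ r v ∧ r v ≤ 8 ^ (J - 1) * r0) ∧
      (∀ x, ∃ v ∈ C, Near G (3 * r v) v x) ∧
      ((∑ v ∈ C, (ball G v (8 * r v)).card : ℕ) : ℝ) ≤ A * (Fintype.card V : ℝ) := by
  classical
  have key : ∀ v, ∃ j, j < J ∧ ((ball G v (8 * (8 ^ j * r0))).card : ℝ) ≤
      A * ((ball G v (8 ^ j * r0)).card : ℝ) := by
    intro v
    by_contra hc
    push Not at hc
    have ind : ∀ j, j < J → A ^ j ≤ ((ball G v (8 ^ j * r0)).card : ℝ) := by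
      intro j
      induction j with
      | zero =>
        intro _
        have : 0 < (ball G v (8 ^ 0 * r0)).card :=
          Finset.card_pos.2 ⟨v, mem_ball.2 (near_refl _ _)⟩
        rw [pow_zero]
        exact_mod_cast this
      | succ j ih =>
        intro hj
        have h1 := ih (by omega)
        have h2 := hc j (by omega)
        have h3 : 8 ^ (j + 1) * r0 = 8 * (8 ^ j * r0) := by ring
        rw [h3, pow_succ, mul_comm]
        exact (mul_le_mul_of_nonneg_left h1 hA).trans h2.le
    have h1 := ind (J - 1) (by omega)
    have h2 := hc (J - 1) (by omega)
    have h3 : ((ball G v (8 * (8 ^ (J - 1) * r0))).card : ℝ) ≤ Fintype.card V := by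
      exact_mod_cast Finset.card_le_univ _
    have h4 := mul_le_mul_of_nonneg_left h1 hA
    have h5 : A * A ^ (J - 1) = A ^ J := by
      rw [← pow_succ', Nat.sub_add_cancel hJ]
    linarith
  choose j hj hg using key
  obtain ⟨u, -, hdis, hcov⟩ := Vitali.exists_disjoint_subfamily_covering_enlargement
    (fun v : V => {x | Near G (8 ^ j v * r0) v x}) Set.univ
    (fun v => ((8 ^ j v * r0 : ℕ) : ℝ)) 2 (by norm_num) (fun _ _ => by positivity)
    ((8 ^ J * r0 : ℕ) : ℝ) (fun v _ => by
      have := Nat.mul_le_mul_right r0 (Nat.pow_le_pow_right (show 0 < 8 by norm_num) (hj v).le)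
      exact_mod_cast this) (fun v _ => ⟨v, near_refl _ _⟩)
  refine ⟨u.toFinset, fun v => 8 ^ j v * r0, ?_, ?_, ?_⟩
  · intro v
    refine ⟨Nat.le_mul_of_pos_left _ (by positivity), Nat.mul_le_mul_right _ ?_⟩
    exact Nat.pow_le_pow_right (by norm_num) (by have := hj v; omega)
  · intro x
    obtain ⟨v, hv, ⟨z, hz1, hz2⟩, hle⟩ := hcov x (Set.mem_univ _)
    refine ⟨v, by simpa using hv, ?_⟩
    have hle' : 8 ^ j x * r0 ≤ 2 * (8 ^ j v * r0) := by exact_mod_cast hle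
    have hz1' : Near G (8 ^ j x * r0) x z := hz1
    have hz2' : Near G (8 ^ j v * r0) v z := hz2
    exact (hz2'.trans hz1'.symm).mono (by dsimp only; omega)
  · push_cast
    have h1 : ∑ v ∈ u.toFinset, ((ball G v (8 * (8 ^ j v * r0))).card : ℝ) ≤
        ∑ v ∈ u.toFinset, A * ((ball G v (8 ^ j v * r0)).card : ℝ) :=
      Finset.sum_le_sum fun v _ => hg v
    refine h1.trans ?_
    rw [← Finset.mul_sum]
    refine mul_le_mul_of_nonneg_left ?_ hA
    have h2 : (u.toFinset.biUnion (fun v => ball G v (8 ^ j v * r0))).card =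
        ∑ v ∈ u.toFinset, (ball G v (8 ^ j v * r0)).card := by
      apply Finset.card_biUnion
      intro a ha b hb hab
      have := hdis (by simpa using ha) (by simpa using hb) hab
      rw [Function.onFun, Finset.disjoint_left]
      intro x hx hx'
      exact Set.disjoint_left.1 this (mem_ball.1 hx) (mem_ball.1 hx')
    have h3 := Finset.card_le_univ (u.toFinset.biUnion (fun v => ball G v (8 ^ j v * r0)))
    rw [h2] at h3
    exact_mod_cast h3

lemma ivt_down (f : ℕ → ℕ) (t a b : ℕ) (hab : a ≤ b)
    (hf : ∀ j, a ≤ j → j < b → f j ≤ f (j + 1) + 1) (ha : t ≤ f a) (hb : f b ≤ t) :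
    ∃ s, a ≤ s ∧ s ≤ b ∧ f s = t := by
  induction b, hab using Nat.le_induction with
  | base => exact ⟨a, le_rfl, le_rfl, le_antisymm hb ha⟩
  | succ b hab ih =>
    by_cases h : f b ≤ t
    · obtain ⟨s, h1, h2, h3⟩ := ih (fun j h1 h2 => hf j h1 (by omega)) h
      exact ⟨s, h1, by omega, h3⟩
    · exact ⟨b + 1, by omega, le_rfl, by have := hf b hab (by omega); omega⟩

lemma ivt_up (f : ℕ → ℕ) (t a b : ℕ) (hab : a ≤ b)
    (hf : ∀ j, a ≤ j → j < b → f (j + 1) ≤ f j + 1) (ha : f a ≤ t) (hb : t ≤ f b) :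
    ∃ s, a ≤ s ∧ s ≤ b ∧ f s = t := by
  induction b, hab using Nat.le_induction with
  | base => exact ⟨a, le_rfl, le_rfl, le_antisymm ha hb⟩
  | succ b hab ih =>
    by_cases h : t ≤ f b
    · obtain ⟨s, h1, h2, h3⟩ := ih (fun j h1 h2 => hf j h1 (by omega)) h
      exact ⟨s, h1, by omega, h3⟩
    · exact ⟨b + 1, by omega, le_rfl, by have := hf b hab (by omega); omega⟩

/-- A thin sphere in a ball of small volume. -/
lemma thin_sphere [Fintype V] (G : SimpleGraph V) (v : V) (r p : ℕ) (hr : 1 ≤ r)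
    (hrp : p ^ 3 ≤ r ^ 2) (hM : (ball G v (8 * r)).card < p ^ 2) :
    ∃ (t : ℕ) (S : Finset V), 3 * r < t ∧ t ≤ 4 * r ∧
      (∀ x, x ∈ S ↔ G.Reachable v x ∧ G.dist v x = t) ∧
      (S ×ˢ S).card ^ 2 ≤ (ball G v (8 * r)).card := by
  classical
  set M := (ball G v (8 * r)).card with hMdef
  set S : ℕ → Finset V := fun t => Finset.univ.filter (fun x => G.Reachable v x ∧ G.dist v x = t)
    with hS
  have h1 : ∑ t ∈ Finset.Ioc (3 * r) (4 * r), (S t).card ≤ M := by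
    rw [← Finset.card_biUnion]
    · apply Finset.card_le_card
      intro x hx
      obtain ⟨t, ht, hx⟩ := Finset.mem_biUnion.1 hx
      simp only [hS, Finset.mem_filter, Finset.mem_univ, true_and] at hx
      rw [Finset.mem_Ioc] at ht
      exact mem_ball.2 (near_iff.2 ⟨hx.1, by omega⟩)
    · intro a _ b _ hab
      rw [Function.onFun, Finset.disjoint_left]
      intro x hx hx'
      simp only [hS, Finset.mem_filter, Finset.mem_univ, true_and] at hx hx'
      exact hab (hx.2.symm.trans hx'.2)
  obtain ⟨t, ht, hmin⟩ := (Finset.Ioc (3 * r) (4 * r)).exists_min_image (fun t => (S t).card)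
    ⟨4 * r, by rw [Finset.mem_Ioc]; omega⟩
  have h2 : (Finset.Ioc (3 * r) (4 * r)).card • (S t).card ≤ _ :=
    Finset.card_nsmul_le_sum _ _ _ hmin
  have h3 : (Finset.Ioc (3 * r) (4 * r)).card = r := by
    rw [Nat.card_Ioc]; omega
  rw [h3, smul_eq_mul] at h2
  have h4 : r * (S t).card ≤ M := h2.trans h1
  rw [Finset.mem_Ioc] at ht
  refine ⟨t, S t, ht.1, ht.2, fun x => by simp [hS], ?_⟩
  rw [Finset.card_product]
  set s := (S t).card
  have h5 : (r * s) ^ 4 ≤ M ^ 4 := Nat.pow_le_pow_left h4 4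
  have h6 : M ^ 3 ≤ (p ^ 2) ^ 3 := Nat.pow_le_pow_left hM.le 3
  have h7 : (p ^ 3) ^ 2 ≤ (r ^ 2) ^ 2 := Nat.pow_le_pow_left hrp 2
  have h8 : r ^ 4 * (s * s) ^ 2 ≤ r ^ 4 * M := by
    calc r ^ 4 * (s * s) ^ 2 = (r * s) ^ 4 := by ring
      _ ≤ M * M ^ 3 := by rw [← pow_succ']; exact h5
      _ ≤ M * (p ^ 2) ^ 3 := Nat.mul_le_mul_left _ h6
      _ = (p ^ 3) ^ 2 * M := by ring
      _ ≤ (r ^ 2) ^ 2 * M := Nat.mul_le_mul_right _ h7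
      _ = r ^ 4 * M := by ring
  exact Nat.le_of_mul_le_mul_left h8 (by positivity)

end near
section main
variable {V : Type} {G H : SimpleGraph V} {I : V → V → V → Prop}

/-- Following a canonical geodesic in `H`, losing only near its ends. -/
lemma follow (hI : IsGeo G I) (C : Finset V) (r t : V → ℕ) (light : V → Prop) (R : ℕ)
    (hr : ∀ v, 1 ≤ r v) (hR : ∀ v, r v ≤ R)
    (ht : ∀ v, light v → 3 * r v < t v ∧ t v ≤ 4 * r v)
    (hcov : ∀ x, ∃ v ∈ C, Near G (3 * r v) v x)
    (hA : ∀ v ∈ C, ∀ L x, L ≤ 8 * r v → Near G L v x → Near H L v x)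
    (hB : ∀ v ∈ C, light v → ∀ s s' x y, G.Reachable v s → G.dist v s = t v →
      G.Reachable v s' → G.dist v s' = t v → I s s' x → I s s' y → G.Adj x y → H.Adj x y)
    (u a : V)
    (hC : ∀ v ∈ C, ¬ light v → ∀ x y, I u a x → I u a y → G.Adj x y → Near G (3 * r v) v x →
      H.Adj x y)
    (x : V) (hx : I u a x) : Near H (G.dist u x + 16 * R) u x := by
  classical
  have hua := (hI.reach _ _ _ hx).1
  have hle : G.dist u x ≤ G.dist u a := by have := hI.dist _ _ _ hx; omega
  have hex : ∀ k, ∃ y, k ≤ G.dist u x → I u a y ∧ G.dist u y = k := by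
    intro k
    by_cases hk : k ≤ G.dist u x
    · obtain ⟨y, hy⟩ := hI.ex u a k hua (hk.trans hle)
      exact ⟨y, fun _ => hy⟩
    · exact ⟨u, fun h => absurd h hk⟩
  choose π hπ using hex
  set D := G.dist u x with hD
  have h0 : π 0 = u := by
    obtain ⟨h1, h2⟩ := hπ 0 (Nat.zero_le _)
    exact (((hI.reach _ _ _ h1).2.dist_eq_zero_iff).1 h2).symm
  have hDx : π D = x := by
    obtain ⟨h1, h2⟩ := hπ D le_rfl
    exact hI.uniq u a _ _ h1 hx h2
  have hadj : ∀ k, k < D → G.Adj (π k) (π (k + 1)) := by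
    intro k hk
    obtain ⟨h1, h2⟩ := hπ k hk.le
    obtain ⟨h3, h4⟩ := hπ (k + 1) hk
    have := hI.add u a _ _ h1 h3 (by omega)
    exact dist_eq_one_iff_adj.1 (by omega)
  set Lt : ℕ → ℕ → Prop := fun j k => j = k ∨ ∃ v ∈ C, light v ∧
    Near G (4 * r v) v (π j) ∧ Near G (4 * r v) v (π k) with hLt
  have hLtN : ∀ j k, Lt j k → Near H (8 * R) (π j) (π k) := by
    rintro j k (rfl | ⟨v, hv, -, h1, h2⟩)
    · exact near_refl _ _
    · have h1' := hA v hv _ _ (by omega) h1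
      have h2' := hA v hv _ _ (by omega) h2
      have := hR v
      exact (h1'.symm.trans h2').mono (by omega)
  set b := Nat.findGreatest (Lt 0) D with hb
  have hb0 : Lt 0 b := Nat.findGreatest_spec (P := Lt 0) (Nat.zero_le D) (Or.inl rfl)
  have hbD : b ≤ D := Nat.findGreatest_le D
  have hexc : ∃ c, b ≤ c ∧ Lt c D := ⟨D, hbD, Or.inl rfl⟩
  set c := Nat.find hexc with hc
  obtain ⟨hbc, hcD⟩ : b ≤ c ∧ Lt c D := Nat.find_spec hexc
  have hcleD : c ≤ D := Nat.find_min' hexc ⟨hbD, Or.inl rfl⟩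
  have edge : ∀ k, b ≤ k → k < c → H.Adj (π k) (π (k + 1)) := by
    intro k hbk hkc
    have hkD : k < D := by omega
    obtain ⟨v, hv, hvk⟩ := hcov (π k)
    by_cases hl : light v
    · have hrv := hr v
      obtain ⟨ht1, ht2⟩ := ht v hl
      have hk1 : Near G (4 * r v) v (π (k + 1)) :=
        (hvk.trans (near_adj (hadj k hkD))).mono (by omega)
      have n0 : ¬ Near G (4 * r v) v (π 0) := by
        intro hn
        have : k + 1 ≤ b := Nat.le_findGreatest hkD (Or.inr ⟨v, hv, hl, hn, hk1⟩)
        omega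
      have nD : ¬ Near G (4 * r v) v (π D) := by
        intro hn
        have : c ≤ k := Nat.find_min' hexc
          ⟨hbk, Or.inr ⟨v, hv, hl, hvk.mono (by omega), hn⟩⟩
        omega
      have rk : G.Reachable v (π k) := (near_iff.1 hvk).1
      have dk : G.dist v (π k) ≤ 3 * r v := (near_iff.1 hvk).2
      have ru : ∀ j, j ≤ D → G.Reachable v (π j) := by
        intro j hj
        exact rk.trans (((hI.reach _ _ _ (hπ k hkD.le).1).2).symm.trans
          (hI.reach _ _ _ (hπ j hj).1).2)
      have d0 : 4 * r v < G.dist v (π 0) := by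
        by_contra hcon
        exact n0 (near_iff.2 ⟨ru 0 (Nat.zero_le _), by omega⟩)
      have dD : 4 * r v < G.dist v (π D) := by
        by_contra hcon
        exact nD (near_iff.2 ⟨ru D le_rfl, by omega⟩)
      have step : ∀ j, j < D → G.dist v (π (j + 1)) ≤ G.dist v (π j) + 1 ∧
          G.dist v (π j) ≤ G.dist v (π (j + 1)) + 1 := by
        intro j hj
        rcases (hadj j hj).diff_dist_adj (u := v) with h | h | h <;> omega
      obtain ⟨s, -, hs2, hs3⟩ := ivt_down (fun j => G.dist v (π j)) (t v) 0 k (Nat.zero_le _)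
        (fun j _ hj => (step j (by omega)).2) (by omega) (by omega)
      obtain ⟨s', hs'1, hs'2, hs'3⟩ := ivt_up (fun j => G.dist v (π j)) (t v) k D hkD.le
        (fun j _ hj => (step j (by omega)).1) (by omega) (by omega)
      have hne : s' ≠ k := by
        rintro rfl
        omega
      have m1 : I (π s) (π s') (π k) := by
        apply hI.mid (hπ s (by omega)).1 (hπ s' hs'2).1 (hπ k hkD.le).1
        · rw [(hπ s (by omega)).2, (hπ k hkD.le).2]; omega
        · rw [(hπ s' (by omega)).2, (hπ k hkD.le).2]; omega
      have m2 : I (π s) (π s') (π (k + 1)) := by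
        apply hI.mid (hπ s (by omega)).1 (hπ s' hs'2).1 (hπ (k + 1) hkD).1
        · rw [(hπ s (by omega)).2, (hπ (k + 1) hkD).2]; omega
        · rw [(hπ s' (by omega)).2, (hπ (k + 1) hkD).2]; omega
      exact hB v hv hl _ _ _ _ (ru s (by omega)) hs3 (ru s' hs'2) hs'3 m1 m2 (hadj k hkD)
    · exact hC v hv hl _ _ (hπ k hkD.le).1 (hπ (k + 1) hkD).1 (hadj k hkD) hvk
  have chain : ∀ m, b + m ≤ c → Near H m (π b) (π (b + m)) := by
    intro m
    induction m with
    | zero => intro _; exact near_refl _ _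
    | succ m ih =>
      intro hm
      exact (ih (by omega)).trans (near_adj (edge (b + m) (by omega) (by omega)))
  have e1 := hLtN _ _ hb0
  have e2 := chain (c - b) (by omega)
  have e3 := hLtN _ _ hcD
  rw [show b + (c - b) = c by omega] at e2
  rw [h0] at e1
  rw [hDx] at e3
  exact ((e1.trans e2).trans e3).mono (by omega)

lemma exists_parent (hI : IsGeo G I) (v x : V) :
    ∃ y, G.Reachable v x → x ≠ v → G.Adj x y ∧ G.Reachable v y ∧ G.dist v y + 1 = G.dist v x := by
  by_cases h : G.Reachable v x ∧ x ≠ v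
  · have hpos := h.1.pos_dist_of_ne h.2.symm
    obtain ⟨y, hy, hd⟩ := hI.ex v x (G.dist v x - 1) h.1 (by omega)
    have := hI.dist _ _ _ hy
    refine ⟨y, fun _ _ => ⟨?_, (hI.reach _ _ _ hy).2, by omega⟩⟩
    exact (dist_eq_one_iff_adj.1 (by omega : G.dist y x = 1)).symm
  · exact ⟨x, fun h1 h2 => absurd ⟨h1, h2⟩ h⟩

theorem core [Fintype V] (G : SimpleGraph V) (U C : Finset V) (r : V → ℕ) (R : ℕ)
    (hr : ∀ v, 1 ≤ r v) (hrp : ∀ v, U.card ^ 3 ≤ r v ^ 2) (hR : ∀ v, r v ≤ R)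
    (hcov : ∀ x, ∃ v ∈ C, Near G (3 * r v) v x) :
    ∃ H : SimpleGraph V, H ≤ G ∧
      H.edgeSet.ncard ≤ 5 * ∑ v ∈ C, (ball G v (8 * r v)).card ∧
      ∀ u ∈ U, ∀ u' ∈ U, G.Reachable u u' → Near H (G.dist u u' + 50 * R) u u' := by
  classical
  obtain ⟨I, hI⟩ := exists_geo G
  choose par hpar using exists_parent hI
  set light : V → Prop := fun v => (ball G v (8 * r v)).card < U.card ^ 2 with hlight
  have hts : ∀ v, ∃ (t : ℕ) (S : Finset V), light v → 3 * r v < t ∧ t ≤ 4 * r v ∧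
      (∀ x, x ∈ S ↔ G.Reachable v x ∧ G.dist v x = t) ∧
      (S ×ˢ S).card ^ 2 ≤ (ball G v (8 * r v)).card := by
    intro v
    by_cases h : light v
    · obtain ⟨t, S, hS⟩ := thin_sphere G v (r v) U.card (hr v) (hrp v) h
      exact ⟨t, S, fun _ => hS⟩
    · exact ⟨0, ∅, fun h' => absurd h' h⟩
  choose t S hS using hts
  set Touch : V × V → V → Prop := fun q v => ∃ z, Near G (3 * r v) v z ∧ I q.1 q.2 z with hTouch
  set P : Finset (V × V) → V → Finset (V × V) := fun Q v =>
    if light v then S v ×ˢ S v else Q.filter (fun q => Touch q v) with hPdef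
  set D1 : Finset (V × V) → V → Finset (V × V) := fun Q v =>
    Finset.univ.filter (fun d : V × V => d.1 ∈ ball G v (8 * r v) ∧ G.Adj d.1 d.2 ∧
      ∃ i ∈ P Q v, I i.1 i.2 d.1 ∧ I i.1 i.2 d.2) with hD1
  set D2 : V → Finset (V × V) := fun v =>
    ((ball G v (8 * r v)).filter (fun x => x ≠ v)).image (fun x => (x, par v x)) with hD2
  set D : Finset (V × V) → Finset (V × V) := fun Q => C.biUnion (fun v => D1 Q v ∪ D2 v) with hD
  have hDadj : ∀ Q d, d ∈ D Q → G.Adj d.1 d.2 := by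
    intro Q d hd
    obtain ⟨v, hv, hd⟩ := Finset.mem_biUnion.1 hd
    rcases Finset.mem_union.1 hd with hd | hd
    · exact (Finset.mem_filter.1 hd).2.2.1
    · obtain ⟨x, hx, rfl⟩ := Finset.mem_image.1 hd
      obtain ⟨hx1, hx2⟩ := Finset.mem_filter.1 hx
      exact (hpar v x (near_iff.1 (mem_ball.1 hx1)).1 hx2).1
  set HQ : Finset (V × V) → SimpleGraph V := fun Q => SimpleGraph.fromRel (fun x y => (x, y) ∈ D Q)
    with hHQ
  have hHle : ∀ Q, HQ Q ≤ G := by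
    intro Q x y h
    rw [hHQ, SimpleGraph.fromRel_adj] at h
    rcases h.2 with h | h
    · exact hDadj Q _ h
    · exact (hDadj Q _ h).symm
  have hHadj : ∀ Q x y, (x, y) ∈ D Q → (HQ Q).Adj x y := by
    intro Q x y h
    rw [hHQ, SimpleGraph.fromRel_adj]
    exact ⟨(hDadj Q _ h).ne, Or.inl h⟩
  have hHcard : ∀ Q, (HQ Q).edgeSet.ncard ≤ (D Q).card := by
    intro Q
    have hsub : (HQ Q).edgeSet ⊆ (((D Q).image (fun d => s(d.1, d.2)) : Finset (Sym2 V)) :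
        Set (Sym2 V)) := by
      intro e
      induction e using Sym2.ind with
      | _ x y =>
        intro h
        rw [SimpleGraph.mem_edgeSet, hHQ, SimpleGraph.fromRel_adj] at h
        rw [Finset.mem_coe, Finset.mem_image]
        rcases h.2 with h | h
        · exact ⟨_, h, rfl⟩
        · exact ⟨_, h, Sym2.eq_swap⟩
    refine (Set.ncard_le_ncard hsub (Finset.finite_toSet _)).trans ?_
    rw [Set.ncard_coe_finset]
    exact Finset.card_image_le
  -- trees
  have htree : ∀ Q, ∀ v ∈ C, ∀ L x, L ≤ 8 * r v → Near G L v x → Near (HQ Q) L v x := by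
    intro Q v hv L
    induction L with
    | zero =>
      intro x _ hx
      obtain ⟨h1, h2⟩ := near_iff.1 hx
      have : v = x := h1.dist_eq_zero_iff.1 (by omega)
      subst this
      exact near_refl _ _
    | succ L ih =>
      intro x hL hx
      by_cases hxv : x = v
      · subst hxv; exact near_refl _ _
      obtain ⟨h1, h2⟩ := near_iff.1 hx
      obtain ⟨p1, p2, p3⟩ := hpar v x h1 hxv
      have hn := ih (par v x) (by omega) (near_iff.2 ⟨p2, by omega⟩)
      refine hn.trans (near_adj (hHadj Q x (par v x) ?_).symm)
      refine Finset.mem_biUnion.2 ⟨v, hv, Finset.mem_union_right _ ?_⟩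
      refine Finset.mem_image.2 ⟨x, Finset.mem_filter.2 ⟨mem_ball.2 (hx.mono hL), hxv⟩, rfl⟩
  have hlightB : ∀ Q, ∀ v ∈ C, light v → ∀ s s' x y, G.Reachable v s → G.dist v s = t v →
      G.Reachable v s' → G.dist v s' = t v → I s s' x → I s s' y → G.Adj x y →
      (HQ Q).Adj x y := by
    intro Q v hv hl s s' x y hs1 hs2 hs'1 hs'2 hx hy hxy
    obtain ⟨t1, t2, t3, -⟩ := hS v hl
    apply hHadj
    refine Finset.mem_biUnion.2 ⟨v, hv, Finset.mem_union_left _ ?_⟩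
    refine Finset.mem_filter.2 ⟨Finset.mem_univ _, ?_, hxy, (s, s'), ?_, hx, hy⟩
    · rw [mem_ball, near_iff]
      have rx := (hI.reach _ _ _ hx).2
      refine ⟨hs1.trans rx, ?_⟩
      dsimp only
      have d1 := hs1.dist_triangle_left x
      have d2 := hs'1.dist_triangle_left x
      have d3 := hI.dist _ _ _ hx
      have d4 := hs1.symm.dist_triangle_left s'
      have d5 : G.dist s v = G.dist v s := dist_comm
      have d6 : G.dist s' x = G.dist x s' := dist_comm
      omega
    · simp only [hPdef, if_pos hl, Finset.mem_product]
      exact ⟨(t3 s).2 ⟨hs1, hs2⟩, (t3 s').2 ⟨hs'1, hs'2⟩⟩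
  have hheavy : ∀ Q, ∀ q ∈ Q, ∀ v ∈ C, ¬ light v → ∀ x y, I q.1 q.2 x → I q.1 q.2 y →
      G.Adj x y → Near G (3 * r v) v x → (HQ Q).Adj x y := by
    intro Q q hq v hv hl x y hx hy hxy hn
    apply hHadj
    refine Finset.mem_biUnion.2 ⟨v, hv, Finset.mem_union_left _ ?_⟩
    refine Finset.mem_filter.2 ⟨Finset.mem_univ _, mem_ball.2 (hn.mono (by omega)), hxy, q, ?_,
      hx, hy⟩
    simp only [hPdef, if_neg hl, Finset.mem_filter]
    exact ⟨hq, x, hn, hx⟩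
  have ht' : ∀ v, light v → 3 * r v < t v ∧ t v ≤ 4 * r v := fun v hl =>
    ⟨(hS v hl).1, (hS v hl).2.1⟩
  have hfol : ∀ Q, ∀ q ∈ Q, ∀ x, I q.1 q.2 x →
      Near (HQ Q) (G.dist q.1 x + 16 * R) q.1 x := by
    intro Q q hq x hx
    exact follow hI C r t light R hr hR ht' hcov (htree Q) (hlightB Q) q.1 q.2
      (hheavy Q q hq) x hx
  have hfol' : ∀ Q, ∀ q ∈ Q, ∀ x, I q.1 q.2 x →
      Near (HQ Q) (G.dist q.2 x + 16 * R) q.2 x := by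
    intro Q q hq x hx
    refine follow hI C r t light R hr hR ht' hcov (htree Q) (hlightB Q) q.2 q.1
      ?_ x (hI.symm _ _ _ hx)
    intro v hv hl x y hx hy
    exact hheavy Q q hq v hv hl x y (hI.symm _ _ _ hx) (hI.symm _ _ _ hy)
  -- buying
  set Settled : Finset (V × V) → V → V → Prop := fun Q v w =>
    ∃ q ∈ Q, Touch q v ∧ (q.1 = w ∨ q.2 = w) with hSettled
  have hset : ∀ Q v w, Settled Q v w → ∃ x, Near G (3 * r v) v x ∧
      Near (HQ Q) (G.dist w x + 16 * R) w x := by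
    rintro Q v w ⟨q, hq, ⟨z, hz1, hz2⟩, rfl | rfl⟩
    · exact ⟨z, hz1, hfol Q q hq z hz2⟩
    · exact ⟨z, hz1, hfol' Q q hq z hz2⟩
  set Inv : Finset (V × V) → Prop := fun Q => ∀ v ∈ C,
    (Q.filter (fun q => Touch q v)).card ≤ (U.filter (fun w => Settled Q v w)).card with hInv
  obtain ⟨Q, hQ, hmax⟩ := ((U ×ˢ U).powerset.filter Inv).exists_max_image Finset.card
    ⟨∅, by simp [hInv]⟩
  simp only [Finset.mem_filter, Finset.mem_powerset] at hQ hmax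
  obtain ⟨hQU, hQI⟩ := hQ
  refine ⟨HQ Q, hHle Q, ?_, ?_⟩
  · refine (hHcard Q).trans (Finset.card_biUnion_le.trans ?_)
    rw [Finset.mul_sum]
    refine Finset.sum_le_sum fun v hv => ?_
    refine (Finset.card_union_le _ _).trans ?_
    have e2 : (D2 v).card ≤ (ball G v (8 * r v)).card :=
      Finset.card_image_le.trans (Finset.card_filter_le _ _)
    have e1 : (D1 Q v).card ≤ 4 * (ball G v (8 * r v)).card := by
      apply card_darts hI _ _ _ le_rfl
      by_cases hl : light v
      · simp only [hPdef, if_pos hl]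
        exact (hS v hl).2.2.2
      · simp only [hPdef, if_neg hl]
        have h1 := (hQI v hv).trans (Finset.card_filter_le _ _)
        have h2 := Nat.pow_le_pow_left h1 2
        simp only [hlight, not_lt] at hl
        exact h2.trans hl
    omega
  · intro u hu u' hu' huu
    by_contra hbad
    have hself : I u u' u' := by
      obtain ⟨x, hx, hd⟩ := hI.ex u u' (G.dist u u') huu le_rfl
      have h1 := hI.dist _ _ _ hx
      have : x = u' := ((hI.reach _ _ _ hx).2.symm.trans huu).dist_eq_zero_iff.1 (by omega)
      exact this ▸ hx
    have hnot : (u, u') ∉ Q := by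
      intro hin
      exact hbad ((hfol Q _ hin u' hself).mono (by dsimp only; omega))
    have hnew := hmax (insert (u, u') Q) ⟨by
      intro q hq
      rcases Finset.mem_insert.1 hq with rfl | hq
      · exact Finset.mem_product.2 ⟨hu, hu'⟩
      · exact hQU hq, ?_⟩
    · rw [Finset.card_insert_of_notMem hnot] at hnew
      omega
    intro v hv
    have hmono : ∀ w, Settled Q v w → Settled (insert (u, u') Q) v w := by
      rintro w ⟨q, hq, h⟩
      exact ⟨q, Finset.mem_insert_of_mem hq, h⟩
    have hmonoF : (U.filter (fun w => Settled Q v w)) ⊆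
        (U.filter (fun w => Settled (insert (u, u') Q) v w)) := by
      intro w hw
      rw [Finset.mem_filter] at hw ⊢
      exact ⟨hw.1, hmono w hw.2⟩
    rw [Finset.filter_insert]
    by_cases hto : Touch (u, u') v
    · rw [if_pos hto]
      refine (Finset.card_insert_le _ _).trans ?_
      refine (Nat.succ_le_succ (hQI v hv)).trans ?_
      apply Nat.succ_le_of_lt
      apply Finset.card_lt_card
      rw [Finset.ssubset_iff_of_subset hmonoF]
      by_contra hcon
      push Not at hcon
      have s1 : Settled Q v u := (Finset.mem_filter.1 (hcon u (Finset.mem_filter.2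
        ⟨hu, (u, u'), Finset.mem_insert_self _ _, hto, Or.inl rfl⟩))).2
      have s2 : Settled Q v u' := (Finset.mem_filter.1 (hcon u' (Finset.mem_filter.2
        ⟨hu', (u, u'), Finset.mem_insert_self _ _, hto, Or.inr rfl⟩))).2
      obtain ⟨x, hx1, hx2⟩ := hset Q v u s1
      obtain ⟨y, hy1, hy2⟩ := hset Q v u' s2
      obtain ⟨z, hz1, hz2⟩ := hto
      dsimp only at hz2
      apply hbad
      have t1 := htree Q v hv _ _ (by omega) hx1
      have t2 := htree Q v hv _ _ (by omega) hy1
      have rz := (hI.reach _ _ _ hz2).2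
      have q1 := near_iff.1 (hz1.symm.trans hx1)
      have q2 := near_iff.1 (hz1.symm.trans hy1)
      have q3 := hI.dist _ _ _ hz2
      have q4 := rz.dist_triangle_left x
      have q5 := (huu.symm.trans rz).dist_triangle_left y
      have q6 : G.dist u' z = G.dist z u' := dist_comm
      have q7 := hR v
      refine (((hx2.trans t1.symm).trans t2).trans hy2.symm).mono ?_
      omega
    · rw [if_neg hto]
      exact (hQI v hv).trans (Finset.card_le_card hmonoF)

end main
section final

theorem forest {V : Type} [Fintype V] (G : SimpleGraph V) :
    ∃ H : SimpleGraph V, H ≤ G ∧ H.edgeSet.ncard ≤ Fintype.card V ∧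
      ∀ u v, G.Reachable u v → H.Reachable u v ∧ H.dist u v ≤ Fintype.card V := by
  classical
  obtain ⟨I, hI⟩ := exists_geo G
  choose par hpar using exists_parent hI
  set root : V → V := fun x => (G.connectedComponentMk x).out with hroot
  have hrr : ∀ x, G.Reachable (root x) x := fun x =>
    ConnectedComponent.exact (Quot.out_eq (G.connectedComponentMk x))
  have hrc : ∀ x y, G.Reachable x y → root x = root y := by
    intro x y h
    simp only [hroot]
    rw [ConnectedComponent.sound h]
  set H : SimpleGraph V := SimpleGraph.fromRel (fun x y => x ≠ root x ∧ y = par (root x) x) with hH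
  have hle : H ≤ G := by
    intro x y h
    rw [hH, SimpleGraph.fromRel_adj] at h
    rcases h.2 with ⟨h1, rfl⟩ | ⟨h1, rfl⟩
    · exact (hpar _ _ (hrr x) h1).1
    · exact (hpar _ _ (hrr y) h1).1.symm
  have hreach : ∀ k x, G.dist (root x) x = k → H.Reachable (root x) x := by
    intro k
    induction k with
    | zero =>
      intro x hx
      rw [← (hrr x).dist_eq_zero_iff.1 hx]
      have e : root (root x) = root x := by
        have := (hrr x).dist_eq_zero_iff.1 hx
        rw [this, this]
      rw [e]
    | succ k ih =>
      intro x hx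
      by_cases hxr : x = root x
      · rw [← hxr]
      · obtain ⟨h1, h2, h3⟩ := hpar _ _ (hrr x) hxr
        have e : root (par (root x) x) = root x := (hrc _ _ h1.reachable).symm
        have := ih (par (root x) x) (by rw [e]; omega)
        rw [e] at this
        refine this.trans (Adj.reachable (SimpleGraph.Adj.symm ?_))
        rw [hH, SimpleGraph.fromRel_adj]
        exact ⟨h1.ne, Or.inl ⟨hxr, rfl⟩⟩
  refine ⟨H, hle, ?_, ?_⟩
  · have hsub : H.edgeSet ⊆ ((Finset.univ.image (fun x => s(x, par (root x) x)) :
        Finset (Sym2 V)) : Set (Sym2 V)) := by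
      intro e
      induction e using Sym2.ind with
      | _ x y =>
        intro h
        rw [SimpleGraph.mem_edgeSet, hH, SimpleGraph.fromRel_adj] at h
        rw [Finset.mem_coe, Finset.mem_image]
        rcases h.2 with ⟨_, rfl⟩ | ⟨_, rfl⟩
        · exact ⟨x, Finset.mem_univ _, rfl⟩
        · exact ⟨y, Finset.mem_univ _, Sym2.eq_swap⟩
    refine (Set.ncard_le_ncard hsub (Finset.finite_toSet _)).trans ?_
    rw [Set.ncard_coe_finset]
    exact Finset.card_image_le
  · intro u v huv
    have h1 := hreach _ u rfl
    have h2 := hreach _ v rfl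
    rw [← hrc u v huv] at h2
    have h3 := h1.symm.trans h2
    obtain ⟨p, hp, hpl⟩ := h3.exists_path_of_dist
    exact ⟨h3, by have := hp.length_lt; omega⟩

theorem small_eps {V : Type} [Fintype V] (G : SimpleGraph V) (U : Finset V) (hU : U.Nonempty)
    (ε : ℝ) (hε : 0 < ε) :
    ∃ H : SimpleGraph V, H ≤ G ∧
      (H.edgeSet.ncard : ℝ) ≤ 5 * (8 : ℝ) ^ (1 / ε) * (Fintype.card V : ℝ) ∧
      ∀ u ∈ U, ∀ u' ∈ U, G.Reachable u u' →
        H.Reachable u u' ∧ (H.dist u u' : ℝ) ≤ (G.dist u u' : ℝ) +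
          100 * (U.card : ℝ) ^ ((3 : ℝ) / 2) * (Fintype.card V : ℝ) ^ ε := by
  have hp : 1 ≤ U.card := hU.card_pos
  have hn : 1 ≤ Fintype.card V := hp.trans (Finset.card_le_univ U)
  have hpR : (1 : ℝ) ≤ U.card := by exact_mod_cast hp
  have hnR : (1 : ℝ) ≤ Fintype.card V := by exact_mod_cast hn
  set n : ℝ := (Fintype.card V : ℝ) with hndef
  set p : ℝ := (U.card : ℝ) with hpdef
  have hp32 : 1 ≤ p ^ ((3 : ℝ) / 2) := Real.one_le_rpow hpR (by norm_num)
  set r0 : ℕ := ⌈p ^ ((3 : ℝ) / 2)⌉₊ with hr0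
  have hr01 : p ^ ((3 : ℝ) / 2) ≤ r0 := Nat.le_ceil _
  have hr02 : (r0 : ℝ) ≤ 2 * p ^ ((3 : ℝ) / 2) := by
    have := Nat.ceil_lt_add_one (show 0 ≤ p ^ ((3 : ℝ) / 2) by positivity)
    rw [← hr0] at this
    linarith
  have hr0pos : 1 ≤ r0 := by
    have : (1 : ℝ) ≤ r0 := hp32.trans hr01
    exact_mod_cast this
  have hr0sq : U.card ^ 3 ≤ r0 ^ 2 := by
    have h1 : (p ^ ((3 : ℝ) / 2)) ^ 2 = p ^ 3 := by
      rw [← Real.rpow_natCast, ← Real.rpow_mul (by linarith), ← Real.rpow_natCast]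
      norm_num
    have h2 : (p ^ ((3 : ℝ) / 2)) ^ 2 ≤ (r0 : ℝ) ^ 2 := by gcongr
    rw [h1, hpdef] at h2
    exact_mod_cast h2
  set l : ℝ := Real.logb 8 n with hl
  have hl0 : 0 ≤ l := Real.logb_nonneg (by norm_num) hnR
  have h8l : (8 : ℝ) ^ l = n := Real.rpow_logb (by norm_num) (by norm_num) (by linarith)
  set j : ℕ := ⌊ε * l⌋₊ with hj
  have hj1 : (j : ℝ) ≤ ε * l := Nat.floor_le (by positivity)
  have hj2 : ε * l ≤ (j : ℝ) + 1 := (Nat.lt_floor_add_one _).le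
  have hAJ : n ≤ ((8 : ℝ) ^ (1 / ε)) ^ (j + 1) := by
    rw [← Real.rpow_natCast, ← Real.rpow_mul (by norm_num)]
    calc n = (8 : ℝ) ^ l := h8l.symm
      _ ≤ _ := by
        apply Real.rpow_le_rpow_of_exponent_le (by norm_num)
        push_cast
        rw [div_mul_eq_mul_div, one_mul, le_div_iff₀ hε]
        linarith
  have h8j : (8 : ℝ) ^ j ≤ n ^ ε := by
    rw [← h8l, ← Real.rpow_mul (by norm_num), ← Real.rpow_natCast]
    apply Real.rpow_le_rpow_of_exponent_le (by norm_num)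
    linarith
  obtain ⟨C, r, h1, h2, h3⟩ := clustering G r0 (j + 1) (by omega) ((8 : ℝ) ^ (1 / ε))
    (by positivity) hAJ
  obtain ⟨H, hHG, hcard, hdist⟩ := core G U C r (8 ^ j * r0) (fun v => hr0pos.trans (h1 v).1)
    (fun v => hr0sq.trans (Nat.pow_le_pow_left (h1 v).1 2)) (fun v => by simpa using (h1 v).2) h2
  refine ⟨H, hHG, ?_, ?_⟩
  · have h4 : (H.edgeSet.ncard : ℝ) ≤
        5 * ((∑ v ∈ C, (ball G v (8 * r v)).card : ℕ) : ℝ) := by exact_mod_cast hcard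
    rw [mul_assoc]
    linarith
  · intro u hu u' hu' huu
    obtain ⟨a, b⟩ := near_iff.1 (hdist u hu u' hu' huu)
    refine ⟨a, ?_⟩
    have b' : (H.dist u u' : ℝ) ≤ G.dist u u' + 50 * ((8 : ℝ) ^ j * r0) := by exact_mod_cast b
    have : (8 : ℝ) ^ j * r0 ≤ n ^ ε * (2 * p ^ ((3 : ℝ) / 2)) := by gcongr
    linarith

end final
end SubsetSpanner

/-- **Subset additive spanners.**
For every `ε > 0` there are constants `C₁ ≤ 2^(c/ε)` (with `c` an absolute
constant) and `C₂` (depending only on `ε`) such that: for every finite simple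
graph `G` on `n` vertices and every subset `U` of its vertices, there is a
subgraph `H ⊆ G` with at most `C₁ · n` edges such that for every pair
`u, u' ∈ U` connected in `G`,
`dist_H(u,u') ≤ dist_G(u,u') + C₂ · |U|^(3/2) · n^ε`. -/
theorem subset_additive_spanner :
    ∃ c : ℝ, 0 < c ∧
      ∀ ε : ℝ, 0 < ε →
        ∃ C₁ C₂ : ℝ, 0 < C₁ ∧ C₁ ≤ (2 : ℝ) ^ (c / ε) ∧ 0 < C₂ ∧
          ∀ (V : Type) [Fintype V] (G : SimpleGraph V) (U : Finset V),
            ∃ H : SimpleGraph V, H ≤ G ∧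
              (H.edgeSet.ncard : ℝ) ≤ C₁ * (Fintype.card V : ℝ) ∧
              ∀ u ∈ U, ∀ u' ∈ U, G.Reachable u u' →
                H.Reachable u u' ∧
                (H.dist u u' : ℝ) ≤ (G.dist u u' : ℝ) +
                  C₂ * (U.card : ℝ) ^ ((3 : ℝ) / 2) * (Fintype.card V : ℝ) ^ ε := by
  refine ⟨6, by norm_num, fun ε hε => ?_⟩
  rcases le_or_gt 1 ε with h1 | h1
  · refine ⟨1, 1, one_pos, Real.one_le_rpow (by norm_num) (by positivity), one_pos, ?_⟩
    intro V _ G U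
    obtain ⟨H, hHG, hc, hd⟩ := SubsetSpanner.forest G
    refine ⟨H, hHG, by rw [one_mul]; exact_mod_cast hc, ?_⟩
    intro u hu u' hu' huu
    obtain ⟨a, b⟩ := hd u u' huu
    refine ⟨a, ?_⟩
    have hp : 1 ≤ U.card := Finset.card_pos.2 ⟨u, hu⟩
    have hn : 1 ≤ Fintype.card V := hp.trans (Finset.card_le_univ U)
    have hpR : (1 : ℝ) ≤ U.card := by exact_mod_cast hp
    have hnR : (1 : ℝ) ≤ Fintype.card V := by exact_mod_cast hn
    have e1 : (1 : ℝ) ≤ (U.card : ℝ) ^ ((3 : ℝ) / 2) := Real.one_le_rpow hpR (by norm_num)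
    have e2 : (Fintype.card V : ℝ) ≤ (Fintype.card V : ℝ) ^ ε := Real.self_le_rpow_of_one_le hnR h1
    have e3 : (H.dist u u' : ℝ) ≤ Fintype.card V := by exact_mod_cast b
    have e4 : (0 : ℝ) ≤ G.dist u u' := Nat.cast_nonneg _
    rw [one_mul]
    nlinarith
  · refine ⟨5 * (8 : ℝ) ^ (1 / ε), 100, by positivity, ?_, by norm_num, ?_⟩
    · have hinv : 1 ≤ 1 / ε := by rw [le_div_iff₀ hε]; linarith
      have e1 : (8 : ℝ) ^ (1 / ε) = 2 ^ (3 * (1 / ε)) := by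
        rw [Real.rpow_mul (by norm_num)]; norm_num
      have e2 : (8 : ℝ) ≤ 8 ^ (1 / ε) := Real.self_le_rpow_of_one_le (by norm_num) hinv
      have e3 : (2 : ℝ) ^ (6 / ε) = 8 ^ (1 / ε) * 8 ^ (1 / ε) := by
        rw [e1, ← Real.rpow_add (by norm_num)]
        congr 1
        ring
      rw [e3]
      have : (0 : ℝ) < 8 ^ (1 / ε) := by positivity
      nlinarith
    · intro V _ G U
      rcases U.eq_empty_or_nonempty with rfl | hU
      · refine ⟨⊥, bot_le, ?_, by simp⟩
        simp only [SimpleGraph.edgeSet_bot, Set.ncard_empty, Nat.cast_zero]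
        positivity
      · exact SubsetSpanner.small_eps G U hU ε hε
end

section
/- For every real ε > 0 there exists a constant C (depending only on ε, of the form 2^(O(1/ε))) such that: every finite undirected unweighted simple graph G on n vertices (n ≥ 2) has a subgraph H ⊆ G with at most C · n edges such that for every pair of vertices u, v connected in G, dist_H(u,v) ≤ dist_G(u,v) + C · n^(3/7 + ε) · (log n)^C. -/
namespace Spanner

open scoped Classical

/-- `D G u v n`: there is a walk of length at most `n` from `u` to `v` in `G`. -/
def D {V : Type} (G : SimpleGraph V) (u v : V) (n : ℕ) : Prop :=
  ∃ p : G.Walk u v, p.length ≤ n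

section basic
variable {V : Type} {G H : SimpleGraph V} {u v w : V} {m n : ℕ}

lemma D.refl (G : SimpleGraph V) (u : V) (n : ℕ) : D G u u n := ⟨.nil, by simp⟩

lemma D.symm (h : D G u v n) : D G v u n := by
  obtain ⟨p, hp⟩ := h
  exact ⟨p.reverse, by simpa using hp⟩

lemma D.trans (h : D G u v m) (h' : D G v w n) : D G u w (m + n) := by
  obtain ⟨p, hp⟩ := h
  obtain ⟨q, hq⟩ := h'
  exact ⟨p.append q, by rw [SimpleGraph.Walk.length_append]; omega⟩

lemma D.mono (h : D G u v m) (hmn : m ≤ n) : D G u v n := by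
  obtain ⟨p, hp⟩ := h
  exact ⟨p, hp.trans hmn⟩

lemma D.le (h : D H u v n) (hle : H ≤ G) : D G u v n := by
  obtain ⟨p, hp⟩ := h
  exact ⟨p.mapLe hle, by simpa using hp⟩

lemma D.adj (h : G.Adj u v) : D G u v 1 := ⟨h.toWalk, by simp⟩

lemma D.zero (h : D G u v 0) : u = v := by
  obtain ⟨p, hp⟩ := h
  exact SimpleGraph.Walk.eq_of_length_eq_zero (p := p) (by omega)

/-- Walk as a function. -/
lemma D.fn (h : D G u v n) : ∃ m ≤ n, ∃ p : ℕ → V, p 0 = u ∧ p m = v ∧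
    ∀ k < m, G.Adj (p k) (p (k + 1)) := by
  obtain ⟨p, hp⟩ := h
  exact ⟨p.length, hp, p.getVert, by simp, by simp, fun k hk => p.adj_getVert_succ hk⟩

lemma D.of_fn (p : ℕ → V) (a b : ℕ) (hab : a ≤ b)
    (hp : ∀ k, a ≤ k → k < b → G.Adj (p k) (p (k + 1))) : D G (p a) (p b) (b - a) := by
  induction b, hab using Nat.le_induction with
  | base => exact D.refl _ _ _
  | succ b hab ih =>
    have h1 := ih (fun k h1 h2 => hp k h1 (by omega))
    exact (h1.trans (D.adj (hp b hab (by omega)))).mono (by omega)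

/-- adding a finite set of edges -/
lemma addEdges [Finite V] {F G : SimpleGraph V} (hF : F ≤ G) (T : Finset (Sym2 V))
    (hT : ∀ e ∈ T, e ∈ G.edgeSet) :
    ∃ F' : SimpleGraph V, F ≤ F' ∧ F' ≤ G ∧ (∀ e ∈ T, e ∈ F'.edgeSet) ∧
      F'.edgeSet.ncard ≤ F.edgeSet.ncard + T.card := by
  refine ⟨F ⊔ SimpleGraph.fromEdgeSet (T : Set (Sym2 V)), le_sup_left, ?_, ?_, ?_⟩
  · refine sup_le hF ?_
    intro a b hab
    rw [SimpleGraph.fromEdgeSet_adj] at hab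
    exact hT _ hab.1
  · intro e he
    rw [SimpleGraph.edgeSet_sup, SimpleGraph.edgeSet_fromEdgeSet]
    right
    exact ⟨he, fun h => G.not_isDiag_of_mem_edgeSet (hT e he) h⟩
  · rw [SimpleGraph.edgeSet_sup, SimpleGraph.edgeSet_fromEdgeSet]
    refine (Set.ncard_union_le _ _).trans ?_
    gcongr
    rw [← Set.ncard_coe_finset T]
    exact Set.ncard_le_ncard Set.sdiff_subset (Set.toFinite _)

lemma unionGraphs [Finite V] (I : Finset V) (H : V → SimpleGraph V) (f : V → ℕ)
    (hH : ∀ c ∈ I, H c ≤ G ∧ (H c).edgeSet.ncard ≤ f c) :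
    ∃ F : SimpleGraph V, F ≤ G ∧ (∀ c ∈ I, H c ≤ F) ∧ F.edgeSet.ncard ≤ ∑ c ∈ I, f c := by
  induction I using Finset.induction_on with
  | empty => exact ⟨⊥, bot_le, by simp, by simp⟩
  | insert a s ha ih =>
    obtain ⟨F, h1, h2, h3⟩ := ih (fun c hc => hH c (Finset.mem_insert_of_mem hc))
    obtain ⟨h4, h5⟩ := hH a (Finset.mem_insert_self _ _)
    refine ⟨H a ⊔ F, sup_le h4 h1, ?_, ?_⟩
    · intro c hc
      rcases Finset.mem_insert.1 hc with rfl | hc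
      · exact le_sup_left
      · exact (h2 c hc).trans le_sup_right
    · rw [Finset.sum_insert ha, SimpleGraph.edgeSet_sup]
      exact (Set.ncard_union_le _ _).trans (by omega)

end basic

noncomputable def ball {V : Type} [Fintype V] (G : SimpleGraph V) (c : V) (r : ℕ) : Finset V :=
  Finset.univ.filter (fun v => D G c v r)

section ball
variable {V : Type} [Fintype V] {G : SimpleGraph V}

@[simp] lemma mem_ball {c v : V} {r : ℕ} : v ∈ ball G c r ↔ D G c v r := by simp [ball]

lemma ball_mono (c : V) {r r' : ℕ} (h : r ≤ r') : ball G c r ⊆ ball G c r' := by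
  intro v hv
  rw [mem_ball] at *
  exact hv.mono h

lemma ball_pos (c : V) (r : ℕ) : 0 < (ball G c r).card :=
  Finset.card_pos.2 ⟨c, by simpa using D.refl G c r⟩

/-- BFS tree of a ball -/
lemma tree (G : SimpleGraph V) (c : V) (r : ℕ) : ∃ T : SimpleGraph V, T ≤ G ∧
    T.edgeSet.ncard ≤ (ball G c r).card ∧ ∀ k ≤ r, ∀ v, D G c v k → D T c v k := by
  have hpar : ∀ v, ∃ u, (v ≠ c ∧ v ∈ ball G c r) → G.Adj u v ∧ ∀ k, D G c v (k + 1) → D G c u k := by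
    intro v
    by_cases h : v ≠ c ∧ v ∈ ball G c r
    · obtain ⟨hvc, hv⟩ := h
      rw [mem_ball] at hv
      have hex : ∃ k, D G c v k := ⟨r, hv⟩
      have hs := Nat.find_spec hex
      obtain ⟨m, hm, p, p0, pm, hp⟩ := hs.fn
      have hm0 : m ≠ 0 := by
        rintro rfl
        exact hvc (pm.symm.trans p0)
      obtain ⟨m, rfl⟩ := Nat.exists_eq_succ_of_ne_zero hm0
      refine ⟨p m, fun _ => ⟨?_, ?_⟩⟩
      · have := hp m (by omega)
        rwa [← pm]
      · intro k hk
        have h1 : Nat.find hex ≤ k + 1 := Nat.find_min' hex hk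
        have := D.of_fn p 0 m (by omega) (fun k _ hk => hp k (by omega))
        rw [p0] at this
        exact this.mono (by omega)
    · exact ⟨c, fun h' => absurd h' h⟩
  choose par hpar using hpar
  obtain ⟨T, _, hTG, hT, hc⟩ := addEdges (F := ⊥) (G := G) bot_le
    (((ball G c r).filter (fun v => v ≠ c)).image (fun v => s(par v, v))) (by
      intro e he
      simp only [Finset.mem_image, Finset.mem_filter] at he
      obtain ⟨v, ⟨hv, hvc⟩, rfl⟩ := he
      exact (hpar v ⟨hvc, hv⟩).1)
  refine ⟨T, hTG, ?_, ?_⟩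
  · refine hc.trans ?_
    simp only [SimpleGraph.edgeSet_bot, Set.ncard_empty, zero_add]
    exact Finset.card_image_le.trans (Finset.card_filter_le _ _)
  · intro k
    induction k with
    | zero =>
      intro _ v hv
      rw [hv.zero]; exact D.refl _ _ _
    | succ k ih =>
      intro hk v hv
      by_cases hvc : v = c
      · rw [hvc]; exact D.refl _ _ _
      have hvb : v ∈ ball G c r := mem_ball.2 (hv.mono hk)
      have h1 := ih (by omega) _ ((hpar v ⟨hvc, hvb⟩).2 k hv)
      refine h1.trans (D.adj ?_)
      have := hT s(par v, v) (Finset.mem_image.2 ⟨v, Finset.mem_filter.2 ⟨hvb, hvc⟩, rfl⟩)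
      exact this

end ball

end Spanner


namespace Spanner
open scoped Classical

section pres
variable {V : Type} [Fintype V] {G : SimpleGraph V}

/-- one step of the greedy preserver -/
lemma preserver_step (U : Finset V) (hU : ∀ a b, G.Adj a b → b ∈ U) (F : SimpleGraph V)
    (hF : F ≤ G) (Y : Finset (Finset V))
    (hY : ∀ A ∈ Y, ∀ v ∈ A, ∀ w ∈ A, ∀ n, D G v w n → D F v w n) (u v : V) :
    ∃ (F' : SimpleGraph V) (B : Finset V), F ≤ F' ∧ F' ≤ G ∧
      (∀ a ∈ B, ∀ b ∈ B, ∀ n, D G a b n → D F' a b n) ∧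
      (∀ n, D G u v n → D F' u v n) ∧
      F'.edgeSet.ncard + ((Y.biUnion id) ∩ U).card ≤ 
        F.edgeSet.ncard + Y.card + ((insert B Y).biUnion id ∩ U).card := by
  by_cases hreach : ∃ n, D G u v n
  swap
  · refine ⟨F, ∅, le_rfl, hF, by simp, fun n hn => absurd ⟨n, hn⟩ hreach, ?_⟩
    have : ((Y.biUnion id) ∩ U).card ≤ ((insert ∅ Y).biUnion id ∩ U).card := by
      apply Finset.card_le_card
      apply Finset.inter_subset_inter_right
      exact Finset.biUnion_subset_biUnion_of_subset_left _ (Finset.subset_insert _ _)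
    omega
  -- geodesics
  set m := Nat.find hreach with hm
  have hmin : ∀ n, D G u v n → m ≤ n := fun n hn => Nat.find_min' hreach hn
  let isG : (ℕ → V) → Prop := fun p => p 0 = u ∧ p m = v ∧ ∀ k < m, G.Adj (p k) (p (k + 1))
  let cost : (ℕ → V) → Finset ℕ := fun p =>
    (Finset.range m).filter (fun k => ¬ F.Adj (p k) (p (k + 1)))
  have hexg : ∃ c p, isG p ∧ (cost p).card = c := by
    obtain ⟨m', hm', p, p0, pm, hp⟩ := (Nat.find_spec hreach).fn
    have h1 := D.of_fn p 0 m' (by omega) (fun k _ hk => hp k hk)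
    rw [p0, pm] at h1
    have := hmin _ h1
    have : m' = m := by omega
    subst this
    exact ⟨_, p, ⟨p0, pm, hp⟩, rfl⟩
  obtain ⟨p, hpG, hpc⟩ := Nat.find_spec hexg
  have hpmin : ∀ q, isG q → (cost p).card ≤ (cost q).card := by
    intro q hq
    rw [hpc]
    exact Nat.find_min' hexg ⟨q, hq, rfl⟩
  obtain ⟨p0, pm, hp⟩ := hpG
  have hseg : ∀ j k, j ≤ k → k ≤ m → D G (p j) (p k) (k - j) := fun j k hjk hk =>
    D.of_fn p j k hjk (fun i _ hi => hp i (by omega))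
  have hgeo : ∀ j k t, j ≤ k → k ≤ m → D G (p j) (p k) t → k - j ≤ t := by
    intro j k t hjk hk ht
    have h1 := hseg 0 j (by omega) (by omega)
    have h2 := hseg k m hk le_rfl
    rw [p0] at h1
    rw [pm] at h2
    have := hmin _ ((h1.trans ht).trans h2)
    omega
  have hinj : ∀ j k, j ≤ m → k ≤ m → p j = p k → j = k := by
    intro j k hj hk h
    rcases le_total j k with hjk | hjk
    · have := hgeo j k 0 hjk hk (h ▸ D.refl _ _ _)
      omega
    · have := hgeo k j 0 hjk hj (h ▸ D.refl _ _ _)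
      omega
  -- the key exchange
  have hkey : ∀ A ∈ Y, ∀ j k, j < k → k < m → k ∈ cost p → p (j + 1) ∈ A → p (k + 1) ∈ A →
      False := by
    intro A hA j k hjk hk hkc hjA hkA
    have h1 := hY A hA _ hjA _ hkA _ (hseg (j + 1) (k + 1) (by omega) (by omega))
    obtain ⟨t, ht, f, f0, ft, hf⟩ := h1.fn
    have h2 := D.of_fn f 0 t (by omega) (fun k _ hk => hf k hk)
    rw [f0, ft] at h2
    have h3 := hgeo (j + 1) (k + 1) _ (by omega) (by omega) (h2.le hF)
    have htk : t = k - j := by omega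
    let q : ℕ → V := fun i => if j + 1 ≤ i ∧ i ≤ k + 1 then f (i - (j + 1)) else p i
    have hqin : ∀ i, j + 1 ≤ i → i ≤ k + 1 → q i = f (i - (j + 1)) := fun i h1 h2 => if_pos ⟨h1, h2⟩
    have hqlo : ∀ i, i ≤ j + 1 → q i = p i := by
      intro i hi
      rcases hi.lt_or_eq with h | rfl
      · exact if_neg (by omega)
      · rw [hqin _ le_rfl (by omega)]; simp [f0]
    have hqhi : ∀ i, k + 1 ≤ i → q i = p i := by
      intro i hi
      rcases hi.lt_or_eq with h | rfl
      · exact if_neg (by omega)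
      · rw [hqin _ (by omega) le_rfl, ← ft]; congr 1; omega
    have hqF : ∀ i, j + 1 ≤ i → i < k + 1 → F.Adj (q i) (q (i + 1)) := by
      intro i h1 h2
      rw [hqin i h1 (by omega), hqin (i + 1) (by omega) (by omega)]
      have := hf (i - (j + 1)) (by omega)
      rwa [show i - (j + 1) + 1 = i + 1 - (j + 1) by omega] at this
    have hqG : isG q := by
      refine ⟨?_, ?_, ?_⟩
      · rw [hqlo 0 (by omega), p0]
      · rw [hqhi m (by omega), pm]
      · intro i hi
        by_cases h1 : i < j + 1
        · rw [hqlo i (by omega), hqlo (i + 1) (by omega)]; exact hp i hi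
        by_cases h2 : i < k + 1
        · exact hF (hqF i (by omega) h2)
        · rw [hqhi i (by omega), hqhi (i + 1) (by omega)]; exact hp i hi
    have h4 := hpmin q hqG
    have h5 : cost q ⊆ (cost p).erase k := by
      intro i hi
      simp only [cost, Finset.mem_filter, Finset.mem_range, Finset.mem_erase] at hi ⊢
      obtain ⟨him, hi⟩ := hi
      by_cases h1 : i < j + 1
      · rw [hqlo i (by omega), hqlo (i + 1) (by omega)] at hi
        exact ⟨by omega, him, hi⟩
      by_cases h2 : i < k + 1
      · exact absurd (hqF i (by omega) h2) hi
      · rw [hqhi i (by omega), hqhi (i + 1) (by omega)] at hi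
        exact ⟨by omega, him, hi⟩
    have h6 := Finset.card_le_card h5
    rw [Finset.card_erase_of_mem hkc] at h6
    have := Finset.card_pos.2 ⟨k, hkc⟩
    omega
  -- new graph
  obtain ⟨F', hFF', hF'G, hT, hcard⟩ := addEdges hF
    ((cost p).image (fun k => s(p k, p (k + 1)))) (by
      intro e he
      simp only [Finset.mem_image] at he
      obtain ⟨k, hk, rfl⟩ := he
      simp only [cost, Finset.mem_filter, Finset.mem_range] at hk
      exact hp k hk.1)
  have hF'adj : ∀ k < m, F'.Adj (p k) (p (k + 1)) := by
    intro k hk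
    by_cases h : F.Adj (p k) (p (k + 1))
    · exact hFF' h
    · exact hT s(p k, p (k + 1)) (Finset.mem_image.2 ⟨k, by simp [cost, hk, h], rfl⟩)
  have hex : ∀ j k, j ≤ k → k ≤ m → ∀ n, D G (p j) (p k) n → D F' (p j) (p k) n := by
    intro j k hjk hk n hn
    exact (D.of_fn p j k hjk (fun i _ hi => hF'adj i (by omega))).mono (hgeo j k n hjk hk hn)
  refine ⟨F', (Finset.range (m + 1)).image p, hFF', hF'G, ?_, ?_, ?_⟩
  · intro a ha b hb n hn
    simp only [Finset.mem_image, Finset.mem_range] at ha hb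
    obtain ⟨j, hj, rfl⟩ := ha
    obtain ⟨k, hk, rfl⟩ := hb
    rcases le_total j k with h | h
    · exact hex j k h (by omega) n hn
    · exact (hex k j h (by omega) n hn.symm).symm
  · intro n hn
    have := hex 0 m (by omega) le_rfl n
    rw [p0, pm] at this
    exact this hn
  · set X := (cost p).image (fun k => p (k + 1)) with hX
    have hXc : X.card = (cost p).card := by
      apply Finset.card_image_of_injOn
      intro j hj k hk h
      simp only [cost, Finset.coe_filter, Finset.mem_range, Set.mem_ofPred_eq] at hj hk
      have := hinj _ _ (by omega) (by omega) h
      omega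
    have hX1 : (X ∩ Y.biUnion id).card ≤ Y.card := by
      rw [Finset.inter_biUnion]
      refine Finset.card_biUnion_le.trans ?_
      calc ∑ A ∈ Y, (X ∩ id A).card ≤ ∑ A ∈ Y, 1 := by
            apply Finset.sum_le_sum
            intro A hA
            rw [Finset.card_le_one]
            intro a ha b hb
            simp only [X, Finset.mem_inter, Finset.mem_image, id] at ha hb
            obtain ⟨⟨j, hj, rfl⟩, hja⟩ := ha
            obtain ⟨⟨k, hk, rfl⟩, hka⟩ := hb
            have hj' := hj
            have hk' := hk
            simp only [cost, Finset.mem_filter, Finset.mem_range] at hj' hk'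
            rcases lt_trichotomy j k with h | h | h
            · exact (hkey A hA j k h hk'.1 hk hja hka).elim
            · rw [h]
            · exact (hkey A hA k j h hj'.1 hj hka hja).elim
        _ = Y.card := by simp
    have hX2 : (X \ Y.biUnion id).card + ((Y.biUnion id) ∩ U).card ≤
        ((insert ((Finset.range (m + 1)).image p) Y).biUnion id ∩ U).card := by
      rw [← Finset.card_union_of_disjoint]
      · apply Finset.card_le_card
        intro a ha
        rw [Finset.mem_union] at ha
        rcases ha with ha | ha
        · rw [Finset.mem_sdiff] at ha
          have ha1 := ha.1
          simp only [X, Finset.mem_image] at ha1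
          obtain ⟨k, hk, rfl⟩ := ha1
          simp only [cost, Finset.mem_filter, Finset.mem_range] at hk
          rw [Finset.mem_inter, Finset.mem_biUnion]
          exact ⟨⟨_, Finset.mem_insert_self _ _, Finset.mem_image.2 ⟨k + 1, by simpa using hk.1, rfl⟩⟩,
            hU _ _ (hp k hk.1)⟩
        · rw [Finset.mem_inter] at ha ⊢
          exact ⟨Finset.biUnion_subset_biUnion_of_subset_left _ (Finset.subset_insert _ _) ha.1, ha.2⟩
      · rw [Finset.disjoint_left]
        intro a ha hb
        exact (Finset.mem_sdiff.1 ha).2 (Finset.mem_inter.1 hb).1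
    have h7 : X.card = (X ∩ Y.biUnion id).card + (X \ Y.biUnion id).card := by
      rw [Finset.card_inter_add_card_sdiff]
    have h8 : ((cost p).image (fun k => s(p k, p (k + 1)))).card ≤ (cost p).card :=
      Finset.card_image_le
    omega

theorem preserver (U : Finset V) (hU : ∀ a b, G.Adj a b → b ∈ U) (Q : Finset (V × V)) :
    ∃ F : SimpleGraph V, F ≤ G ∧ F.edgeSet.ncard ≤ U.card + Q.card ^ 2 ∧
      ∀ q ∈ Q, ∀ n, D G q.1 q.2 n → D F q.1 q.2 n := by
  suffices h : ∃ (F : SimpleGraph V) (Y : Finset (Finset V)), F ≤ G ∧ Y.card ≤ Q.card ∧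
      (∀ A ∈ Y, ∀ v ∈ A, ∀ w ∈ A, ∀ n, D G v w n → D F v w n) ∧
      F.edgeSet.ncard ≤ ((Y.biUnion id) ∩ U).card + Q.card ^ 2 ∧
      ∀ q ∈ Q, ∀ n, D G q.1 q.2 n → D F q.1 q.2 n by
    obtain ⟨F, Y, h1, _, _, h4, h5⟩ := h
    refine ⟨F, h1, h4.trans ?_, h5⟩
    gcongr
    exact Finset.inter_subset_right
  induction Q using Finset.induction_on with
  | empty => exact ⟨⊥, ∅, bot_le, by simp, by simp, by simp, by simp⟩
  | insert q Q hq ih =>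
    obtain ⟨F, Y, h1, h2, h3, h4, h5⟩ := ih
    obtain ⟨F', B, g1, g2, g3, g4, g5⟩ := preserver_step U hU F h1 Y h3 q.1 q.2
    refine ⟨F', insert B Y, g2, ?_, ?_, ?_, ?_⟩
    · rw [Finset.card_insert_of_notMem hq]
      exact (Finset.card_insert_le _ _).trans (by omega)
    · intro A hA v hv w hw n hn
      rcases Finset.mem_insert.1 hA with rfl | hA
      · exact g3 v hv w hw n hn
      · exact (h3 A hA v hv w hw n hn).le g1
    · rw [Finset.card_insert_of_notMem hq]
      nlinarith
    · intro r hr n hn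
      rcases Finset.mem_insert.1 hr with rfl | hr
      · exact g4 n hn
      · exact (h5 r hr n hn).le g1

end pres
end Spanner


namespace Spanner
open scoped Classical

/-- A decomposition of a walk into segments `(cluster, start, end)`. -/
inductive Dec {V : Type} (G : SimpleGraph V) : V → V → ℕ → List (V × V × V) → Prop
  | nil (x : V) : Dec G x x 0 []
  | cons {x z y c : V} {k n : ℕ} {l : List (V × V × V)} :
      D G x z k → Dec G z y n l → Dec G x y (k + n) ((c, x, z) :: l)

section dec
variable {V : Type} {G H : SimpleGraph V}

lemma Dec.toD {x y : V} {n : ℕ} {l : List (V × V × V)} (h : Dec G x y n l) : D G x y n := by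
  induction h with
  | nil x => exact D.refl _ _ _
  | cons h1 _ ih => exact h1.trans ih

lemma Dec.split {s : V × V × V} {l2 : List (V × V × V)} (l1 : List (V × V × V)) :
    ∀ {x y : V} {n : ℕ}, Dec G x y n (l1 ++ s :: l2) →
    ∃ n1 k n2, Dec G x s.2.1 n1 l1 ∧ D G s.2.1 s.2.2 k ∧ Dec G s.2.2 y n2 l2 ∧
      n = n1 + k + n2 := by
  induction l1 with
  | nil =>
    intro x y n h
    cases h with
    | cons h1 h2 => exact ⟨0, _, _, Dec.nil _, h1, h2, by omega⟩
  | cons a l1 ih =>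
    intro x y n h
    cases h with
    | cons h1 h2 =>
      obtain ⟨n1, k, n2, g1, g2, g3, g4⟩ := ih h2
      exact ⟨_, k, n2, Dec.cons h1 g1, g2, g3, by omega⟩

lemma Dec.transfer {x y : V} {n : ℕ} {l : List (V × V × V)} (h : Dec G x y n l)
    (e : V × V × V → ℕ)
    (hs : ∀ s ∈ l, ∀ k, D G s.2.1 s.2.2 k → D H s.2.1 s.2.2 (k + e s)) :
    D H x y (n + (l.map e).sum) := by
  induction h with
  | nil x => exact D.refl _ _ _
  | @cons x z y c k n l h1 h2 ih =>
    have a1 := hs (c, x, z) (by simp) _ h1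
    have a2 := ih (fun s hs' => hs s (List.mem_cons_of_mem _ hs'))
    refine (a1.trans a2).mono ?_
    simp only [List.map_cons, List.sum_cons]
    omega

lemma sum_err (l : List (V × V × V)) (bad : V × V × V → Prop) (f : V → ℕ) (M : ℕ) :
    (l.map (fun s => if bad s then M else f s.1)).sum ≤
      M * l.countP (fun s => bad s) + (l.map (fun s => f s.1)).sum := by
  induction l with
  | nil => simp
  | cons a l ih =>
    simp only [List.map_cons, List.sum_cons, List.countP_cons]
    by_cases h : bad a
    · simp only [h, if_true, decide_true]
      rw [mul_add]
      omega
    · simp only [h, if_false, decide_false]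
      simp only [Bool.false_eq_true, if_false, add_zero]
      omega

end dec

/-- Clusterings. -/
structure Clustering {V : Type} [Fintype V] (G : SimpleGraph V) (R K M : ℕ) where
  I : Finset V
  rad : V → ℕ
  Z : V → Finset V
  rad_le : ∀ c ∈ I, rad c ≤ M
  sum_le : ∑ c ∈ I, (ball G c (8 * rad c)).card ≤ K * Fintype.card V
  card_Z : ∀ c ∈ I, R * (Z c).card ≤ K * (ball G c (8 * rad c)).card
  Z_ball : ∀ c ∈ I, Z c ⊆ ball G c (4 * rad c)
  dec : ∀ x y n, D G x y n → ∃ l : List (V × V × V), (∃ m ≤ n, Dec G x y m l) ∧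
    (∀ s ∈ l, s.1 ∈ I ∧ D G s.1 s.2.1 (4 * rad s.1) ∧ D G s.1 s.2.2 (4 * rad s.1)) ∧
    (l.map Prod.fst).Nodup ∧
    l.countP (fun s => ¬ (s.2.1 ∈ Z s.1 ∧ s.2.2 ∈ Z s.1)) ≤ 2

section clustering
variable {V : Type} [Fintype V] {G : SimpleGraph V}

lemma growth (G : SimpleGraph V) (R K L : ℕ) (hL : 1 ≤ L) (hn : Fintype.card V ≤ K ^ L) (v : V) :
    ∃ j < L, (ball G v (8 * (8 ^ j * R))).card ≤ K * (ball G v (8 ^ j * R)).card := by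
  by_contra! hcon
  have h : ∀ j, j < L → K ^ (j + 1) < (ball G v (8 ^ (j + 1) * R)).card := by
    intro j
    induction j with
    | zero =>
      intro h
      have h1 := hcon 0 h
      have h2 := ball_pos (G := G) v (8 ^ 0 * R)
      have : 8 ^ (0 + 1) * R = 8 * (8 ^ 0 * R) := by ring
      rw [this, zero_add, pow_one]
      exact (Nat.le_mul_of_pos_right K h2).trans_lt h1
    | succ j ih =>
      intro h
      have h1 := hcon (j + 1) h
      have h2 := ih (by omega)
      have : 8 ^ (j + 1 + 1) * R = 8 * (8 ^ (j + 1) * R) := by ring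
      rw [this]
      have : K ^ (j + 1 + 1) = K * K ^ (j + 1) := by ring
      rw [this]
      exact (Nat.mul_le_mul_left K h2.le).trans_lt h1
  have h1 := h (L - 1) (by omega)
  rw [show L - 1 + 1 = L by omega] at h1
  have h2 := Finset.card_le_univ (ball G v (8 ^ L * R))
  omega

lemma vitali (G : SimpleGraph V) (ρ : V → ℕ) (W : Finset V) :
    ∃ I ⊆ W, (∀ a ∈ I, ∀ b ∈ I, a ≠ b → Disjoint (ball G a (ρ a)) (ball G b (ρ b))) ∧
      ∀ v ∈ W, ∃ c ∈ I, D G c v (2 * ρ c) := by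
  induction W using Finset.strongInduction with
  | H W ih =>
    rcases W.eq_empty_or_nonempty with rfl | hW
    · exact ⟨∅, by simp, by simp, by simp⟩
    obtain ⟨v, hv, hmax⟩ := Finset.exists_max_image W ρ hW
    let W' := W.filter (fun w => Disjoint (ball G v (ρ v)) (ball G w (ρ w)))
    have hW' : W' ⊂ W := by
      refine Finset.filter_ssubset.2 ⟨v, hv, ?_⟩
      rw [Finset.disjoint_self_iff_empty]
      exact (Finset.card_pos.1 (ball_pos _ _)).ne_empty
    obtain ⟨I, hI, hd, hc⟩ := ih W' hW'
    refine ⟨insert v I, ?_, ?_, ?_⟩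
    · exact Finset.insert_subset hv (hI.trans hW'.subset)
    · intro a ha b hb hab
      rcases Finset.mem_insert.1 ha with ha' | ha' <;>
        rcases Finset.mem_insert.1 hb with hb' | hb'
      · exact absurd (ha'.trans hb'.symm) hab
      · rw [ha']; exact (Finset.mem_filter.1 (hI hb')).2
      · rw [hb']; exact (Finset.mem_filter.1 (hI ha')).2.symm
      · exact hd a ha' b hb' hab
    · intro w hw
      by_cases h : Disjoint (ball G v (ρ v)) (ball G w (ρ w))
      · obtain ⟨c, hc1, hc2⟩ := hc w (Finset.mem_filter.2 ⟨hw, h⟩)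
        exact ⟨c, Finset.mem_insert_of_mem hc1, hc2⟩
      · refine ⟨v, Finset.mem_insert_self _ _, ?_⟩
        rw [Finset.not_disjoint_iff] at h
        obtain ⟨t, ht1, ht2⟩ := h
        rw [mem_ball] at ht1 ht2
        have := hmax w hw
        exact (ht1.trans ht2.symm).mono (by omega)

lemma layer (G : SimpleGraph V) (c : V) (r : ℕ) (hr : 1 ≤ r) : ∃ j, 2 * r < j ∧ j ≤ 3 * r ∧
    r * (ball G c j \ ball G c (j - 1)).card ≤ (ball G c (3 * r)).card := by
  by_contra! hcon
  have h : ∀ t, t ≤ r → t * ((ball G c (3 * r)).card + 1) ≤ r * (ball G c (2 * r + t)).card := by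
    intro t
    induction t with
    | zero => simp
    | succ t ih =>
      intro ht
      have h1 := ih (by omega)
      have h2 := hcon (2 * r + (t + 1)) (by omega) (by omega)
      rw [show 2 * r + (t + 1) - 1 = 2 * r + t by omega] at h2
      have h3 := Finset.card_sdiff_add_card_eq_card (ball_mono (G := G) c (show 2 * r + t ≤ 2 * r + (t + 1) by omega))
      rw [← h3, mul_add]
      nlinarith
  have h1 := h r le_rfl
  rw [show 2 * r + r = 3 * r by omega] at h1
  have := Nat.le_of_mul_le_mul_left h1 (by omega)
  omega

/-- Decomposition of a walk along territories. -/
lemma walk_dec (I : Finset V) (rad : V → ℕ) (Z : V → Finset V) (cl : V → V)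
    (hI : ∀ v, cl v ∈ I) (hrad : ∀ c ∈ I, 1 ≤ rad c) (hcl : ∀ v, D G (cl v) v (3 * rad (cl v)))
    (hZ : ∀ a b, G.Adj a b → cl a ≠ cl b → (a ∈ Z (cl a) ∧ a ∈ Z (cl b)) ∨
      (b ∈ Z (cl a) ∧ b ∈ Z (cl b)))
    (p : ℕ → V) (n : ℕ) (hp : ∀ k < n, G.Adj (p k) (p (k + 1))) :
    ∀ d a w, a + d = n → w ≤ a → a ≤ w + 1 → D G (cl (p a)) (p w) (4 * rad (cl (p a))) →
    ∃ l : List (V × V × V), Dec G (p w) (p n) (n - w) l ∧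
    (∀ s ∈ l, s.1 ∈ I ∧ D G s.1 s.2.1 (4 * rad s.1) ∧ D G s.1 s.2.2 (4 * rad s.1)) ∧
    (∀ s ∈ l, ∃ b, a ≤ b ∧ b ≤ n ∧ cl (p b) = s.1) ∧
    (l.map Prod.fst).Nodup ∧
    l.countP (fun s => ¬ (s.2.1 ∈ Z s.1 ∧ s.2.2 ∈ Z s.1)) ≤
      1 + (if p w ∈ Z (cl (p a)) then 0 else 1) := by
  intro d
  induction d using Nat.strong_induction_on with
  | _ d ih =>
  intro a w had hwa haw hD
  have hseg : ∀ j k, j ≤ k → k ≤ n → D G (p j) (p k) (k - j) := fun j k hjk hk =>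
    D.of_fn p j k hjk (fun i _ hi => hp i (by omega))
  -- last visit
  set e := Nat.findGreatest (fun e => cl (p e) = cl (p a)) n with he
  have hea : a ≤ e := Nat.le_findGreatest (P := fun e => cl (p e) = cl (p a)) (by omega) rfl
  have hen : e ≤ n := Nat.findGreatest_le n
  have hee : cl (p e) = cl (p a) :=
    Nat.findGreatest_spec (P := fun e => cl (p e) = cl (p a)) (show a ≤ n by omega) rfl
  have hgt : ∀ b, e < b → b ≤ n → cl (p b) ≠ cl (p a) := fun b h1 h2 =>
    Nat.findGreatest_is_greatest (P := fun e => cl (p e) = cl (p a)) h1 h2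
  have hrad1 := hrad _ (hI (p a))
  rcases hen.lt_or_eq with hlt | heq
  · -- proceed
    have hadj := hp e hlt
    have hne : cl (p e) ≠ cl (p (e + 1)) := by
      rw [hee]; exact (hgt (e + 1) (by omega) (by omega)).symm
    have hw' : ∃ w', e ≤ w' ∧ w' ≤ e + 1 ∧ p w' ∈ Z (cl (p a)) ∧ p w' ∈ Z (cl (p (e + 1))) := by
      rcases hZ _ _ hadj hne with ⟨h1, h2⟩ | ⟨h1, h2⟩
      · exact ⟨e, le_rfl, by omega, hee ▸ h1, h2⟩
      · exact ⟨e + 1, by omega, le_rfl, hee ▸ h1, h2⟩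
    obtain ⟨w', hw1, hw2, hz1, hz2⟩ := hw'
    have hr2 := hrad _ (hI (p (e + 1)))
    have hD1 : D G (cl (p (e + 1))) (p w') (4 * rad (cl (p (e + 1)))) :=
      ((hcl (p (e + 1))).trans (hseg w' (e + 1) hw2 (by omega)).symm).mono (by omega)
    have hD2 : D G (cl (p a)) (p w') (4 * rad (cl (p a))) := by
      have := hcl (p e)
      rw [hee] at this
      exact (this.trans (hseg e w' hw1 (by omega))).mono (by omega)
    obtain ⟨l, g1, g2, g3, g4, g5⟩ := ih (n - (e + 1)) (by omega) (e + 1) w' (by omega) (by omega)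
      (by omega) hD1
    refine ⟨(cl (p a), p w, p w') :: l, ?_, ?_, ?_, ?_, ?_⟩
    · have := Dec.cons (c := cl (p a)) (hseg w w' (by omega) (by omega)) g1
      rwa [show w' - w + (n - w') = n - w by omega] at this
    · intro s hs
      rcases List.mem_cons.1 hs with rfl | hs
      · exact ⟨hI _, hD, hD2⟩
      · exact g2 s hs
    · intro s hs
      rcases List.mem_cons.1 hs with rfl | hs
      · exact ⟨a, le_rfl, by omega, rfl⟩
      · obtain ⟨b, h1, h2, h3⟩ := g3 s hs
        exact ⟨b, by omega, h2, h3⟩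
    · rw [List.map_cons, List.nodup_cons]
      refine ⟨?_, g4⟩
      intro hmem
      rw [List.mem_map] at hmem
      obtain ⟨s, hs, hs'⟩ := hmem
      obtain ⟨b, h1, h2, h3⟩ := g3 s hs
      exact hgt b (by omega) h2 (h3.trans hs')
    · rw [if_pos hz2] at g5
      rw [List.countP_cons]
      by_cases hw : p w ∈ Z (cl (p a))
      · simp only [hw, hz1, and_self, not_true_eq_false, decide_false, if_true]
        simpa using g5
      · simp only [hw, false_and, not_false_eq_true, decide_true, if_true, if_false]
        omega
  · refine ⟨[(cl (p a), p w, p n)], ?_, ?_, ?_, ?_, ?_⟩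
    · exact Dec.cons (hseg w n (by omega) le_rfl) (Dec.nil _)
    · intro s hs
      rw [List.mem_singleton] at hs
      subst hs
      refine ⟨hI _, hD, ?_⟩
      have := hcl (p e)
      rw [hee, heq] at this
      have h34 : 3 * rad (cl (p a)) ≤ 4 * rad (cl (p a)) := by omega
      exact this.mono h34
    · intro s hs
      rw [List.mem_singleton] at hs
      subst hs
      exact ⟨a, le_rfl, by omega, rfl⟩
    · simp
    · refine List.countP_le_length.trans ?_
      simp

theorem exists_clustering (G : SimpleGraph V) (R K L : ℕ) (hR : 1 ≤ R) (hL : 1 ≤ L)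
    (hn : Fintype.card V ≤ K ^ L) : Nonempty (Clustering G R K (8 ^ L * R)) := by
  have h1 := growth G R K L hL hn
  choose lev hlev hgrow using h1
  let ρ : V → ℕ := fun v => 8 ^ lev v * R
  have hρR : ∀ v, R ≤ ρ v := fun v => Nat.le_mul_of_pos_left _ (by positivity)
  have hρ1 : ∀ v, 1 ≤ ρ v := fun v => hR.trans (hρR v)
  obtain ⟨I, _, hdisj, hcov⟩ := vitali G ρ Finset.univ
  have h2 := fun c => layer G c (ρ c) (hρ1 c)
  choose j hj1 hj2 hj3 using h2
  let N := Fintype.card V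
  let φ := Fintype.equivFin V
  let key : V → ℕ := fun c => ρ c * N + φ c
  have hkey_rho : ∀ a b, key a ≤ key b → ρ a ≤ ρ b := by
    intro a b h
    by_contra! hlt
    have h1 : (φ a : ℕ) < N := (φ a).2
    have h2 : (φ b : ℕ) < N := (φ b).2
    simp only [key] at h
    nlinarith
  have hkey_inj : ∀ a b, key a = key b → a = b := by
    intro a b h
    have : ρ a = ρ b := le_antisymm (hkey_rho a b h.le) (hkey_rho b a h.ge)
    simp only [key, this] at h
    apply φ.injective
    apply Fin.ext
    omega
  have hcl : ∀ v, ∃ c, c ∈ I ∧ v ∈ ball G c (j c) ∧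
      ∀ c' ∈ I, v ∈ ball G c' (j c') → key c ≤ key c' := by
    intro v
    have hne : (I.filter (fun c => v ∈ ball G c (j c))).Nonempty := by
      obtain ⟨c, hc, hcv⟩ := hcov v (Finset.mem_univ _)
      exact ⟨c, Finset.mem_filter.2 ⟨hc, mem_ball.2 (hcv.mono (hj1 c).le)⟩⟩
    obtain ⟨c, hc, hmin⟩ := Finset.exists_min_image _ key hne
    rw [Finset.mem_filter] at hc
    exact ⟨c, hc.1, hc.2, fun c' h1 h2 => hmin c' (Finset.mem_filter.2 ⟨h1, h2⟩)⟩
  choose cl hclI hclb hclmin using hcl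
  let Ly : V → Finset V := fun c => ball G c (j c) \ ball G c (j c - 1)
  let Z : V → Finset V := fun c =>
    (ball G c (4 * ρ c)).filter (fun v => ∃ l ∈ I, key l ≤ key c ∧ v ∈ Ly l)
  have hcl3 : ∀ v, D G (cl v) v (3 * ρ (cl v)) := fun v =>
    (mem_ball.1 (hclb v)).mono (hj2 _)
  -- boundary property, one direction
  have hbd : ∀ a b, G.Adj a b → key (cl a) < key (cl b) → a ∈ Z (cl a) ∧ a ∈ Z (cl b) := by
    intro a b hab hk
    have hLy : a ∈ Ly (cl a) := by
      refine Finset.mem_sdiff.2 ⟨hclb a, ?_⟩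
      intro h
      rw [mem_ball] at h
      have h3 : b ∈ ball G (cl a) (j (cl a)) := by
        rw [mem_ball]
        have := hj1 (cl a)
        exact (h.trans (D.adj hab)).mono (by omega)
      have := hclmin b _ (hclI a) h3
      omega
    refine ⟨Finset.mem_filter.2 ⟨?_, _, hclI a, le_rfl, hLy⟩,
      Finset.mem_filter.2 ⟨?_, _, hclI a, hk.le, hLy⟩⟩
    · rw [mem_ball]
      exact (hcl3 a).mono (by omega)
    · rw [mem_ball]
      have := hρ1 (cl b)
      exact ((hcl3 b).trans (D.adj hab.symm)).mono (by omega)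
  refine ⟨⟨I, ρ, Z, ?_, ?_, ?_, ?_, ?_⟩⟩
  · intro c _
    simp only [ρ]
    gcongr
    · norm_num
    · exact (hlev c).le
  · calc ∑ c ∈ I, (ball G c (8 * ρ c)).card ≤ ∑ c ∈ I, K * (ball G c (ρ c)).card :=
          Finset.sum_le_sum (fun c _ => hgrow c)
      _ = K * (I.biUnion (fun c => ball G c (ρ c))).card := by
          rw [← Finset.mul_sum, Finset.card_biUnion (fun a ha b hb hab => hdisj a ha b hb hab)]
      _ ≤ _ := Nat.mul_le_mul_left _ (Finset.card_le_univ _)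
  · intro c hc
    let I' := I.filter (fun l => key l ≤ key c ∧ (Ly l ∩ ball G c (4 * ρ c)).Nonempty)
    have hsub : Z c ⊆ I'.biUnion Ly := by
      intro v hv
      obtain ⟨hv1, l, hl, hk, hv2⟩ := Finset.mem_filter.1 hv
      exact Finset.mem_biUnion.2 ⟨l, Finset.mem_filter.2 ⟨hl, hk, v, Finset.mem_inter.2 ⟨hv2, hv1⟩⟩, hv2⟩
    calc R * (Z c).card ≤ R * ∑ l ∈ I', (Ly l).card :=
          Nat.mul_le_mul_left _ ((Finset.card_le_card hsub).trans Finset.card_biUnion_le)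
      _ = ∑ l ∈ I', R * (Ly l).card := by rw [Finset.mul_sum]
      _ ≤ ∑ l ∈ I', K * (ball G l (ρ l)).card := by
          apply Finset.sum_le_sum
          intro l _
          calc R * (Ly l).card ≤ ρ l * (Ly l).card := Nat.mul_le_mul_right _ (hρR l)
            _ ≤ (ball G l (3 * ρ l)).card := hj3 l
            _ ≤ (ball G l (8 * ρ l)).card := Finset.card_le_card (ball_mono _ (by omega))
            _ ≤ _ := hgrow l
      _ = K * (I'.biUnion (fun l => ball G l (ρ l))).card := by
          rw [← Finset.mul_sum, Finset.card_biUnion]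
          intro a ha b hb hab
          exact hdisj a (Finset.mem_filter.1 ha).1 b (Finset.mem_filter.1 hb).1 hab
      _ ≤ K * (ball G c (8 * ρ c)).card := by
          apply Nat.mul_le_mul_left
          apply Finset.card_le_card
          intro v hv
          obtain ⟨l, hl, hv⟩ := Finset.mem_biUnion.1 hv
          obtain ⟨_, hk, t, ht⟩ := Finset.mem_filter.1 hl
          rw [Finset.mem_inter] at ht
          have ht1 := mem_ball.1 (Finset.mem_sdiff.1 ht.1).1
          have ht2 := mem_ball.1 ht.2
          rw [mem_ball] at hv ⊢
          have := hkey_rho l c hk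
          have := hj2 l
          exact ((ht2.trans ht1.symm).trans hv).mono (by omega)
  · intro c _
    exact Finset.filter_subset _ _
  · intro x y n hxy
    obtain ⟨m, hm, p, p0, pm, hp⟩ := hxy.fn
    obtain ⟨l, g1, g2, _, g4, g5⟩ := walk_dec (G := G) I ρ Z cl hclI (fun c _ => hρ1 c) hcl3 (by
      intro a b hab hne
      rcases lt_trichotomy (key (cl a)) (key (cl b)) with h | h | h
      · exact Or.inl (hbd a b hab h)
      · exact absurd (hkey_inj _ _ h) hne
      · exact Or.inr (hbd b a hab.symm h).symm) p m hp m 0 0 (by omega) le_rfl (by omega)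
      ((hcl3 (p 0)).mono (by omega))
    rw [p0, pm] at g1
    refine ⟨l, ⟨m - 0, by omega, g1⟩, g2, g4, g5.trans ?_⟩
    split_ifs <;> omega

end clustering
end Spanner


namespace Spanner
open scoped Classical

section restr
variable {V : Type} {G : SimpleGraph V}

/-- Restriction of a graph to the edges inside `U`, on the same vertex type. -/
def restr (G : SimpleGraph V) (U : Finset V) : SimpleGraph V where
  Adj a b := G.Adj a b ∧ a ∈ U ∧ b ∈ U
  symm := ⟨fun _ _ h => ⟨h.1.symm, h.2.2, h.2.1⟩⟩
  loopless := ⟨fun _ h => h.1.ne rfl⟩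

lemma restr_le (G : SimpleGraph V) (U : Finset V) : restr G U ≤ G := fun _ _ h => h.1

lemma D.restr [Fintype V] {c z z' : V} {r n : ℕ} (h1 : D G c z (4 * r)) (h2 : D G c z' (4 * r))
    (h : D G z z' n) : D (restr G (ball G c (8 * r))) z z' n := by
  have hex : ∃ n, D G z z' n := ⟨n, h⟩
  obtain ⟨m, hm, p, p0, pm, hp⟩ := (Nat.find_spec hex).fn
  have hmn : Nat.find hex ≤ n := Nat.find_min' hex h
  have hm8 : Nat.find hex ≤ 4 * r + 4 * r := Nat.find_min' hex (h1.symm.trans h2)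
  have hin : ∀ k ≤ m, p k ∈ ball G c (8 * r) := by
    intro k hk
    rw [mem_ball]
    have a1 := D.of_fn p 0 k (by omega) (fun i _ hi => hp i (by omega))
    have a2 := D.of_fn p k m hk (fun i _ hi => hp i (by omega))
    rw [p0] at a1
    rw [pm] at a2
    by_cases h4 : k ≤ 4 * r
    · exact (h1.trans a1).mono (by omega)
    · exact (h2.trans a2.symm).mono (by omega)
  have := D.of_fn (G := Spanner.restr G (ball G c (8 * r))) p 0 m (by omega)
    (fun k _ hk => ⟨hp k hk, hin k (by omega), hin (k + 1) (by omega)⟩)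
  rw [p0, pm] at this
  exact this.mono (by omega)

lemma D.map {W : Type} {H : SimpleGraph W} {H' : SimpleGraph V} (f : W → V)
    (hf : ∀ a b, H.Adj a b → H'.Adj (f a) (f b)) {a b : W} {n : ℕ} (h : D H a b n) :
    D H' (f a) (f b) n := by
  obtain ⟨m, hm, p, p0, pm, hp⟩ := h.fn
  have := D.of_fn (G := H') (fun k => f (p k)) 0 m (by omega) (fun k _ hk => hf _ _ (hp k hk))
  simp only [p0, pm] at this
  exact this.mono (by omega)

lemma D.to_induce {U : Finset V} {z z' : V} {n : ℕ} (hz : z ∈ U) (hz' : z' ∈ U)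
    (h : D (Spanner.restr G U) z z' n) :
    D (G.comap (fun a : {x // x ∈ U} => (a : V))) ⟨z, hz⟩ ⟨z', hz'⟩ n := by
  let g : V → {x // x ∈ U} := fun v => if h : v ∈ U then ⟨v, h⟩ else ⟨z, hz⟩
  have hg : ∀ v (hv : v ∈ U), g v = ⟨v, hv⟩ := fun v hv => dif_pos hv
  have := D.map (H' := G.comap (fun a : {x // x ∈ U} => (a : V))) g (by
    intro a b hab
    rw [hg a hab.2.1, hg b hab.2.2]
    exact hab.1) h
  rwa [hg z hz, hg z' hz'] at this

variable [Fintype V]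

lemma cluster_pres (G : SimpleGraph V) (c : V) (r : ℕ) (Q : Finset (V × V))
    (hQ : ∀ q ∈ Q, D G c q.1 (4 * r) ∧ D G c q.2 (4 * r)) :
    ∃ F : SimpleGraph V, F ≤ G ∧ F.edgeSet.ncard ≤ (ball G c (8 * r)).card + Q.card ^ 2 ∧
      ∀ q ∈ Q, ∀ n, D G q.1 q.2 n → D F q.1 q.2 n := by
  obtain ⟨F, h1, h2, h3⟩ := preserver (G := restr G (ball G c (8 * r))) (ball G c (8 * r))
    (fun a b h => h.2.2) Q
  exact ⟨F, h1.trans (restr_le _ _), h2, fun q hq n hn =>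
    h3 q hq n (D.restr (hQ q hq).1 (hQ q hq).2 hn)⟩

lemma Clustering.trees {R K M : ℕ} (C : Clustering G R K M) :
    ∃ T : SimpleGraph V, T ≤ G ∧ T.edgeSet.ncard ≤ K * Fintype.card V ∧
      ∀ c ∈ C.I, ∀ z, D G c z (4 * C.rad c) → D T c z (4 * M) := by
  have h := fun c => tree G c (8 * C.rad c)
  choose T h1 h2 h3 using h
  obtain ⟨F, g1, g2, g3⟩ := unionGraphs (G := G) C.I T _ (fun c _ => ⟨h1 c, h2 c⟩)
  refine ⟨F, g1, g3.trans C.sum_le, ?_⟩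
  intro c hc z hz
  have := C.rad_le c hc
  exact ((h3 c _ (by omega) z hz).le (g2 c hc)).mono (by omega)

/-- the buying set -/
lemma buying (A : Finset (V × V)) (l : V × V → Finset V) :
    ∃ Q ⊆ A, (∀ c, (Q.filter (fun q => c ∈ l q)).card ≤
        ((Q.filter (fun q => c ∈ l q)).image Prod.fst ∪ (Q.filter (fun q => c ∈ l q)).image Prod.snd).card) ∧
      ∀ q ∈ A, q ∈ Q ∨ ∃ c ∈ l q, (∃ q' ∈ Q, c ∈ l q' ∧ (q'.1 = q.1 ∨ q'.2 = q.1)) ∧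
        (∃ q' ∈ Q, c ∈ l q' ∧ (q'.1 = q.2 ∨ q'.2 = q.2)) := by
  let P : Finset (V × V) → Prop := fun Q => ∀ c, (Q.filter (fun q => c ∈ l q)).card ≤
        ((Q.filter (fun q => c ∈ l q)).image Prod.fst ∪ (Q.filter (fun q => c ∈ l q)).image Prod.snd).card
  obtain ⟨Q, hQ, hmax⟩ := Finset.exists_max_image (A.powerset.filter P) Finset.card
    ⟨∅, by simp [P]⟩
  rw [Finset.mem_filter, Finset.mem_powerset] at hQ
  refine ⟨Q, hQ.1, hQ.2, ?_⟩
  intro q hq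
  by_contra hcon
  rw [not_or] at hcon
  obtain ⟨hqQ, hno⟩ := hcon
  have hP : P (insert q Q) := by
    intro c
    rw [Finset.filter_insert]
    by_cases hc : c ∈ l q
    · rw [if_pos hc, Finset.card_insert_of_notMem (by simp [hqQ])]
      refine (Nat.add_le_add_right (hQ.2 c) 1).trans ?_
      rw [Nat.add_one_le_iff]
      apply Finset.card_lt_card
      rw [Finset.ssubset_iff_of_subset]
      · by_contra hcon
        apply hno
        push Not at hcon
        have h1 := hcon q.1 (by simp)
        have h2 := hcon q.2 (by simp)
        simp only [Finset.mem_union, Finset.mem_image, Finset.mem_filter] at h1 h2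
        refine ⟨c, hc, ?_, ?_⟩
        · rcases h1 with ⟨q', h, h'⟩ | ⟨q', h, h'⟩
          · exact ⟨q', h.1, h.2, Or.inl h'⟩
          · exact ⟨q', h.1, h.2, Or.inr h'⟩
        · rcases h2 with ⟨q', h, h'⟩ | ⟨q', h, h'⟩
          · exact ⟨q', h.1, h.2, Or.inl h'⟩
          · exact ⟨q', h.1, h.2, Or.inr h'⟩
      · apply Finset.union_subset_union <;>
        exact Finset.image_subset_image (Finset.subset_insert _ _)
    · rw [if_neg hc]
      exact hQ.2 c
  have := hmax (insert q Q) (Finset.mem_filter.2 ⟨Finset.mem_powerset.2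
    (Finset.insert_subset hq hQ.1), hP⟩)
  rw [Finset.card_insert_of_notMem hqQ] at this
  omega

theorem subset_spanner (G : SimpleGraph V) (R K L : ℕ) (hR : 1 ≤ R) (hK : 1 ≤ K) (hL : 1 ≤ L)
    (hn : Fintype.card V ≤ K ^ L) (S : Finset V) (hS : S.card ^ 3 * K ^ 2 ≤ R ^ 2) :
    ∃ H : SimpleGraph V, H ≤ G ∧ H.edgeSet.ncard ≤ 3 * K * Fintype.card V ∧
      ∀ x ∈ S, ∀ y ∈ S, ∀ m, D G x y m → D H x y (m + 56 * (8 ^ L * R)) := by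
  obtain ⟨C⟩ := exists_clustering G R K L hR hL hn
  set M := 8 ^ L * R with hM
  obtain ⟨T, hTG, hTc, hT⟩ := C.trees
  -- decompositions of geodesics
  have hdec : ∀ q : V × V, ∃ l : List (V × V × V), (∃ n, D G q.1 q.2 n) →
      (∃ m, Dec G q.1 q.2 m l ∧ ∀ n, D G q.1 q.2 n → m ≤ n) ∧
      (∀ s ∈ l, s.1 ∈ C.I ∧ D G s.1 s.2.1 (4 * C.rad s.1) ∧ D G s.1 s.2.2 (4 * C.rad s.1)) ∧
      (l.map Prod.fst).Nodup ∧
      l.countP (fun s => ¬ (s.2.1 ∈ C.Z s.1 ∧ s.2.2 ∈ C.Z s.1)) ≤ 2 := by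
    intro q
    by_cases h : ∃ n, D G q.1 q.2 n
    · obtain ⟨l, ⟨m, hm, h1⟩, h2⟩ := C.dec q.1 q.2 _ (Nat.find_spec h)
      exact ⟨l, fun _ => ⟨⟨m, h1, fun n hn => hm.trans (Nat.find_min' h hn)⟩, h2⟩⟩
    · exact ⟨[], fun h' => absurd h' h⟩
  choose l hl using hdec
  let A := (S ×ˢ S).filter (fun q => ∃ n, D G q.1 q.2 n)
  obtain ⟨Q, hQA, hQc, hQ⟩ := buying A (fun q => ((l q).map Prod.fst).toFinset)
  have hmemS : ∀ q ∈ Q, q.1 ∈ S ∧ q.2 ∈ S ∧ ∃ n, D G q.1 q.2 n := by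
    intro q hq
    have := Finset.mem_filter.1 (hQA hq)
    exact ⟨(Finset.mem_product.1 this.1).1, (Finset.mem_product.1 this.1).2, this.2⟩
  -- requests of a large cluster
  let Qc : V → Finset (V × V) := fun c => Q.filter (fun q => c ∈ ((l q).map Prod.fst).toFinset)
  have hQcS : ∀ c, (Qc c).card ≤ S.card := by
    intro c
    refine (hQc c).trans (Finset.card_le_card ?_)
    intro v hv
    simp only [Finset.mem_union, Finset.mem_image, Finset.mem_filter] at hv
    rcases hv with ⟨q, h, rfl⟩ | ⟨q, h, rfl⟩
    · exact (hmemS q h.1).1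
    · exact (hmemS q h.1).2.1
  have hreq : ∀ c (q : V × V), ∃ z : V × V, q ∈ Qc c → (c, z) ∈ l q := by
    intro c q
    by_cases h : q ∈ Qc c
    · have h' := (Finset.mem_filter.1 h).2
      simp only [List.mem_toFinset, List.mem_map] at h'
      obtain ⟨⟨c', z⟩, h1, h2⟩ := h'
      exact ⟨z, fun _ => h2 ▸ h1⟩
    · exact ⟨q, fun h' => absurd h' h⟩
  choose req hreq using hreq
  let small : V → Prop := fun c => (C.Z c).card ^ 4 ≤ (ball G c (8 * C.rad c)).card
  let QQ : V → Finset (V × V) := fun c =>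
    if small c then C.Z c ×ˢ C.Z c else (Qc c).image (req c)
  have hF : ∀ c, ∃ F : SimpleGraph V, c ∈ C.I → F ≤ G ∧
      F.edgeSet.ncard ≤ 2 * (ball G c (8 * C.rad c)).card ∧
      ∀ q ∈ QQ c, ∀ n, D G q.1 q.2 n → D F q.1 q.2 n := by
    intro c
    by_cases hc : c ∈ C.I
    swap
    · exact ⟨⊥, fun h => absurd h hc⟩
    obtain ⟨F, h1, h2, h3⟩ := cluster_pres G c (C.rad c) (QQ c) (by
      intro q hq
      by_cases hs : small c
      · simp only [QQ, if_pos hs, Finset.mem_product] at hq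
        exact ⟨mem_ball.1 (C.Z_ball c hc hq.1), mem_ball.1 (C.Z_ball c hc hq.2)⟩
      · simp only [QQ, if_neg hs, Finset.mem_image] at hq
        obtain ⟨q', hq', rfl⟩ := hq
        have := (hl q' (hmemS q' (Finset.mem_filter.1 hq').1).2.2).2.1 _ (hreq c q' hq')
        exact this.2)
    refine ⟨F, fun _ => ⟨h1, h2.trans ?_, h3⟩⟩
    have : (QQ c).card ^ 2 ≤ (ball G c (8 * C.rad c)).card := by
      by_cases hs : small c
      · simp only [QQ, if_pos hs, Finset.card_product]
        have : (C.Z c).card ^ 4 ≤ (ball G c (8 * C.rad c)).card := hs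
        calc _ = (C.Z c).card ^ 4 := by ring
          _ ≤ _ := this
      · simp only [QQ, if_neg hs]
        have h4 : ((Qc c).image (req c)).card ≤ S.card := Finset.card_image_le.trans (hQcS c)
        refine (Nat.pow_le_pow_left h4 2).trans ?_
        have h5 : (ball G c (8 * C.rad c)).card < (C.Z c).card ^ 4 := not_le.1 hs
        have h6 := C.card_Z c hc
        have h7 := ball_pos (G := G) c (8 * C.rad c)
        generalize (ball G c (8 * C.rad c)).card = s at *
        generalize (C.Z c).card = b at *
        generalize S.card = t at *
        by_contra! hlt
        have e1 : (R * b) ^ 4 ≤ (K * s) ^ 4 := Nat.pow_le_pow_left h6 4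
        have e2 : R ^ 4 * s < (R * b) ^ 4 := by
          rw [mul_pow]; exact Nat.mul_lt_mul_of_pos_left h5 (by positivity)
        have e3 : R ^ 4 * s < (K ^ 4 * s ^ 3) * s := by
          calc _ < _ := e2.trans_le e1
            _ = _ := by ring
        have e4 : R ^ 4 < K ^ 4 * s ^ 3 := Nat.lt_of_mul_lt_mul_right e3
        have e5 : (t ^ 3 * K ^ 2) ^ 2 ≤ (R ^ 2) ^ 2 := Nat.pow_le_pow_left hS 2
        have e6 : K ^ 4 * (t ^ 2) ^ 3 ≤ R ^ 4 := by
          calc _ = (t ^ 3 * K ^ 2) ^ 2 := by ring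
            _ ≤ _ := e5
            _ = _ := by ring
        have e7 : s ^ 3 ≤ (t ^ 2) ^ 3 := Nat.pow_le_pow_left hlt.le 3
        have e8 := Nat.mul_le_mul_left (K ^ 4) e7
        omega
    omega
  choose F hF using hF
  obtain ⟨F', hF'G, hF'F, hF'c⟩ := unionGraphs (G := G) C.I F _
    (fun c hc => ⟨(hF c hc).1, (hF c hc).2.1⟩)
  refine ⟨T ⊔ F', sup_le hTG hF'G, ?_, ?_⟩
  · rw [SimpleGraph.edgeSet_sup]
    refine (Set.ncard_union_le _ _).trans ?_
    rw [← Finset.mul_sum] at hF'c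
    have := C.sum_le
    nlinarith
  set H := T ⊔ F' with hH
  have hTH : ∀ c ∈ C.I, ∀ z, D G c z (4 * C.rad c) → D H c z (4 * M) := fun c hc z hz =>
    (hT c hc z hz).le le_sup_left
  -- touched pairs on bought paths
  have hseg : ∀ q ∈ Q, ∀ s ∈ l q, ∀ k, D G s.2.1 s.2.2 k → D H s.2.1 s.2.2 (k +
      (if ¬ (s.2.1 ∈ C.Z s.1 ∧ s.2.2 ∈ C.Z s.1) then 8 * M else 0)) := by
    intro q hq s hs k hk
    obtain ⟨_, h2, h3, _⟩ := hl q (hmemS q hq).2.2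
    obtain ⟨hsI, hs1, hs2⟩ := h2 s hs
    by_cases hbad : s.2.1 ∈ C.Z s.1 ∧ s.2.2 ∈ C.Z s.1
    swap
    · rw [if_pos hbad]
      exact ((hTH _ hsI _ hs1).symm.trans (hTH _ hsI _ hs2)).mono (by omega)
    · rw [if_neg (not_not.2 hbad)]
      rw [add_zero]
      refine (((hF s.1 hsI).2.2 s.2 ?_ k hk).le (hF'F _ hsI)).le le_sup_right
      by_cases hsm : small s.1
      · simp only [QQ, if_pos hsm, Finset.mem_product]
        exact hbad
      · simp only [QQ, if_neg hsm, Finset.mem_image]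
        have hqc : q ∈ Qc s.1 := Finset.mem_filter.2 ⟨hq, by
          simp only [List.mem_toFinset, List.mem_map]
          exact ⟨s, hs, rfl⟩⟩
        refine ⟨q, hqc, ?_⟩
        have h4 := hreq s.1 q hqc
        have := List.inj_on_of_nodup_map h3 h4 hs rfl
        rw [← this]
  have hsub : ∀ q ∈ Q, ∀ l', List.Sublist l' (l q) → ∀ x y n, Dec G x y n l' →
      D H x y (n + 16 * M) := by
    intro q hq l' hl' x y n hD
    obtain ⟨_, h2, h3, h4⟩ := hl q (hmemS q hq).2.2
    have := hD.transfer (H := H) _ (fun s hs => hseg q hq s (hl'.subset hs))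
    refine this.mono ?_
    have h5 : (l'.map (fun s => if ¬ (s.2.1 ∈ C.Z s.1 ∧ s.2.2 ∈ C.Z s.1) then 8 * M else 0)).sum ≤
        8 * M * l'.countP (fun s => ¬ (s.2.1 ∈ C.Z s.1 ∧ s.2.2 ∈ C.Z s.1)) +
        (l'.map (fun _ : V × V × V => 0)).sum := by
      convert sum_err l' (fun s => ¬ (s.2.1 ∈ C.Z s.1 ∧ s.2.2 ∈ C.Z s.1)) (fun _ => 0) (8 * M)
    have h6 := (hl'.countP_le (p := fun s => ¬ (s.2.1 ∈ C.Z s.1 ∧ s.2.2 ∈ C.Z s.1))).trans h4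
    have h7 : (l'.map (fun _ : V × V × V => 0)).sum = 0 := by simp
    have h8 := Nat.mul_le_mul_left (8 * M) h6
    omega
  have htouch : ∀ q ∈ Q, ∀ c ∈ ((l q).map Prod.fst).toFinset, ∀ x, (q.1 = x ∨ q.2 = x) →
      ∀ k, D G x c k → D H x c (k + 24 * M) := by
    intro q hq c hc x hx k hk
    simp only [List.mem_toFinset, List.mem_map] at hc
    obtain ⟨s, hs, rfl⟩ := hc
    obtain ⟨⟨m, hm, hmin⟩, h2, h3, h4⟩ := hl q (hmemS q hq).2.2
    obtain ⟨hsI, hs1, hs2⟩ := h2 s hs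
    have hrM := C.rad_le _ hsI
    obtain ⟨l1, l2, hl12⟩ := List.append_of_mem hs
    rw [hl12] at hm
    obtain ⟨n1, k', n2, g1, g2, g3, g4⟩ := Dec.split l1 hm
    rcases hx with rfl | rfl
    · have h5 := hmin _ (hk.trans (hs1.trans (g2.trans g3.toD)))
      have h6 := hsub q hq l1 (by rw [hl12]; exact List.sublist_append_left _ _) _ _ _ g1
      exact (h6.trans (hTH _ hsI _ hs1).symm).mono (by omega)
    · have h5 := hmin _ ((g1.toD.trans g2).trans (hs2.symm.trans hk.symm))
      have h6 := hsub q hq l2 (by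
        rw [hl12]
        exact (List.sublist_cons_self _ _).trans (List.sublist_append_right _ _)) _ _ _ g3
      exact (h6.symm.trans (hTH _ hsI _ hs2).symm).mono (by omega)
  intro x hx y hy m hxy
  have hqA : (x, y) ∈ A := Finset.mem_filter.2 ⟨Finset.mem_product.2 ⟨hx, hy⟩, m, hxy⟩
  obtain ⟨⟨m0, hm0, hmin⟩, h2, h3, h4⟩ := hl (x, y) ⟨m, hxy⟩
  have hm0m := hmin m hxy
  rcases hQ (x, y) hqA with hq | ⟨c, hc, ⟨q1, hq1, hc1, hx1⟩, ⟨q2, hq2, hc2, hx2⟩⟩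
  · exact (hsub _ hq _ (List.Sublist.refl _) _ _ _ hm0).mono (by omega)
  · simp only [List.mem_toFinset, List.mem_map] at hc
    obtain ⟨s, hs, rfl⟩ := hc
    obtain ⟨hsI, hs1, hs2⟩ := h2 s hs
    have hrM := C.rad_le _ hsI
    obtain ⟨l1, l2, hl12⟩ := List.append_of_mem hs
    rw [hl12] at hm0
    obtain ⟨n1, k', n2, g1, g2, g3, g4⟩ := Dec.split l1 hm0
    have e1 := htouch q1 hq1 _ hc1 x hx1 _ (g1.toD.trans hs1.symm)
    have e2 := htouch q2 hq2 _ hc2 y hx2 _ (g3.toD.symm.trans hs2.symm)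
    exact (e1.trans e2.symm).mono (by omega)

end restr
end Spanner


namespace Spanner
open scoped Classical

section mainnat
variable {V : Type} [Fintype V]

lemma hitting (I : Finset V) (s : V → ℕ) (W θ : ℕ) (hs : ∀ c ∈ I, 0 < s c)
    (hW : ∑ c ∈ I, s c ≤ W) (hW0 : 0 < W) (σ : ℕ) : ∀ (F : Finset (Finset V)),
    (∀ A ∈ F, A ⊆ I ∧ θ ≤ ∑ c ∈ A, s c) →
    (F.card : ℝ) * Real.exp (-((σ : ℝ) * θ / W)) < 1 →
    ∃ S ⊆ I, S.card ≤ σ ∧ ∀ A ∈ F, ∃ c ∈ A, c ∈ S := by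
  have hWr : (0 : ℝ) < W := by exact_mod_cast hW0
  induction σ with
  | zero =>
    intro F hF h
    simp only [Nat.cast_zero, zero_mul, zero_div, neg_zero, Real.exp_zero, mul_one] at h
    have h0 : F.card < 1 := by exact_mod_cast h
    have : F = ∅ := Finset.card_eq_zero.1 (by omega)
    subst this
    exact ⟨∅, by simp, by simp, by simp⟩
  | succ σ ih =>
    intro F hF h
    rcases F.eq_empty_or_nonempty with rfl | ⟨A0, hA0⟩
    · exact ⟨∅, by simp, by simp, by simp⟩
    have hFpos : 0 < F.card := Finset.card_pos.2 ⟨A0, hA0⟩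
    have hI : I.Nonempty := by
      by_contra hcon
      rw [Finset.not_nonempty_iff_eq_empty] at hcon
      obtain ⟨h1, h2⟩ := hF A0 hA0
      rw [hcon, Finset.subset_empty] at h1
      rw [h1, Finset.sum_empty] at h2
      have h3 : θ = 0 := by omega
      rw [h3] at h
      simp only [Nat.cast_zero, mul_zero, zero_div, neg_zero, Real.exp_zero, mul_one] at h
      have h0 : F.card < 1 := by exact_mod_cast h
      omega
    have hdouble : ∑ c ∈ I, s c * (F.filter (fun A => c ∈ A)).card = ∑ A ∈ F, ∑ c ∈ A, s c := by
      have h1 : ∀ A ∈ F, ∑ c ∈ A, s c = ∑ c ∈ I, if c ∈ A then s c else 0 := by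
        intro A hA
        rw [← Finset.sum_filter]
        congr 1
        ext c
        simp only [Finset.mem_filter]
        exact ⟨fun h => ⟨(hF A hA).1 h, h⟩, fun h => h.2⟩
      rw [Finset.sum_congr rfl h1, Finset.sum_comm]
      refine Finset.sum_congr rfl (fun c _ => ?_)
      rw [← Finset.sum_filter, Finset.sum_const, smul_eq_mul, mul_comm]
    have hlow : F.card * θ ≤ ∑ A ∈ F, ∑ c ∈ A, s c := by
      rw [← smul_eq_mul]
      exact Finset.card_nsmul_le_sum _ _ _ (fun A hA => (hF A hA).2)
    obtain ⟨c, hcI, hc⟩ := Finset.exists_le_of_sum_le (s := I)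
      (f := fun c => s c * (F.card * θ))
      (g := fun c => s c * ((F.filter (fun A => c ∈ A)).card * W)) hI (by
        rw [← Finset.sum_mul]
        have : ∑ c ∈ I, s c * ((F.filter (fun A => c ∈ A)).card * W) =
            (∑ c ∈ I, s c * (F.filter (fun A => c ∈ A)).card) * W := by
          rw [Finset.sum_mul]
          exact Finset.sum_congr rfl (fun _ _ => by ring)
        rw [this, hdouble, mul_comm]
        exact Nat.mul_le_mul hlow hW)
    have hc' := Nat.le_of_mul_le_mul_left hc (hs c hcI)
    have hsplit := Finset.card_filter_add_card_filter_not (s := F) (fun A => c ∈ A)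
    set a := (F.filter (fun A => c ∈ A)).card
    set b := (F.filter (fun A => ¬ c ∈ A)).card with hb
    obtain ⟨S, hS1, hS2, hS3⟩ := ih (F.filter (fun A => ¬ c ∈ A))
      (fun A hA => hF A (Finset.mem_filter.1 hA).1) (by
        rw [← hb]
        refine lt_of_le_of_lt ?_ h
        have e1 : (b : ℝ) ≤ F.card * (1 - (θ : ℝ) / W) := by
          have e2 : (F.card : ℝ) * θ ≤ a * W := by exact_mod_cast hc'
          have e3 : (a : ℝ) + b = F.card := by exact_mod_cast hsplit
          have e4 : (F.card : ℝ) * (θ / W) ≤ a := by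
            rw [← mul_div_assoc, div_le_iff₀ hWr]
            exact e2
          linarith
        have e5 : 1 - (θ : ℝ) / W ≤ Real.exp (-((θ : ℝ) / W)) := by
          have := Real.add_one_le_exp (-((θ : ℝ) / W))
          linarith
        have e6 : (b : ℝ) ≤ F.card * Real.exp (-((θ : ℝ) / W)) :=
          e1.trans (mul_le_mul_of_nonneg_left e5 (by positivity))
        calc (b : ℝ) * Real.exp (-((σ : ℝ) * θ / W)) ≤
            F.card * Real.exp (-((θ : ℝ) / W)) * Real.exp (-((σ : ℝ) * θ / W)) :=
              mul_le_mul_of_nonneg_right e6 (Real.exp_pos _).le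
          _ = F.card * Real.exp (-((((σ + 1 : ℕ) : ℝ)) * θ / W)) := by
            rw [mul_assoc, ← Real.exp_add]
            congr 2
            push_cast
            ring)
    refine ⟨insert c S, Finset.insert_subset hcI hS1,
      (Finset.card_insert_le _ _).trans (by omega), ?_⟩
    intro A hA
    by_cases hcA : c ∈ A
    · exact ⟨c, hcA, Finset.mem_insert_self _ _⟩
    · obtain ⟨d, hd, hd'⟩ := hS3 A (Finset.mem_filter.2 ⟨hA, hcA⟩)
      exact ⟨d, hd, Finset.mem_insert_of_mem hd'⟩

lemma cluster_sub (G : SimpleGraph V) (c : V) (r : ℕ) (Z : Finset V) (K L : ℕ)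
    (hK : 1 ≤ K) (hL : 1 ≤ L) (hn : Fintype.card V ≤ K ^ L)
    (hZ : Z ⊆ ball G c (4 * r)) :
    ∃ F : SimpleGraph V, F ≤ G ∧ F.edgeSet.ncard ≤ 3 * K * (ball G c (8 * r)).card ∧
      ∀ z ∈ Z, ∀ z' ∈ Z, ∀ n, D G z z' n →
        D F z z' (n + 56 * (8 ^ L * (K * (Z.card * (Nat.sqrt Z.card + 1))))) := by
  rcases Z.eq_empty_or_nonempty with rfl | hne
  · exact ⟨⊥, bot_le, by simp, by simp⟩
  have hb : 1 ≤ Z.card := Finset.card_pos.2 hne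
  set U := ball G c (8 * r) with hU
  have hZU : Z ⊆ U := hZ.trans (ball_mono c (by omega))
  let S : Finset {x // x ∈ U} := Z.subtype (fun x => x ∈ U)
  have hScard : S.card ≤ Z.card := by
    rw [Finset.card_subtype]
    exact Finset.card_filter_le _ _
  have hsq : Z.card ≤ (Nat.sqrt Z.card + 1) ^ 2 := (Nat.lt_succ_sqrt' _).le
  obtain ⟨H, h1, h2, h3⟩ := subset_spanner (G.comap (fun a : {x // x ∈ U} => (a : V)))
    (K * (Z.card * (Nat.sqrt Z.card + 1))) K L (Nat.mul_pos hK (Nat.mul_pos hb (by omega))) hK hL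
    ((Fintype.card_subtype_le _).trans hn) S (by
      calc S.card ^ 3 * K ^ 2 ≤ Z.card ^ 3 * K ^ 2 :=
            Nat.mul_le_mul_right _ (Nat.pow_le_pow_left hScard 3)
        _ = K ^ 2 * (Z.card ^ 2 * Z.card) := by ring
        _ ≤ K ^ 2 * (Z.card ^ 2 * (Nat.sqrt Z.card + 1) ^ 2) := by gcongr
        _ = _ := by ring)
  refine ⟨H.map (Function.Embedding.subtype (fun x => x ∈ U)), ?_, ?_, ?_⟩
  · rw [SimpleGraph.map_le_iff_le_comap]
    exact h1
  · rw [SimpleGraph.edgeSet_map]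
    refine (Set.ncard_image_le (Set.toFinite _)).trans ?_
    rw [Fintype.card_coe] at h2
    exact h2
  · intro z hz z' hz' n hn'
    have a1 := mem_ball.1 (hZ hz)
    have a2 := mem_ball.1 (hZ hz')
    have a3 := D.to_induce (hZU hz) (hZU hz') (D.restr a1 a2 hn')
    have a4 := h3 _ (Finset.mem_subtype.2 hz) _ (Finset.mem_subtype.2 hz') _ a3
    exact D.map (H' := H.map (Function.Embedding.subtype (fun x => x ∈ U)))
      (fun a : {x // x ∈ U} => (a : V)) (fun a b hab => by
        rw [SimpleGraph.map_adj]
        exact ⟨a, b, hab, rfl, rfl⟩) a4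

lemma list_first {α : Type} (P : α → Prop) (l : List α) :
    (∀ s ∈ l, ¬ P s) ∨ ∃ l1 s l2, l = l1 ++ s :: l2 ∧ P s ∧ ∀ t ∈ l1, ¬ P t := by
  induction l with
  | nil => left; simp
  | cons a l ih =>
    by_cases h : P a
    · exact Or.inr ⟨[], a, l, rfl, h, by simp⟩
    · rcases ih with ih | ⟨l1, s, l2, h1, h2, h3⟩
      · left
        intro s hs
        rcases List.mem_cons.1 hs with rfl | hs
        · exact h
        · exact ih s hs
      · refine Or.inr ⟨a :: l1, s, l2, by rw [h1]; rfl, h2, ?_⟩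
        intro s hs
        rcases List.mem_cons.1 hs with rfl | hs
        · exact h
        · exact h3 s hs

lemma list_last {α : Type} (P : α → Prop) (l : List α) :
    (∀ s ∈ l, ¬ P s) ∨ ∃ l1 s l2, l = l1 ++ s :: l2 ∧ P s ∧ ∀ t ∈ l2, ¬ P t := by
  rcases list_first P l.reverse with h | ⟨l1, s, l2, h1, h2, h3⟩
  · left
    intro s hs
    exact h s (List.mem_reverse.2 hs)
  · refine Or.inr ⟨l2.reverse, s, l1.reverse, ?_, h2, fun t ht => h3 t (List.mem_reverse.1 ht)⟩
    rw [← List.reverse_reverse l, h1]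
    simp

theorem main_nat (G : SimpleGraph V) (R K L σ θ : ℕ) (hR : 1 ≤ R) (hK : 1 ≤ K) (hL : 1 ≤ L)
    (hV : 0 < Fintype.card V)
    (hn : Fintype.card V ≤ K ^ L) (hσ : σ ^ 3 * K ^ 2 ≤ R ^ 2)
    (hθ : ((2 * Fintype.card V ^ 2 * (Fintype.card V + 1) : ℕ) : ℝ) *
      Real.exp (-((σ : ℝ) * θ / (K * Fintype.card V : ℕ))) < 1) :
    ∃ H : SimpleGraph V, H ≤ G ∧ H.edgeSet.ncard ≤ 9 * K ^ 2 * Fintype.card V ∧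
      ∀ x y m, D G x y m → D H x y (m + 104 * (8 ^ L * R) +
        2 * (56 * (8 ^ L * (K * (K * θ / R * (Nat.sqrt (K * θ / R) + 1)))))) := by
  obtain ⟨C⟩ := exists_clustering G R K L hR hL hn
  set M := 8 ^ L * R with hM
  set β := K * θ / R with hβ
  set n := Fintype.card V with hnV
  obtain ⟨T, hTG, hTc, hT⟩ := C.trees
  have hdec : ∀ q : V × V, ∃ l : List (V × V × V), (l.map Prod.fst).Nodup ∧
      (∀ s ∈ l, s.1 ∈ C.I ∧ D G s.1 s.2.1 (4 * C.rad s.1) ∧ D G s.1 s.2.2 (4 * C.rad s.1)) ∧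
      ((∃ n, D G q.1 q.2 n) →
      (∃ m, Dec G q.1 q.2 m l ∧ ∀ n, D G q.1 q.2 n → m ≤ n)) ∧
      l.countP (fun s => ¬ (s.2.1 ∈ C.Z s.1 ∧ s.2.2 ∈ C.Z s.1)) ≤ 2 := by
    intro q
    by_cases h : ∃ n, D G q.1 q.2 n
    · obtain ⟨l, ⟨m, hm, h1⟩, h2, h3, h4⟩ := C.dec q.1 q.2 _ (Nat.find_spec h)
      exact ⟨l, h3, h2, fun _ => ⟨m, h1, fun n hn => hm.trans (Nat.find_min' h hn)⟩, h4⟩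
    · exact ⟨[], by simp, by simp, fun h' => absurd h' h, by simp⟩
  choose l hnd hlI hlD hlB using hdec
  let s : V → ℕ := fun c => (ball G c (8 * C.rad c)).card
  let idx : V × V → ℕ × Bool → Finset V := fun q k =>
    if k.2 then (((l q).take k.1).map Prod.fst).toFinset
    else (((l q).drop k.1).map Prod.fst).toFinset
  let Fam : Finset (Finset V) :=
    ((Finset.univ ×ˢ (Finset.range (n + 1) ×ˢ Finset.univ)).image
      (fun t : (V × V) × (ℕ × Bool) => idx t.1 t.2)).filter (fun A => θ ≤ ∑ c ∈ A, s c)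
  have hFamcard : Fam.card ≤ 2 * n ^ 2 * (n + 1) := by
    refine (Finset.card_filter_le _ _).trans (Finset.card_image_le.trans ?_)
    simp only [Finset.card_product, Finset.card_univ, Fintype.card_prod, Finset.card_range,
      Fintype.card_bool, ← hnV]
    apply le_of_eq
    ring
  have hidxI : ∀ q k, idx q k ⊆ C.I := by
    intro q k c hc
    simp only [idx] at hc
    split_ifs at hc
    · simp only [List.mem_toFinset, List.mem_map] at hc
      obtain ⟨t, ht, rfl⟩ := hc
      exact (hlI q t (List.mem_of_mem_take ht)).1
    · simp only [List.mem_toFinset, List.mem_map] at hc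
      obtain ⟨t, ht, rfl⟩ := hc
      exact (hlI q t (List.mem_of_mem_drop ht)).1
  obtain ⟨S, hSI, hSc, hS⟩ := hitting C.I s (K * n) θ (fun c _ => ball_pos c _) C.sum_le
    (Nat.mul_pos hK hV) σ Fam (by
      intro A hA
      obtain ⟨h1, h2⟩ := Finset.mem_filter.1 hA
      obtain ⟨t, _, rfl⟩ := Finset.mem_image.1 h1
      exact ⟨hidxI _ _, h2⟩) (by
      refine lt_of_le_of_lt ?_ hθ
      exact mul_le_mul_of_nonneg_right (by exact_mod_cast hFamcard) (Real.exp_pos _).le)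
  have hlen : ∀ q, (l q).length ≤ n := by
    intro q
    have := (hnd q).length_le_card
    rwa [List.length_map] at this
  have havoid : ∀ q k b, k ≤ n → (∀ c ∈ idx q (k, b), c ∉ S) → ∑ c ∈ idx q (k, b), s c ≤ θ := by
    intro q k b hk h
    by_contra! hlt
    obtain ⟨c, hc, hc'⟩ := hS (idx q (k, b)) (Finset.mem_filter.2 ⟨Finset.mem_image.2
      ⟨(q, (k, b)), by simp; omega, rfl⟩, hlt.le⟩)
    exact h c hc hc'
  -- in-cluster spanners
  let f : V → ℕ := fun c =>
    56 * (8 ^ L * (K * ((C.Z c).card * (Nat.sqrt (C.Z c).card + 1))))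
  have hF : ∀ c, ∃ F : SimpleGraph V, c ∈ C.I → F ≤ G ∧
      F.edgeSet.ncard ≤ 3 * K * s c ∧
      ∀ z ∈ C.Z c, ∀ z' ∈ C.Z c, ∀ n, D G z z' n → D F z z' (n + f c) := by
    intro c
    by_cases hc : c ∈ C.I
    · obtain ⟨F, h⟩ := cluster_sub G c (C.rad c) (C.Z c) K L hK hL hn (C.Z_ball c hc)
      exact ⟨F, fun _ => h⟩
    · exact ⟨⊥, fun h => absurd h hc⟩
  choose F hF using hF
  obtain ⟨F', hF'G, hF'F, hF'c⟩ := unionGraphs (G := G) C.I F _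
    (fun c hc => ⟨(hF c hc).1, (hF c hc).2.1⟩)
  obtain ⟨Sp, hSpG, hSpc, hSp⟩ := subset_spanner G R K L hR hK hL hn S
    ((Nat.mul_le_mul_right _ (Nat.pow_le_pow_left hSc 3)).trans hσ)
  refine ⟨T ⊔ F' ⊔ Sp, sup_le (sup_le hTG hF'G) hSpG, ?_, ?_⟩
  · rw [SimpleGraph.edgeSet_sup, SimpleGraph.edgeSet_sup]
    refine (Set.ncard_union_le _ _).trans ?_
    have h0 := Set.ncard_union_le T.edgeSet F'.edgeSet
    rw [← Finset.mul_sum] at hF'c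
    have h1 : 3 * K * ∑ c ∈ C.I, s c ≤ 3 * K * (K * n) := Nat.mul_le_mul_left _ C.sum_le
    have h2 : K * n ≤ K ^ 2 * n := Nat.mul_le_mul_right _ (by nlinarith)
    have h3 : 3 * K * (K * n) = 3 * (K ^ 2 * n) := by ring
    have h4 : 3 * K * n = 3 * (K * n) := by ring
    have h5 : 9 * K ^ 2 * n = 9 * (K ^ 2 * n) := by ring
    rw [← hnV] at hTc hSpc
    omega
  set H := T ⊔ F' ⊔ Sp with hH
  have hTH : ∀ c ∈ C.I, ∀ z, D G c z (4 * C.rad c) → D H c z (4 * M) := fun c hc z hz =>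
    ((hT c hc z hz).le le_sup_left).le le_sup_left
  set E0 := 56 * (8 ^ L * (K * (β * (Nat.sqrt β + 1)))) with hE0
  have hseg : ∀ q, ∀ t ∈ l q, ∀ k, D G t.2.1 t.2.2 k → D H t.2.1 t.2.2 (k +
      (if ¬ (t.2.1 ∈ C.Z t.1 ∧ t.2.2 ∈ C.Z t.1) then 8 * M else f t.1)) := by
    intro q t ht k hk
    obtain ⟨htI, ht1, ht2⟩ := hlI q t ht
    by_cases hbad : t.2.1 ∈ C.Z t.1 ∧ t.2.2 ∈ C.Z t.1
    · rw [if_neg (not_not.2 hbad)]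
      exact ((((hF t.1 htI).2.2 _ hbad.1 _ hbad.2 k hk).le (hF'F _ htI)).le le_sup_right).le
        le_sup_left
    · rw [if_pos hbad]
      exact ((hTH _ htI _ ht1).symm.trans (hTH _ htI _ ht2)).mono (by omega)
  have hsub : ∀ q l', List.Sublist l' (l q) →
      ∑ c ∈ (l'.map Prod.fst).toFinset, s c ≤ θ → ∀ x y n, Dec G x y n l' →
      D H x y (n + 16 * M + E0) := by
    intro q l' hl' hw x y n' hD
    have := hD.transfer (H := H) _ (fun t ht => hseg q t (hl'.subset ht))
    refine this.mono ?_
    have h5 : (l'.map (fun s => if ¬ (s.2.1 ∈ C.Z s.1 ∧ s.2.2 ∈ C.Z s.1) then 8 * M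
          else f s.1)).sum ≤
        8 * M * l'.countP (fun s => ¬ (s.2.1 ∈ C.Z s.1 ∧ s.2.2 ∈ C.Z s.1)) +
        (l'.map (fun s => f s.1)).sum := by
      convert sum_err l' (fun s => ¬ (s.2.1 ∈ C.Z s.1 ∧ s.2.2 ∈ C.Z s.1)) f (8 * M)
    have h6 := (hl'.countP_le (p := fun s => ¬ (s.2.1 ∈ C.Z s.1 ∧ s.2.2 ∈ C.Z s.1))).trans (hlB q)
    have h8 := Nat.mul_le_mul_left (8 * M) h6
    have hnd' : (l'.map Prod.fst).Nodup := (hl'.map _).nodup (hnd q)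
    have h9 : (l'.map (fun s => f s.1)).sum = ∑ c ∈ (l'.map Prod.fst).toFinset, f c := by
      rw [List.sum_toFinset _ hnd', List.map_map]
      rfl
    have hI' : ∀ c ∈ (l'.map Prod.fst).toFinset, c ∈ C.I := by
      intro c hc
      simp only [List.mem_toFinset, List.mem_map] at hc
      obtain ⟨t, ht, rfl⟩ := hc
      exact (hlI q t (hl'.subset ht)).1
    generalize (l'.map Prod.fst).toFinset = J at *
    have hbsum : ∑ c ∈ J, (C.Z c).card ≤ β := by
      rw [hβ, Nat.le_div_iff_mul_le hR, mul_comm, Finset.mul_sum]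
      refine (Finset.sum_le_sum (fun c hc => C.card_Z c (hI' c hc))).trans ?_
      rw [← Finset.mul_sum]
      exact Nat.mul_le_mul_left _ hw
    have h10 : ∑ c ∈ J, f c ≤ E0 := by
      calc ∑ c ∈ J, f c ≤ ∑ c ∈ J, (C.Z c).card * (56 * (8 ^ L * (K * (Nat.sqrt β + 1)))) := by
            refine Finset.sum_le_sum (fun c hc => ?_)
            have hle : (C.Z c).card ≤ β :=
              (Finset.single_le_sum (f := fun c => (C.Z c).card) (fun _ _ => Nat.zero_le _)
                hc).trans hbsum
            have hsq := Nat.sqrt_le_sqrt hle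
            calc f c = (C.Z c).card * (56 * (8 ^ L * (K * (Nat.sqrt (C.Z c).card + 1)))) := by
                  simp only [f]; ring
              _ ≤ _ := by gcongr
        _ = (∑ c ∈ J, (C.Z c).card) * (56 * (8 ^ L * (K * (Nat.sqrt β + 1)))) := by
            rw [Finset.sum_mul]
        _ ≤ β * (56 * (8 ^ L * (K * (Nat.sqrt β + 1)))) := Nat.mul_le_mul_right _ hbsum
        _ = E0 := by rw [hE0]; ring
    omega
  have hpre : ∀ q l1 l2, l q = l1 ++ l2 → (∀ t ∈ l1, t.1 ∉ S) → ∀ x y n, Dec G x y n l1 →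
      D H x y (n + 16 * M + E0) := by
    intro q l1 l2 h12 hav
    apply hsub q l1 (by rw [h12]; exact List.sublist_append_left _ _)
    have h1 : idx q (l1.length, true) = (l1.map Prod.fst).toFinset := by
      simp [idx, h12]
    rw [← h1]
    apply havoid
    · have := hlen q
      rw [h12, List.length_append] at this
      omega
    · intro c hc
      rw [h1] at hc
      simp only [List.mem_toFinset, List.mem_map] at hc
      obtain ⟨t, ht, rfl⟩ := hc
      exact hav t ht
  have hsuf : ∀ q l1 l2, l q = l1 ++ l2 → (∀ t ∈ l2, t.1 ∉ S) → ∀ x y n, Dec G x y n l2 →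
      D H x y (n + 16 * M + E0) := by
    intro q l1 l2 h12 hav
    apply hsub q l2 (by rw [h12]; exact List.sublist_append_right _ _)
    have h1 : idx q (l1.length, false) = (l2.map Prod.fst).toFinset := by
      simp [idx, h12]
    rw [← h1]
    apply havoid
    · have := hlen q
      rw [h12, List.length_append] at this
      omega
    · intro c hc
      rw [h1] at hc
      simp only [List.mem_toFinset, List.mem_map] at hc
      obtain ⟨t, ht, rfl⟩ := hc
      exact hav t ht
  intro x y m hxy
  obtain ⟨m0, hm0, hmin⟩ := hlD (x, y) ⟨m, hxy⟩
  have hm0m := hmin m hxy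
  rcases list_first (fun t : V × V × V => t.1 ∈ S) (l (x, y)) with hno | ⟨l1, t, l2, h12, htS, hl1⟩
  · have := hpre (x, y) (l (x, y)) [] (by simp) hno _ _ _ hm0
    exact this.mono (by omega)
  have htl : t ∈ l (x, y) := by rw [h12]; simp
  obtain ⟨htI, ht1, ht2⟩ := hlI _ t htl
  have hrt := C.rad_le _ htI
  rw [h12] at hm0
  obtain ⟨n1, k, n2, g1, g2, g3, g4⟩ := Dec.split l1 hm0
  have a1 := hpre (x, y) l1 _ h12 hl1 _ _ _ g1
  have a2 := a1.trans (hTH _ htI _ ht1).symm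
  rcases list_last (fun t : V × V × V => t.1 ∈ S) l2 with hno | ⟨l3, t', l4, h34, htS', hl4⟩
  · have a3 := hsuf (x, y) (l1 ++ [t]) l2 (by simp [h12]) hno _ _ _ g3
    exact ((a2.trans (hTH _ htI _ ht2)).trans a3).mono (by omega)
  have htl' : t' ∈ l (x, y) := by rw [h12, h34]; simp
  obtain ⟨htI', ht1', ht2'⟩ := hlI _ t' htl'
  have hrt' := C.rad_le _ htI'
  rw [h34] at g3
  obtain ⟨n3, k', n4, f1, f2, f3, f4⟩ := Dec.split l3 g3
  have a3 := hsuf (x, y) (l1 ++ t :: l3 ++ [t']) l4 (by simp [h12, h34]) hl4 _ _ _ f3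
  have a4 := (hSp _ htS _ htS' _ (((ht1.trans g2).trans f1.toD).trans ht1'.symm)).le
    (le_sup_right : Sp ≤ H)
  exact (((a2.trans a4).trans (hTH _ htI' _ ht2')).trans a3).mono (by omega)

end mainnat
end Spanner


namespace Spanner
open scoped Classical

section final
variable {V : Type} [Fintype V]

lemma forest (G : SimpleGraph V) : ∃ H : SimpleGraph V, H ≤ G ∧
    H.edgeSet.ncard ≤ Fintype.card V ∧ ∀ u v, G.Reachable u v → H.Reachable u v := by
  let rep : V → V := fun v => (G.connectedComponentMk v).out
  have hrep : ∀ v, G.Reachable (rep v) v := fun v =>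
    SimpleGraph.ConnectedComponent.exact (Quot.out_eq (G.connectedComponentMk v))
  have hrep' : ∀ u v, G.Reachable u v → rep u = rep v := by
    intro u v h
    simp only [rep]
    rw [SimpleGraph.ConnectedComponent.sound h]
  have hreprep : ∀ v, rep (rep v) = rep v := fun v => hrep' _ _ (hrep v)
  choose T h1 h2 h3 using fun c => tree G c (Fintype.card V)
  obtain ⟨F, g1, g2, g3⟩ := unionGraphs (G := G) (Finset.univ.image rep) T _
    (fun c _ => ⟨h1 c, h2 c⟩)
  have key : ∀ v, F.Reachable (rep v) v := by
    intro v
    obtain ⟨p, hp, _⟩ := (hrep v).exists_path_of_dist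
    obtain ⟨q, _⟩ := (h3 (rep v) _ le_rfl v ⟨p, hp.length_lt.le⟩).le
      (g2 _ (Finset.mem_image_of_mem _ (Finset.mem_univ _)))
    exact ⟨q⟩
  refine ⟨F, g1, g3.trans ?_, ?_⟩
  · have : Fintype.card V = ∑ c ∈ Finset.univ.image rep,
        (Finset.univ.filter (fun v => rep v = c)).card := by
      rw [← Finset.card_univ]
      exact Finset.card_eq_sum_card_image rep Finset.univ
    rw [this]
    refine Finset.sum_le_sum (fun c hc => Finset.card_le_card ?_)
    intro v hv
    obtain ⟨w, _, rfl⟩ := Finset.mem_image.1 hc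
    obtain ⟨p, _⟩ := mem_ball.1 hv
    simp only [Finset.mem_filter, Finset.mem_univ, true_and]
    rw [← hreprep w]
    exact (hrep' _ _ ⟨p⟩).symm
  · intro u v h
    have := hrep' u v h
    exact (key u).symm.trans (this ▸ key v)

lemma edges_le (G : SimpleGraph V) :
    G.edgeSet.ncard ≤ (Fintype.card V).choose 2 := by
  rw [← SimpleGraph.coe_edgeFinset, Set.ncard_coe_finset]
  exact SimpleGraph.card_edgeFinset_le_card_choose_two

lemma dist_le_card {G : SimpleGraph V} {u v : V} (h : G.Reachable u v) :
    G.dist u v ≤ Fintype.card V := by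
  obtain ⟨p, hp, h'⟩ := h.exists_path_of_dist
  rw [← h']
  exact hp.length_lt.le

lemma arith_beta (n R K σ t θ : ℕ) (hR : 1 ≤ R) (ht : 1 ≤ t) (h1 : R ^ 2 ≤ 8 * (σ ^ 3 * K ^ 2))
    (h2 : n ^ 3 ≤ R ^ 7) (h3 : σ * θ ≤ 2 * (K * n * t)) :
    K * θ / R * (Nat.sqrt (K * θ / R) + 1) ≤ 16 * (K ^ 4 * t ^ 2 * R) := by
  have hβ : K * θ / R * R ≤ K * θ := Nat.div_mul_le_self _ _
  generalize K * θ / R = β at *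
  have e1 : σ * (β * R) ≤ 2 * K ^ 2 * n * t := by
    calc σ * (β * R) ≤ σ * (K * θ) := Nat.mul_le_mul_left _ hβ
      _ = K * (σ * θ) := by ring
      _ ≤ K * (2 * (K * n * t)) := Nat.mul_le_mul_left _ h3
      _ = _ := by ring
  have e2 : (σ * (β * R)) ^ 3 ≤ (2 * K ^ 2 * n * t) ^ 3 := Nat.pow_le_pow_left e1 3
  have e3 : R ^ 5 * β ^ 3 ≤ R ^ 5 * (64 * K ^ 8 * t ^ 3 * R ^ 2) := by
    calc R ^ 5 * β ^ 3 = R ^ 2 * (β ^ 3 * R ^ 3) := by ring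
      _ ≤ 8 * (σ ^ 3 * K ^ 2) * (β ^ 3 * R ^ 3) := Nat.mul_le_mul_right _ h1
      _ = 8 * K ^ 2 * (σ * (β * R)) ^ 3 := by ring
      _ ≤ 8 * K ^ 2 * (2 * K ^ 2 * n * t) ^ 3 := Nat.mul_le_mul_left _ e2
      _ = 64 * K ^ 8 * t ^ 3 * n ^ 3 := by ring
      _ ≤ 64 * K ^ 8 * t ^ 3 * R ^ 7 := Nat.mul_le_mul_left _ h2
      _ = _ := by ring
  have e4 : β ^ 3 ≤ 64 * K ^ 8 * t ^ 3 * R ^ 2 := Nat.le_of_mul_le_mul_left e3 (by positivity)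
  have e5 : (β * Nat.sqrt β) ^ 2 ≤ (8 * (K ^ 4 * t ^ 2 * R)) ^ 2 := by
    calc (β * Nat.sqrt β) ^ 2 = β ^ 2 * (Nat.sqrt β) ^ 2 := by ring
      _ ≤ β ^ 2 * β := Nat.mul_le_mul_left _ (Nat.sqrt_le' _)
      _ = β ^ 3 := by ring
      _ ≤ _ := e4
      _ ≤ 64 * K ^ 8 * t ^ 4 * R ^ 2 := by gcongr; omega
      _ = _ := by ring
  have e6 : β * Nat.sqrt β ≤ 8 * (K ^ 4 * t ^ 2 * R) :=
    (Nat.pow_le_pow_iff_left (by norm_num)).1 e5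
  have e7 : β ≤ β * Nat.sqrt β := by
    rcases Nat.eq_zero_or_pos β with h | h
    · rw [h]; simp
    · exact Nat.le_mul_of_pos_right _ (Nat.sqrt_pos.2 h)
  rw [mul_add, mul_one]
  omega

/-- The main estimate with real parameters. -/
lemma main_real (G : SimpleGraph V) (ε : ℝ) (hε : 0 < ε) (hε1 : ε < 1) (k : ℕ)
    (hk : 3 ≤ k * ε) (hn : 2 ^ 21 * (2 ^ k) ^ 5 ≤ Fintype.card V) :
    ∃ H : SimpleGraph V, H ≤ G ∧ H.edgeSet.ncard ≤ 9 * (2 ^ k) ^ 2 * Fintype.card V ∧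
      ∀ x y m, D G x y m → ∃ m', D H x y m' ∧ (m' : ℝ) ≤ m + 2 ^ 21 * (2 ^ k) ^ 5 *
        (Fintype.card V : ℝ) ^ ((3 : ℝ) / 7 + ε) * (Real.log (Fintype.card V)) ^ 2 := by
  set n := Fintype.card V with hnV
  have hk3 : 3 ≤ k := by
    have : (3 : ℝ) ≤ k := by nlinarith [(Nat.cast_nonneg k : (0 : ℝ) ≤ k)]
    exact_mod_cast this
  set K := 2 ^ k with hK
  have hK1 : 1 < K := Nat.one_lt_two_pow (by omega)
  have hK5 : 1 ≤ K ^ 5 := Nat.one_le_pow _ _ (by omega)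
  have hn21 : 2 ^ 21 ≤ n := le_trans (by omega) hn
  have hKn : K ^ 5 ≤ n := le_trans (by omega) hn
  have hn0 : (0 : ℝ) < n := by exact_mod_cast (by omega : 0 < n)
  have hn1 : (1 : ℝ) ≤ n := by exact_mod_cast (by omega : 1 ≤ n)
  -- R
  set w : ℝ := (n : ℝ) ^ ((3 : ℝ) / 7) with hw
  have hw1 : 1 ≤ w := Real.one_le_rpow hn1 (by norm_num)
  set R := ⌈w⌉₊ with hR
  have hRw : w ≤ R := Nat.le_ceil _
  have hRw2 : (R : ℝ) ≤ 2 * w := by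
    have := Nat.ceil_lt_add_one (by linarith : 0 ≤ w)
    linarith
  have hR1 : 1 ≤ R := by exact_mod_cast hw1.trans hRw
  have hw7 : w ^ 7 = (n : ℝ) ^ 3 := by
    rw [hw, ← Real.rpow_natCast, ← Real.rpow_mul hn0.le, ← Real.rpow_natCast]
    norm_num
  have hR7 : n ^ 3 ≤ R ^ 7 := by
    have : (n : ℝ) ^ 3 ≤ (R : ℝ) ^ 7 := by
      rw [← hw7]
      exact pow_le_pow_left₀ (by linarith) hRw 7
    exact_mod_cast this
  have hRn : R ≤ n := by
    apply Nat.ceil_le.2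
    calc w ≤ (n : ℝ) ^ (1 : ℝ) := Real.rpow_le_rpow_of_exponent_le hn1 (by norm_num)
      _ = n := Real.rpow_one _
  have hKR : K ≤ R := by
    by_contra! hlt
    have h1 : R ^ 7 ≤ K ^ 7 := Nat.pow_le_pow_left hlt.le 7
    have h2 : (K ^ 5) ^ 3 ≤ n ^ 3 := Nat.pow_le_pow_left hKn 3
    have h3 : K ^ 7 < (K ^ 5) ^ 3 := by
      have h4 : K ^ 7 < K ^ 15 := Nat.pow_lt_pow_right hK1 (by norm_num)
      have h5 : (K ^ 5) ^ 3 = K ^ 15 := by ring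
      rw [h5]
      exact h4
    omega
  -- σ
  obtain ⟨σ, hσ1, hσ2, hσ3⟩ : ∃ σ, 1 ≤ σ ∧ σ ^ 3 * K ^ 2 ≤ R ^ 2 ∧
      R ^ 2 ≤ 8 * (σ ^ 3 * K ^ 2) := by
    let P : ℕ → Prop := fun σ => σ ^ 3 * K ^ 2 ≤ R ^ 2
    have hP1 : P 1 := by
      simp only [P, one_pow, one_mul]
      exact Nat.pow_le_pow_left hKR 2
    have hR2 : 1 ≤ R ^ 2 := Nat.one_le_pow _ _ hR1
    have h1 := Nat.findGreatest_spec (n := R ^ 2) hR2 hP1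
    have h2 := Nat.le_findGreatest (n := R ^ 2) hR2 hP1
    have h3 := Nat.findGreatest_is_greatest (P := P) (n := R ^ 2) (Nat.lt_succ_self _)
    set σ := Nat.findGreatest P (R ^ 2)
    refine ⟨σ, h2, h1, ?_⟩
    have h4 : ¬ P (σ + 1) := by
      by_cases h : σ + 1 ≤ R ^ 2
      · exact h3 h
      · intro h5
        have h5' : (σ + 1) ^ 3 * K ^ 2 ≤ R ^ 2 := h5
        have h6 : σ + 1 ≤ (σ + 1) ^ 3 := Nat.le_self_pow (by norm_num) _
        have h7 : (σ + 1) ^ 3 ≤ (σ + 1) ^ 3 * K ^ 2 := Nat.le_mul_of_pos_right _ (by positivity)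
        omega
    have h5 : R ^ 2 < (σ + 1) ^ 3 * K ^ 2 := not_le.1 h4
    calc R ^ 2 ≤ (σ + 1) ^ 3 * K ^ 2 := h5.le
      _ ≤ (2 * σ) ^ 3 * K ^ 2 := by gcongr; omega
      _ = _ := by ring
  have hσn : σ ≤ n := by
    by_contra! hlt
    have h1 : R ^ 2 ≤ n ^ 2 := Nat.pow_le_pow_left hRn 2
    have h2 : n ^ 2 < σ ^ 2 := Nat.pow_lt_pow_left hlt (by norm_num)
    have h3 : σ ^ 2 ≤ σ ^ 3 := Nat.pow_le_pow_right hσ1 (by norm_num)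
    have h4 : σ ^ 3 ≤ σ ^ 3 * K ^ 2 := Nat.le_mul_of_pos_right _ (by positivity)
    omega
  -- logarithm
  have hlog1 : 1 ≤ Real.log n := by
    rw [Real.le_log_iff_exp_le hn0]
    have h1 := Real.exp_one_lt_d9
    have h2 : (2 ^ 21 : ℝ) ≤ n := by exact_mod_cast hn21
    linarith
  set t := ⌈3 * Real.log n⌉₊ + 4 with ht
  have ht1 : 3 * Real.log n + 4 ≤ t := by
    rw [ht]; push_cast
    linarith [Nat.le_ceil (3 * Real.log n)]
  have ht2 : (t : ℝ) ≤ 8 * Real.log n := by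
    rw [ht]; push_cast
    linarith [Nat.ceil_lt_add_one (by linarith : 0 ≤ 3 * Real.log n)]
  have htpos : 1 ≤ t := by omega
  have hexp : ((2 * n ^ 2 * (n + 1) : ℕ) : ℝ) < Real.exp t := by
    have h1 : Real.exp (3 * Real.log n + 4) ≤ Real.exp t := Real.exp_le_exp.2 ht1
    have h2 : Real.exp (3 * Real.log n + 4) = (n : ℝ) ^ 3 * Real.exp 4 := by
      rw [Real.exp_add]
      congr 1
      have : (3 : ℝ) * Real.log n = Real.log ((n : ℝ) ^ 3) := by rw [Real.log_pow]; norm_num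
      rw [this, Real.exp_log (by positivity)]
    have h3 := Real.add_one_le_exp (4 : ℝ)
    have h4 : (0 : ℝ) < (n : ℝ) ^ 3 := by positivity
    have h5 : (n : ℝ) ^ 2 ≤ (n : ℝ) ^ 3 := pow_le_pow_right₀ hn1 (by norm_num)
    push_cast
    nlinarith
  -- θ
  set a := K * n * t with ha
  have hna : n ≤ a := by
    rw [ha]
    calc n ≤ K * n := Nat.le_mul_of_pos_left _ (by omega)
      _ ≤ K * n * t := Nat.le_mul_of_pos_right _ htpos
  set θ := a / σ + 1 with hθ
  have hθ1 : a ≤ σ * θ := by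
    have := Nat.lt_mul_div_succ a hσ1
    exact this.le
  have hθ2 : σ * θ ≤ 2 * a := by
    rw [hθ, mul_add, mul_one]
    have := Nat.mul_div_le a σ
    omega
  set L := Nat.clog K n with hL
  have hL1 : 1 ≤ L := Nat.clog_pos hK1 (by omega)
  have hnL : n ≤ K ^ L := Nat.le_pow_clog hK1 n
  have hKL : K ^ (L - 1) < n := Nat.pow_pred_clog_lt_self hK1 (by omega)
  have h8L : ((8 ^ L : ℕ) : ℝ) ≤ 8 * (n : ℝ) ^ ε := by
    have h1 : ((8 ^ L : ℕ) : ℝ) = 8 * 8 ^ (L - 1) := by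
      push_cast
      rw [← pow_succ', Nat.sub_add_cancel hL1]
    have h2 : (8 : ℝ) ^ (L - 1) ≤ (n : ℝ) ^ ε := by
      calc (8 : ℝ) ^ (L - 1) = (2 : ℝ) ^ ((3 : ℝ) * (L - 1 : ℕ)) := by
            rw [Real.rpow_mul (by norm_num), Real.rpow_natCast]
            norm_num
        _ ≤ (2 : ℝ) ^ ((k * ε) * (L - 1 : ℕ)) := by
            apply Real.rpow_le_rpow_of_exponent_le (by norm_num)
            exact mul_le_mul_of_nonneg_right hk (by positivity)
        _ = ((K ^ (L - 1) : ℕ) : ℝ) ^ ε := by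
            rw [hK]
            push_cast
            rw [← Real.rpow_natCast, ← Real.rpow_natCast, ← Real.rpow_mul (by norm_num),
              ← Real.rpow_mul (by norm_num)]
            congr 1
            ring
        _ ≤ (n : ℝ) ^ ε := by
            apply Real.rpow_le_rpow (by positivity) _ hε.le
            exact_mod_cast hKL.le
    rw [h1]
    linarith
  obtain ⟨H, hH1, hH2, hH3⟩ := main_nat G R K L σ θ hR1 hK1.le hL1 (by omega) hnL hσ2 (by
    rw [Real.exp_neg, ← div_eq_mul_inv, div_lt_one (Real.exp_pos _)]
    refine hexp.trans_le (Real.exp_le_exp.2 ?_)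
    have hp : (0 : ℝ) < (K * n : ℕ) := by
      exact_mod_cast Nat.mul_pos (by omega) (by omega)
    rw [le_div_iff₀ hp]
    have : t * (K * n) ≤ σ * θ := by
      calc t * (K * n) = a := by rw [ha]; ring
        _ ≤ _ := hθ1
    exact_mod_cast this)
  refine ⟨H, hH1, hH2, ?_⟩
  intro x y m hxy
  refine ⟨_, hH3 x y m hxy, ?_⟩
  have hB := arith_beta n R K σ t θ hR1 htpos hσ3 hR7 hθ2
  have hE : 104 * (8 ^ L * R) +
      2 * (56 * (8 ^ L * (K * (K * θ / R * (Nat.sqrt (K * θ / R) + 1))))) ≤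
      2 ^ 11 * (K ^ 5 * t ^ 2 * (8 ^ L * R)) := by
    have h1 : K * (K * θ / R * (Nat.sqrt (K * θ / R) + 1)) ≤ K * (16 * (K ^ 4 * t ^ 2 * R)) :=
      Nat.mul_le_mul_left _ hB
    have h2 := Nat.mul_le_mul_left (8 ^ L) h1
    have h3 : 8 ^ L * (K * (16 * (K ^ 4 * t ^ 2 * R))) = 16 * (K ^ 5 * t ^ 2 * (8 ^ L * R)) := by
      ring
    have h4 : 8 ^ L * R ≤ K ^ 5 * t ^ 2 * (8 ^ L * R) :=
      Nat.le_mul_of_pos_left _ (by positivity)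
    omega
  have hE' : ((104 * (8 ^ L * R) +
      2 * (56 * (8 ^ L * (K * (K * θ / R * (Nat.sqrt (K * θ / R) + 1))))) : ℕ) : ℝ) ≤
      2 ^ 11 * ((K : ℝ) ^ 5 * (t : ℝ) ^ 2 * (((8 ^ L : ℕ) : ℝ) * R)) := by
    exact_mod_cast hE
  have hfin : 2 ^ 11 * ((K : ℝ) ^ 5 * (t : ℝ) ^ 2 * (((8 ^ L : ℕ) : ℝ) * R)) ≤
      2 ^ 11 * ((K : ℝ) ^ 5 * (8 * Real.log n) ^ 2 * ((8 * (n : ℝ) ^ ε) * (2 * w))) := by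
    gcongr
  have hpow : (n : ℝ) ^ ((3 : ℝ) / 7 + ε) = w * (n : ℝ) ^ ε := Real.rpow_add hn0 _ _
  have hKr : ((2 : ℝ) ^ k) = (K : ℝ) := by rw [hK]; push_cast; rfl
  rw [hpow, hKr]
  rw [add_assoc, Nat.cast_add]
  have := hE'.trans hfin
  refine (add_le_add_right this _).trans (le_of_eq ?_)
  ring

end final
end Spanner

/-- For every `ε > 0` there is a constant `C` of the form `2^(O(1/ε))` such
that every finite simple graph `G` on `n ≥ 2` vertices has a subgraph `H ⊆ G`
with at most `C · n` edges such that for every pair of vertices connected in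
`G`, `dist_H(u,v) ≤ dist_G(u,v) + C · n^(3/7 + ε) · (log n)^C`. -/
theorem linear_size_spanner_three_sevenths :
    ∃ c : ℝ, 0 < c ∧
      ∀ ε : ℝ, 0 < ε →
        ∃ C : ℝ, 0 < C ∧ C ≤ (2 : ℝ) ^ (c / ε) ∧
          ∀ (V : Type) [Fintype V] (G : SimpleGraph V), 2 ≤ Fintype.card V →
            ∃ H : SimpleGraph V, H ≤ G ∧
              (H.edgeSet.ncard : ℝ) ≤ C * (Fintype.card V : ℝ) ∧
              ∀ u v : V, G.Reachable u v →
                H.Reachable u v ∧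
                (H.dist u v : ℝ) ≤ (G.dist u v : ℝ) +
                  C * (Fintype.card V : ℝ) ^ ((3 : ℝ) / 7 + ε) *
                    (Real.log (Fintype.card V)) ^ C := by
  refine ⟨41, by norm_num, fun ε hε => ?_⟩
  by_cases hε1 : ε < 1
  · set k := ⌈3 / ε⌉₊ with hk
    have hk1 : 3 ≤ k * ε := by
      have := Nat.le_ceil (3 / ε)
      rwa [div_le_iff₀ hε] at this
    have hk2 : (k : ℝ) ≤ 4 / ε := by
      have h1 := Nat.ceil_lt_add_one (by positivity : 0 ≤ 3 / ε)
      have h2 : 1 ≤ 1 / ε := by rw [le_div_iff₀ hε]; linarith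
      have h3 : 4 / ε = 3 / ε + 1 / ε := by ring
      linarith
    refine ⟨2 ^ 21 * (2 ^ k) ^ 5, by positivity, ?_, ?_⟩
    · have h1 : (2 : ℝ) ^ 21 * (2 ^ k) ^ 5 = (2 : ℝ) ^ ((21 + 5 * k : ℕ) : ℝ) := by
        rw [Real.rpow_natCast]
        ring
      rw [h1]
      apply Real.rpow_le_rpow_of_exponent_le (by norm_num)
      push_cast
      have h2 : 1 ≤ 1 / ε := by rw [le_div_iff₀ hε]; linarith
      have h3 : 41 / ε = 21 * (1 / ε) + 5 * (4 / ε) := by ring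
      linarith
    · intro V _ G hV
      have hlog : 0 ≤ Real.log (Fintype.card V) := Real.log_natCast_nonneg _
      have hKr : (1 : ℝ) ≤ 2 ^ k := one_le_pow₀ (by norm_num)
      by_cases hn : 2 ^ 21 * (2 ^ k) ^ 5 ≤ Fintype.card V
      · obtain ⟨H, h1, h2, h3⟩ := Spanner.main_real G ε hε hε1 k hk1 hn
        refine ⟨H, h1, ?_, ?_⟩
        · have h4 : (H.edgeSet.ncard : ℝ) ≤ 9 * (2 ^ k) ^ 2 * Fintype.card V := by
            exact_mod_cast h2
          refine h4.trans ?_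
          gcongr
          · norm_num
          · norm_num
        · intro u v huv
          obtain ⟨p, hp⟩ := huv.exists_walk_length_eq_dist
          obtain ⟨m', ⟨q, hq⟩, hm'⟩ := h3 u v (G.dist u v) ⟨p, hp.le⟩
          refine ⟨⟨q⟩, ?_⟩
          have h5 : (H.dist u v : ℝ) ≤ m' := by
            exact_mod_cast (SimpleGraph.dist_le q).trans hq
          refine h5.trans (hm'.trans ?_)
          have h6 : (Real.log (Fintype.card V)) ^ 2 ≤
              (Real.log (Fintype.card V)) ^ ((2 : ℝ) ^ 21 * (2 ^ k) ^ 5) := by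
            rw [← Real.rpow_natCast]
            apply Real.rpow_le_rpow_of_exponent_le
            · have hn21 : 2 ^ 21 ≤ Fintype.card V :=
                (Nat.le_mul_of_pos_right _ (by positivity)).trans hn
              have hn0 : (0 : ℝ) < Fintype.card V := by exact_mod_cast (by omega)
              rw [Real.le_log_iff_exp_le hn0]
              have h1 := Real.exp_one_lt_d9
              have h2 : (2 ^ 21 : ℝ) ≤ Fintype.card V := by exact_mod_cast hn21
              linarith
            · have : (1 : ℝ) ≤ (2 ^ k) ^ 5 := one_le_pow₀ hKr
              push_cast
              linarith
          gcongr
      · refine ⟨G, le_rfl, ?_, fun u v h => ⟨h, le_add_of_nonneg_right (by positivity)⟩⟩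
        have h1 : G.edgeSet.ncard ≤ 2 ^ 21 * (2 ^ k) ^ 5 * Fintype.card V := by
          refine (Spanner.edges_le G).trans ((Nat.choose_le_pow _ _).trans ?_)
          rw [pow_two]
          exact Nat.mul_le_mul_right _ (not_le.1 hn).le
        exact_mod_cast h1
  · have hε1 := not_lt.1 hε1
    refine ⟨1, one_pos, Real.one_le_rpow (by norm_num) (by positivity), ?_⟩
    intro V _ G hV
    have hlog : 0 ≤ Real.log (Fintype.card V) := Real.log_natCast_nonneg _
    by_cases h2 : Fintype.card V = 2
    · refine ⟨G, le_rfl, ?_, fun u v h => ⟨h, le_add_of_nonneg_right (by positivity)⟩⟩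
      have := Spanner.edges_le G
      rw [h2] at this ⊢
      have h3 : G.edgeSet.ncard ≤ 2 := this.trans (by decide)
      rw [one_mul]
      exact_mod_cast h3
    · obtain ⟨H, h1, h3, h4⟩ := Spanner.forest G
      refine ⟨H, h1, by rw [one_mul]; exact_mod_cast h3, fun u v h => ⟨h4 u v h, ?_⟩⟩
      have h5 : (H.dist u v : ℝ) ≤ Fintype.card V := by exact_mod_cast Spanner.dist_le_card (h4 u v h)
      have hn3 : (3 : ℝ) ≤ Fintype.card V := by exact_mod_cast (by omega : 3 ≤ Fintype.card V)
      have h6 : (Fintype.card V : ℝ) ≤ (Fintype.card V : ℝ) ^ ((3 : ℝ) / 7 + ε) := by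
        conv_lhs => rw [← Real.rpow_one (Fintype.card V : ℝ)]
        exact Real.rpow_le_rpow_of_exponent_le (by linarith) (by linarith)
      have h7 : 1 ≤ Real.log (Fintype.card V) := by
        rw [Real.le_log_iff_exp_le (by linarith)]
        have := Real.exp_one_lt_d9
        linarith
      rw [one_mul, Real.rpow_one]
      have h8 : (0 : ℝ) ≤ G.dist u v := Nat.cast_nonneg _
      nlinarith
end

section
/- There exists an absolute constant C such that: for every finite undirected unweighted simple graph G on n vertices (n ≥ 2) and every real d with 1 < d < n, there is a subgraph G' ⊆ G with at most C · n · d edges such that for every pair of vertices u, v connected in G, dist_{G'}(u,v) ≤ dist_G(u,v) + C · (n/d) · log n. -/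
open Classical in
/-- Walk of length at most `k` from `a` to `b` in the graph with edge set `F`. -/
def SpWk {V : Type} (F : Finset (Sym2 V)) (a b : V) (k : ℕ) : Prop :=
  ∃ p : (SimpleGraph.fromEdgeSet (F : Set (Sym2 V))).Walk a b, p.length ≤ k

theorem SpWk.refl {V : Type} (F : Finset (Sym2 V)) (a : V) (k : ℕ) : SpWk F a a k :=
  ⟨SimpleGraph.Walk.nil, by simp⟩

theorem SpWk.mono {V : Type} {F F' : Finset (Sym2 V)} {a b : V} {k k' : ℕ}
    (h : SpWk F a b k) (hF : F ⊆ F') (hk : k ≤ k') : SpWk F' a b k' := by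
  obtain ⟨p, hp⟩ := h
  have hle : SimpleGraph.fromEdgeSet (F : Set (Sym2 V)) ≤
      SimpleGraph.fromEdgeSet (F' : Set (Sym2 V)) :=
    SimpleGraph.fromEdgeSet_mono (by exact_mod_cast hF)
  exact ⟨p.mapLe hle, by simpa using hp.trans hk⟩

theorem SpWk.symm {V : Type} {F : Finset (Sym2 V)} {a b : V} {k : ℕ}
    (h : SpWk F a b k) : SpWk F b a k := by
  obtain ⟨p, hp⟩ := h
  exact ⟨p.reverse, by simpa using hp⟩

theorem SpWk.trans {V : Type} {F : Finset (Sym2 V)} {a b c : V} {k l : ℕ}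
    (h : SpWk F a b k) (h' : SpWk F b c l) : SpWk F a c (k + l) := by
  obtain ⟨p, hp⟩ := h
  obtain ⟨q, hq⟩ := h'
  exact ⟨p.append q, by rw [SimpleGraph.Walk.length_append]; omega⟩

theorem SpWk.edge {V : Type} {F : Finset (Sym2 V)} {a b : V}
    (h : s(a, b) ∈ F) (hab : a ≠ b) : SpWk F a b 1 := by
  have : (SimpleGraph.fromEdgeSet (F : Set (Sym2 V))).Adj a b := by
    rw [SimpleGraph.fromEdgeSet_adj]; exact ⟨by exact_mod_cast h, hab⟩
  exact ⟨this.toWalk, by simp⟩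

open Classical in
/-- Balls of radius `i` around `v` inside `S`. -/
noncomputable def spBall {V : Type} [Fintype V] (G : SimpleGraph V) (S : Finset V) (v : V) :
    ℕ → Finset V
  | 0 => {v}
  | i + 1 => spBall G S v i ∪ S.filter (fun x => ∃ y ∈ spBall G S v i, G.Adj y x)

open Classical in
theorem spBall_tree {V : Type} [Fintype V] (G : SimpleGraph V) (S : Finset V) (v : V) (i : ℕ) :
    ∃ F : Finset (Sym2 V), (F : Set (Sym2 V)) ⊆ G.edgeSet ∧ F.card ≤ (spBall G S v i).card ∧
      ∀ x ∈ spBall G S v i, SpWk F v x i := by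
  induction i with
  | zero =>
    refine ⟨∅, by simp, by simp, ?_⟩
    intro x hx
    simp only [spBall, Finset.mem_singleton] at hx
    subst hx
    exact SpWk.refl _ _ _
  | succ i ih =>
    obtain ⟨F, hFG, hFc, hF⟩ := ih
    set B := spBall G S v i with hB
    set N := (S.filter (fun x => ∃ y ∈ B, G.Adj y x)) \ B with hN
    have hBN : spBall G S v (i+1) = B ∪ N := by
      simp only [spBall, ← hB, hN, Finset.union_sdiff_self_eq_union]
    have hpar : ∀ x : V, ∃ y, x ∈ N → y ∈ B ∧ G.Adj y x := by
      intro x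
      by_cases hx : x ∈ N
      · have := (Finset.mem_filter.1 (Finset.mem_sdiff.1 hx).1).2
        obtain ⟨y, hy⟩ := this
        exact ⟨y, fun _ => hy⟩
      · exact ⟨x, fun h => absurd h hx⟩
    choose par hpar using hpar
    refine ⟨F ∪ N.image (fun x => s(par x, x)), ?_, ?_, ?_⟩
    · intro e he
      simp only [Finset.coe_union, Set.mem_union, Finset.mem_coe, Finset.mem_image] at he
      rcases he with he | ⟨x, hx, rfl⟩
      · exact hFG he
      · exact (hpar x hx).2
    · have hdisj : Disjoint B N := Finset.disjoint_sdiff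
      rw [hBN, Finset.card_union_of_disjoint hdisj]
      refine (Finset.card_union_le _ _).trans ?_
      have := Finset.card_image_le (s := N) (f := fun x => s(par x, x))
      omega
    · intro x hx
      rw [hBN, Finset.mem_union] at hx
      rcases hx with hx | hx
      · exact (hF x hx).mono Finset.subset_union_left (by omega)
      · refine ((hF _ (hpar x hx).1).mono Finset.subset_union_left le_rfl).trans ?_
        refine SpWk.edge ?_ (hpar x hx).2.ne
        exact Finset.mem_union_right _ (Finset.mem_image_of_mem _ hx)

theorem spBall_mem {V : Type} [Fintype V] (G : SimpleGraph V) (S : Finset V) (v : V) (i : ℕ) :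
    v ∈ spBall G S v i := by
  induction i with
  | zero => simp [spBall]
  | succ i ih => simp [spBall, ih]

theorem spBall_subset {V : Type} [Fintype V] (G : SimpleGraph V) (S : Finset V) (v : V)
    (hv : v ∈ S) (i : ℕ) : spBall G S v i ⊆ S := by
  classical
  induction i with
  | zero => simp [spBall, hv]
  | succ i ih =>
    rw [spBall]
    exact Finset.union_subset ih (Finset.filter_subset _ _)

theorem spBall_grow {V : Type} [Fintype V] (G : SimpleGraph V) (S : Finset V) (v : V)
    (L : ℕ) (hL : Fintype.card V < 2 ^ L) :
    ∃ r < L, (spBall G S v (r + 1)).card ≤ 2 * (spBall G S v r).card := by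
  by_contra! h
  have key : ∀ r ≤ L, 2 ^ r ≤ (spBall G S v r).card := by
    intro r
    induction r with
    | zero => intro _; simp [spBall]
    | succ r ih =>
      intro hr
      have h1 := ih (by omega)
      have h2 := h r (by omega)
      rw [pow_succ]
      omega
  have h1 := key L le_rfl
  have h2 := Finset.card_le_univ (spBall G S v L)
  omega

theorem sp_mult {V : Type} [Fintype V] (G : SimpleGraph V) (L : ℕ)
    (hL : Fintype.card V < 2 ^ L) (m : ℕ) : ∀ S : Finset V, S.card ≤ m →
    ∃ F : Finset (Sym2 V), (F : Set (Sym2 V)) ⊆ G.edgeSet ∧ F.card ≤ 2 * S.card ∧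
      ∀ x ∈ S, ∀ y ∈ S, G.Adj x y → SpWk F x y (2 * L) := by
  classical
  induction m with
  | zero =>
    intro S hS
    have : S = ∅ := by simpa using hS
    subst this
    exact ⟨∅, by simp, by simp, by simp⟩
  | succ m ih =>
    intro S hS
    rcases S.eq_empty_or_nonempty with rfl | ⟨v, hv⟩
    · exact ⟨∅, by simp, by simp, by simp⟩
    obtain ⟨r, hr, hcard⟩ := spBall_grow G S v L hL
    obtain ⟨F1, hF1G, hF1c, hF1⟩ := spBall_tree G S v (r + 1)
    have hBS := spBall_subset G S v hv r
    have hBpos : 0 < (spBall G S v r).card := Finset.card_pos.2 ⟨v, spBall_mem G S v r⟩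
    have hsd := Finset.card_sdiff_add_card_eq_card hBS
    obtain ⟨F2, hF2G, hF2c, hF2⟩ := ih (S \ spBall G S v r) (by omega)
    have hmem : ∀ x ∈ spBall G S v r, x ∈ spBall G S v (r+1) := by
      intro x hx
      rw [spBall]
      exact Finset.mem_union_left _ hx
    have hnb : ∀ x ∈ spBall G S v r, ∀ y ∈ S, G.Adj x y → SpWk F1 x y (2 * L) := by
      intro x hx y hy hxy
      have hy' : y ∈ spBall G S v (r+1) := by
        rw [spBall]
        exact Finset.mem_union_right _ (Finset.mem_filter.2 ⟨hy, x, hx, hxy⟩)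
      exact ((hF1 x (hmem x hx)).symm.trans (hF1 y hy')).mono subset_rfl (by omega)
    refine ⟨F1 ∪ F2, ?_, ?_, ?_⟩
    · rw [Finset.coe_union]
      exact Set.union_subset hF1G hF2G
    · refine (Finset.card_union_le _ _).trans ?_
      omega
    · intro x hx y hy hxy
      by_cases hxB : x ∈ spBall G S v r
      · exact (hnb x hxB y hy hxy).mono Finset.subset_union_left le_rfl
      by_cases hyB : y ∈ spBall G S v r
      · exact (hnb y hyB x hx hxy.symm).symm.mono Finset.subset_union_left le_rfl
      · exact (hF2 x (Finset.mem_sdiff.2 ⟨hx, hxB⟩) y (Finset.mem_sdiff.2 ⟨hy, hyB⟩) hxy).mono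
          Finset.subset_union_right le_rfl

open Classical in
theorem sp_cluster {V : Type} [Fintype V] (G : SimpleGraph V) (D : ℕ) (hD : 0 < D) (m : ℕ) :
    ∀ W : Finset V, W.card ≤ m →
    ∃ C U : Finset V, (∀ x ∈ U, ∃ c ∈ C, G.Adj c x) ∧ D * C.card ≤ W.card ∧
      ∀ v : V, ((W \ U).filter (fun x => G.Adj v x)).card ≤ D := by
  induction m with
  | zero =>
    intro W hW
    have : W = ∅ := by simpa using hW
    subst this
    exact ⟨∅, ∅, by simp, by simp, by simp⟩
  | succ m ih =>
    intro W hW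
    by_cases h : ∃ c : V, D < (W.filter (fun x => G.Adj c x)).card
    · obtain ⟨c, hc⟩ := h
      have hsd := Finset.card_sdiff_add_card_eq_card (Finset.filter_subset (fun x => G.Adj c x) W)
      obtain ⟨C, U, h1, h2, h3⟩ := ih (W \ W.filter (fun x => G.Adj c x)) (by omega)
      refine ⟨insert c C, U ∪ W.filter (fun x => G.Adj c x), ?_, ?_, ?_⟩
      · intro x hx
        rcases Finset.mem_union.1 hx with hx | hx
        · obtain ⟨c', hc', hx'⟩ := h1 x hx
          exact ⟨c', Finset.mem_insert_of_mem hc', hx'⟩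
        · exact ⟨c, Finset.mem_insert_self _ _, (Finset.mem_filter.1 hx).2⟩
      · have := Finset.card_insert_le c C
        calc D * (insert c C).card ≤ D * (C.card + 1) := Nat.mul_le_mul_left _ this
          _ = D * C.card + D := by ring
          _ ≤ W.card := by omega
      · intro v
        refine (Finset.card_le_card ?_).trans (h3 v)
        intro x hx
        simp only [Finset.mem_filter, Finset.mem_sdiff, Finset.mem_union] at hx ⊢
        tauto
    · push Not at h
      exact ⟨∅, ∅, by simp, by simp, by simpa using h⟩

theorem sp_geo {V : Type} (G : SimpleGraph V) {u v : V} (p : G.Walk u v)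
    (hp : p.length = G.dist u v) {j k : ℕ} (hk : k ≤ p.length) {c : V}
    (h1 : G.Adj c (p.getVert j)) (h2 : G.Adj c (p.getVert k)) : k ≤ j + 2 := by
  by_contra! h
  have := SimpleGraph.dist_le ((p.take j).append
    ((SimpleGraph.Walk.cons h1.symm (SimpleGraph.Walk.cons h2 SimpleGraph.Walk.nil)).append
      (p.drop k)))
  simp only [SimpleGraph.Walk.length_append, SimpleGraph.Walk.length_cons,
    SimpleGraph.Walk.length_nil, SimpleGraph.Walk.take_length, SimpleGraph.Walk.drop_length] at this
  omega

open Classical in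
theorem sp_count {V : Type} (G : SimpleGraph V) {u v : V} (p : G.Walk u v)
    (hp : p.length = G.dist u v) (C U : Finset V) (hU : ∀ x ∈ U, ∃ c ∈ C, G.Adj c x) :
    ((Finset.range p.length).filter (fun j => p.getVert j ∈ U)).card ≤ C.card * 3 := by
  have hsub : (Finset.range p.length).filter (fun j => p.getVert j ∈ U) ⊆
      C.biUnion (fun c => (Finset.range p.length).filter (fun j => G.Adj c (p.getVert j))) := by
    intro j hj
    obtain ⟨hj1, hj2⟩ := Finset.mem_filter.1 hj
    obtain ⟨c, hc, hcj⟩ := hU _ hj2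
    exact Finset.mem_biUnion.2 ⟨c, hc, Finset.mem_filter.2 ⟨hj1, hcj⟩⟩
  refine (Finset.card_le_card hsub).trans (Finset.card_biUnion_le_card_mul _ _ _ ?_)
  intro c _
  set A := (Finset.range p.length).filter (fun j => G.Adj c (p.getVert j)) with hA
  rcases A.eq_empty_or_nonempty with h | h
  · simp [h]
  · have hm := Finset.min'_mem A h
    have : A ⊆ Finset.Icc (A.min' h) (A.min' h + 2) := by
      intro k hk
      rw [Finset.mem_Icc]
      refine ⟨Finset.min'_le _ _ hk, ?_⟩
      have hk' := Finset.mem_filter.1 hk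
      exact sp_geo G p hp (Finset.mem_range.1 hk'.1).le (Finset.mem_filter.1 hm).2 hk'.2
    refine (Finset.card_le_card this).trans ?_
    rw [Nat.card_Icc]
    omega

open Classical in
theorem sp_follow {V : Type} (G : SimpleGraph V) {u v : V} (p : G.Walk u v)
    (F : Finset (Sym2 V)) (U : Finset V) (K : ℕ)
    (h1 : ∀ x y, G.Adj x y → x ∉ U → s(x, y) ∈ F)
    (h2 : ∀ x y, G.Adj x y → SpWk F x y K) (i : ℕ) (hi : i ≤ p.length) :
    SpWk F u (p.getVert i)
      (i + K * ((Finset.range i).filter (fun j => p.getVert j ∈ U)).card) := by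
  induction i with
  | zero => rw [SimpleGraph.Walk.getVert_zero]; exact SpWk.refl _ _ _
  | succ i ih =>
    have hadj := p.adj_getVert_succ (i := i) (by omega)
    have ih := ih (by omega)
    rw [Finset.range_add_one, Finset.filter_insert]
    split_ifs with hU
    · rw [Finset.card_insert_of_notMem (by simp)]
      refine (ih.trans (h2 _ _ hadj)).mono subset_rfl ?_
      rw [Nat.mul_add]
      omega
    · refine (ih.trans (SpWk.edge (h1 _ _ hadj hU) hadj.ne)).mono subset_rfl ?_
      omega

/-- **Preliminary sparsification.**
There is an absolute constant `C` such that for every finite simple graph `G`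
on `n ≥ 2` vertices and every real `d` with `1 < d < n`, there is a subgraph
`G' ⊆ G` with at most `C · n · d` edges such that for every pair of vertices
connected in `G`, `dist_{G'}(u,v) ≤ dist_G(u,v) + C · (n/d) · log n`. -/
theorem sparsification_spanner :
    ∃ C : ℝ, 0 < C ∧
      ∀ (V : Type) [Fintype V] (G : SimpleGraph V), 2 ≤ Fintype.card V →
        ∀ d : ℝ, 1 < d → d < (Fintype.card V : ℝ) →
          ∃ G' : SimpleGraph V, G' ≤ G ∧
            (G'.edgeSet.ncard : ℝ) ≤ C * (Fintype.card V : ℝ) * d ∧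
            ∀ u v : V, G.Reachable u v →
              G'.Reachable u v ∧
              (G'.dist u v : ℝ) ≤ (G.dist u v : ℝ) +
                C * ((Fintype.card V : ℝ) / d) * Real.log (Fintype.card V) := by
  classical
  refine ⟨18, by norm_num, ?_⟩
  intro V _ G hn d hd hdn
  set n := Fintype.card V with hndef
  set L := Nat.log 2 n + 1 with hLdef
  have hL : n < 2 ^ L := Nat.lt_pow_succ_log_self (by norm_num) n
  set D := ⌈d⌉₊ with hDdef
  have hdD : d ≤ D := Nat.le_ceil d
  have hD2 : (D : ℝ) ≤ 2 * d := by
    have := Nat.ceil_lt_add_one (a := d) (by linarith)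
    linarith
  have hDpos : 0 < D := Nat.ceil_pos.2 (by linarith)
  obtain ⟨F, hFG, hFc, hF⟩ := sp_mult G L hL n Finset.univ (by simp [hndef])
  obtain ⟨C, U, hC1, hC2, hC3⟩ := sp_cluster G D hDpos n Finset.univ (by simp [hndef])
  set E : Finset (Sym2 V) := Finset.univ.biUnion (fun v : V =>
    ((Finset.univ \ U).filter (fun x => G.Adj v x)).image (fun x => s(v, x))) with hE
  have hEG : (E : Set (Sym2 V)) ⊆ G.edgeSet := by
    intro e he
    simp only [hE, Finset.mem_coe, Finset.mem_biUnion, Finset.mem_image, Finset.mem_filter] at he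
    obtain ⟨v, _, x, ⟨_, hx⟩, rfl⟩ := he
    exact hx
  have hEc : E.card ≤ n * D := by
    refine Finset.card_biUnion_le_card_mul _ _ _ ?_
    intro v _
    exact Finset.card_image_le.trans (hC3 v)
  have hmemE : ∀ x y, G.Adj x y → x ∉ U → s(x, y) ∈ E ∪ F := by
    intro x y hxy hx
    refine Finset.mem_union_left _ ?_
    rw [Sym2.eq_swap]
    refine Finset.mem_biUnion.2 ⟨y, Finset.mem_univ _, Finset.mem_image_of_mem _ ?_⟩
    simp [hx, hxy.symm]
  have hspan : ∀ x y, G.Adj x y → SpWk (E ∪ F) x y (2 * L) := fun x y hxy =>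
    (hF x (Finset.mem_univ _) y (Finset.mem_univ _) hxy).mono Finset.subset_union_right le_rfl
  have hn0 : (0 : ℝ) < n := by linarith
  refine ⟨SimpleGraph.fromEdgeSet ((E ∪ F : Finset (Sym2 V)) : Set (Sym2 V)), ?_, ?_, ?_⟩
  · intro x y hxy
    rw [SimpleGraph.fromEdgeSet_adj] at hxy
    have h := hxy.1
    rw [Finset.coe_union] at h
    exact (Set.union_subset hEG hFG) h
  · have h1 : (SimpleGraph.fromEdgeSet ((E ∪ F : Finset (Sym2 V)) : Set (Sym2 V))).edgeSet.ncard
        ≤ (E ∪ F).card := by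
      rw [← Set.ncard_coe_finset]
      refine Set.ncard_le_ncard ?_ (Finset.finite_toSet _)
      rw [SimpleGraph.edgeSet_fromEdgeSet]
      exact Set.sdiff_subset
    have h2 : (E ∪ F).card ≤ n * D + 2 * n := by
      refine (Finset.card_union_le _ _).trans ?_
      rw [Finset.card_univ] at hFc
      omega
    have h3 : ((SimpleGraph.fromEdgeSet
        ((E ∪ F : Finset (Sym2 V)) : Set (Sym2 V))).edgeSet.ncard : ℝ) ≤ n * D + 2 * n := by
      exact_mod_cast h1.trans h2
    nlinarith
  · intro u v huv
    obtain ⟨p, hp⟩ := huv.exists_walk_length_eq_dist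
    have h1 := sp_follow G p (E ∪ F) U (2 * L) hmemE hspan p.length le_rfl
    rw [SimpleGraph.Walk.getVert_length] at h1
    have h2 := sp_count G p hp C U hC1
    obtain ⟨q, hq⟩ := h1
    refine ⟨⟨q⟩, ?_⟩
    have h3 := (SimpleGraph.dist_le q).trans hq
    have h4 := h3.trans (Nat.add_le_add_left (Nat.mul_le_mul_left (2 * L) h2) _)
    rw [hp] at h4
    have h5 : ((SimpleGraph.fromEdgeSet
        ((E ∪ F : Finset (Sym2 V)) : Set (Sym2 V))).dist u v : ℝ) ≤
          G.dist u v + 2 * L * (C.card * 3) := by exact_mod_cast h4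
    have hC : (C.card : ℝ) ≤ n / d := by
      rw [le_div_iff₀ (by linarith)]
      have : ((D * C.card : ℕ) : ℝ) ≤ n := by
        rw [Finset.card_univ] at hC2
        exact_mod_cast hC2
      push_cast at this
      nlinarith [(Nat.cast_nonneg C.card : (0 : ℝ) ≤ C.card)]
    have hlog : (L : ℝ) ≤ 3 * Real.log n := by
      have ha : ((2 ^ Nat.log 2 n : ℕ) : ℝ) ≤ n := by
        exact_mod_cast Nat.pow_log_le_self 2 (by omega)
      have hb := Real.log_le_log (by positivity) ha
      push_cast at hb
      rw [Real.log_pow] at hb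
      have hc : Real.log 2 ≤ Real.log n := Real.log_le_log (by norm_num) (by exact_mod_cast hn)
      have hl2 := Real.log_two_gt_d9
      have : (L : ℝ) = Nat.log 2 n + 1 := by simp [hLdef]
      rw [this]
      have h0 : (0 : ℝ) ≤ Nat.log 2 n := Nat.cast_nonneg _
      nlinarith
    have hlp : 0 ≤ Real.log n := Real.log_nonneg (by linarith)
    have h6 : (L : ℝ) * C.card ≤ (3 * Real.log n) * (n / d) :=
      mul_le_mul hlog hC (Nat.cast_nonneg _) (by positivity)
    nlinarith
end

section
/- There exists an absolute constant C such that: for every connected finite undirected unweighted simple graph G on n vertices and m edges, every real ε with 0 < ε ≤ 1, and every positive integer R, there exists a finite collection B of pairs (c, r), where c is a vertex of G and r is a positive integer, satisfying: (1) for every (c, r) ∈ B, R ≤ r ≤ 2^(10/ε) · R; (2) every vertex of G lies in ball_G(c, r) for some (c, r) ∈ B; (3) Σ_{(c,r)∈B} |ball_G(c, r/2)| ≤ C · n / ε; (4) for every (c, r) ∈ B, |ball_G(c, 4r)| ≤ n^ε · |ball_G(c, r/2)|; (5) Σ_{(c,r)∈B} vol_G(ball_G(c, 4r)) ≤ C ·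 m · n^ε / ε. -/
/-- The ball of radius `r` (a natural number) around `c` in the graph `G`:
all vertices at shortest-path distance at most `r` from `c`. -/
def gball {V : Type} (G : SimpleGraph V) (c : V) (r : ℕ) : Set V :=
  {v | G.edist c v ≤ (r : ℕ∞)}

/-- The volume of a set of vertices: the sum of the degrees of its members. -/
noncomputable def gvol {V : Type} [Fintype V] (G : SimpleGraph V) (S : Set V) : ℕ :=
  ∑ v ∈ S.toFinite.toFinset, (G.neighborSet v).ncard

theorem gball_mono {V : Type} (G : SimpleGraph V) (c : V) {r s : ℕ} (h : r ≤ s) :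
    gball G c r ⊆ gball G c s := by
  intro v hv
  simp only [gball, Set.mem_ofPred_eq] at *
  exact hv.trans (by exact_mod_cast h)

theorem mem_gball_self {V : Type} (G : SimpleGraph V) (c : V) (r : ℕ) : c ∈ gball G c r := by
  simp [gball]

/-- Maximal packing. -/
theorem exists_packing {V : Type} [Fintype V] (G : SimpleGraph V) (S : Set V) (r : ℕ) :
    ∃ T : Finset V, (∀ t ∈ T, t ∈ S) ∧
      (∀ t ∈ T, ∀ u ∈ T, t ≠ u → Disjoint (gball G t (r / 2)) (gball G u (r / 2))) ∧
      ∀ s ∈ S, ∃ t ∈ T, s ∈ gball G t r := by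
  classical
  let P : Finset V → Prop := fun T => (∀ t ∈ T, t ∈ S) ∧
      (∀ t ∈ T, ∀ u ∈ T, t ≠ u → Disjoint (gball G t (r / 2)) (gball G u (r / 2)))
  have h0 : P ∅ := by simp [P]
  obtain ⟨T, -, hT⟩ := Finite.exists_le_maximal h0
  refine ⟨T, hT.prop.1, hT.prop.2, ?_⟩
  intro s hs
  by_contra! hcon
  have key : ∀ t ∈ T, Disjoint (gball G t (r / 2)) (gball G s (r / 2)) := by
    intro t ht
    rw [Set.disjoint_left]
    intro x hx hx'
    apply hcon t ht
    simp only [gball, Set.mem_ofPred_eq] at *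
    calc G.edist t s ≤ G.edist t x + G.edist x s := SimpleGraph.edist_triangle
      _ ≤ ((r / 2 : ℕ) : ℕ∞) + ((r / 2 : ℕ) : ℕ∞) := by
        refine add_le_add hx ?_
        rw [SimpleGraph.edist_comm]; exact hx'
      _ ≤ (r : ℕ∞) := by
        have : r / 2 + r / 2 ≤ r := by omega
        exact_mod_cast this
  have hP : P (insert s T) := by
    refine ⟨?_, ?_⟩
    · intro t ht
      rcases Finset.mem_insert.1 ht with rfl | ht
      · exact hs
      · exact hT.prop.1 t ht
    · intro t ht u hu htu
      rcases Finset.mem_insert.1 ht with rfl | ht' <;>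
        rcases Finset.mem_insert.1 hu with rfl | hu'
      · exact absurd rfl htu
      · exact (key u hu').symm
      · exact key t ht'
      · exact hT.prop.2 t ht' u hu' htu
  have hle := hT.le_of_ge hP (Finset.subset_insert s T)
  have hsT : s ∈ T := hle (Finset.mem_insert_self s T)
  exact hcon s hsT (mem_gball_self G s r)

theorem packing_sum {V : Type} [Fintype V] (w : V → ℕ) (T : Finset V) (A : V → Set V)
    (h : ∀ t ∈ T, ∀ u ∈ T, t ≠ u → Disjoint (A t) (A u)) :
    ∑ t ∈ T, ∑ v ∈ (A t).toFinite.toFinset, w v ≤ ∑ v, w v := by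
  classical
  rw [← Finset.sum_biUnion]
  · exact Finset.sum_le_sum_of_subset (Finset.subset_univ _)
  · intro t ht u hu htu
    have := h t ht u hu htu
    simp only [Function.onFun]
    rw [Set.Finite.disjoint_toFinset]
    exact this

theorem ncard_as_sum {V : Type} [Fintype V] (A : Set V) :
    A.ncard = ∑ v ∈ A.toFinite.toFinset, 1 := by
  rw [Set.ncard_eq_toFinset_card A A.toFinite]; simp

theorem gvol_mono {V : Type} [Fintype V] (G : SimpleGraph V) {A B : Set V} (h : A ⊆ B) :
    gvol G A ≤ gvol G B := by
  unfold gvol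
  exact Finset.sum_le_sum_of_subset (by simpa using h)

theorem total_vol {V : Type} [Fintype V] (G : SimpleGraph V) :
    ∑ v, (G.neighborSet v).ncard = 2 * G.edgeSet.ncard := by
  classical
  have := G.sum_degrees_eq_twice_card_edges
  rw [Set.ncard_eq_toFinset_card' G.edgeSet]
  rw [← SimpleGraph.edgeFinset, ← this]
  refine Finset.sum_congr rfl fun v _ => ?_
  rw [Set.ncard_eq_toFinset_card', ← SimpleGraph.neighborFinset, SimpleGraph.card_neighborFinset_eq_degree]

theorem gvol_le_sq {V : Type} [Fintype V] (G : SimpleGraph V) (A : Set V) :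
    gvol G A ≤ Fintype.card V * Fintype.card V := by
  unfold gvol
  calc ∑ v ∈ A.toFinite.toFinset, (G.neighborSet v).ncard
      ≤ ∑ v ∈ A.toFinite.toFinset, Fintype.card V := by
        refine Finset.sum_le_sum fun v _ => ?_
        rw [← Nat.card_eq_fintype_card]; exact Set.ncard_le_card _
    _ ≤ ∑ v : V, Fintype.card V := Finset.sum_le_sum_of_subset (Finset.subset_univ _)
    _ = _ := by simp

theorem growth (f g : ℕ → ℝ) (q M : ℝ) (K : ℕ) (hq : 0 ≤ q) (hf : Monotone f) (hg : Monotone g)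
    (hf0 : 1 ≤ f 0) (hg0 : 1 ≤ g 0) (hM : ∀ i, f i * g i ≤ M) (hK : M ≤ q ^ (K + 1)) :
    ∃ i ≤ K, f (i + 1) ≤ q * f i ∧ g (i + 1) ≤ q * g i := by
  by_contra! hcon
  have f1 : ∀ i, 1 ≤ f i := fun i => hf0.trans (hf (Nat.zero_le i))
  have g1 : ∀ i, 1 ≤ g i := fun i => hg0.trans (hg (Nat.zero_le i))
  have step : ∀ i ≤ K, q * (f i * g i) < f (i + 1) * g (i + 1) := by
    intro i hi
    have h1 := f1 i
    have h2 := g1 i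
    have h3 := hf (Nat.le_succ i)
    have h4 := hg (Nat.le_succ i)
    simp only [Nat.succ_eq_add_one] at h3 h4
    by_cases h : f (i + 1) ≤ q * f i
    · have := hcon i hi h
      calc q * (f i * g i) = f i * (q * g i) := by ring
        _ < f i * g (i + 1) := by gcongr
        _ ≤ _ := by gcongr; linarith
    · push Not at h
      calc q * (f i * g i) = (q * f i) * g i := by ring
        _ < f (i + 1) * g i := by gcongr
        _ ≤ _ := by gcongr; linarith
  have ind : ∀ i ≤ K, q ^ (i + 1) < f (i + 1) * g (i + 1) := by
    intro i
    induction i with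
    | zero =>
      intro hi
      refine lt_of_le_of_lt ?_ (step 0 hi)
      have : 1 ≤ f 0 * g 0 := one_le_mul_of_one_le_of_one_le hf0 hg0
      simp only [zero_add, pow_one]
      nlinarith
    | succ i ih =>
      intro hi
      refine lt_of_le_of_lt ?_ (step (i + 1) hi)
      rw [pow_succ' q (i + 1)]
      exact mul_le_mul_of_nonneg_left (ih (by omega)).le hq
  linarith [ind K le_rfl, hM (K + 1)]

theorem scale_exists {V : Type} [Fintype V] (G : SimpleGraph V) (hG : G.Connected) (ε : ℝ)
    (hε : 0 < ε) (R K : ℕ) (hK : 3 ≤ ε * (K + 1)) (c : V) :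
    ∃ i ≤ K,
      ((gball G c (4 * (8 ^ i * R))).ncard : ℝ) ≤
        (Fintype.card V : ℝ) ^ ε * ((gball G c (8 ^ i * R / 2)).ncard : ℝ) ∧
      (gvol G (gball G c (4 * (8 ^ i * R))) : ℝ) ≤
        (Fintype.card V : ℝ) ^ ε * (gvol G (gball G c (8 ^ i * R / 2)) : ℝ) := by
  classical
  have hrad : ∀ i, 4 * (8 ^ i * R) = 8 ^ (i + 1) * R / 2 := by
    intro i; rw [pow_succ]; generalize 8 ^ i = x
    have : x * 8 * R = 2 * (4 * (x * R)) := by ring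
    rw [this]; simp
  have hn1 : 1 ≤ Fintype.card V := Fintype.card_pos_iff.2 ⟨c⟩
  have hpos : ∀ r, 1 ≤ (gball G c r).ncard := fun r =>
    (Set.ncard_pos (Set.toFinite _)).2 ⟨c, mem_gball_self G c r⟩
  have hcard : ∀ A : Set V, A.ncard ≤ Fintype.card V := fun A => by
    rw [← Nat.card_eq_fintype_card]; exact Set.ncard_le_card _
  rcases hn1.eq_or_lt with h1 | h1
  · have hs : Subsingleton V := Fintype.card_le_one_iff_subsingleton.1 h1.ge
    refine ⟨0, Nat.zero_le _, ?_, ?_⟩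
    · rw [← h1]; simp only [Nat.cast_one, Real.one_rpow, one_mul]
      have a := hcard (gball G c (4 * (8 ^ 0 * R)))
      have b := hpos (8 ^ 0 * R / 2)
      rw [← h1] at a
      exact_mod_cast a.trans b
    · have : ∀ A, gvol G A = 0 := by
        intro A; unfold gvol
        refine Finset.sum_eq_zero fun v _ => ?_
        rw [Set.ncard_eq_zero (Set.toFinite _)]
        ext u
        simp only [SimpleGraph.mem_neighborSet, Set.mem_empty_iff_false, iff_false]
        intro h; exact h.ne (Subsingleton.elim _ _)
      simp [this]
  · have : Nontrivial V := Fintype.one_lt_card_iff_nontrivial.1 h1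
    have hmono : ∀ i j, i ≤ j → gball G c (8 ^ i * R / 2) ⊆ gball G c (8 ^ j * R / 2) := by
      intro i j hij
      apply gball_mono
      gcongr
      norm_num
    have hdeg : ∀ r, 1 ≤ gvol G (gball G c r) := by
      intro r
      unfold gvol
      obtain ⟨u, hu⟩ := hG.preconnected.exists_adj_of_nontrivial c
      have h1 : 1 ≤ (G.neighborSet c).ncard := (Set.ncard_pos (Set.toFinite _)).2 ⟨u, hu⟩
      exact h1.trans (Finset.single_le_sum (f := fun v => (G.neighborSet v).ncard)
        (fun _ _ => Nat.zero_le _) (by simpa using mem_gball_self G c r))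
    obtain ⟨i, hi, ha, hb⟩ := growth (fun i => ((gball G c (8 ^ i * R / 2)).ncard : ℝ))
      (fun i => (gvol G (gball G c (8 ^ i * R / 2)) : ℝ)) ((Fintype.card V : ℝ) ^ ε)
      ((Fintype.card V : ℝ) ^ 3) K (by positivity)
      (fun i j hij => by
        exact Nat.cast_le.2 (Set.ncard_le_ncard (hmono i j hij) (Set.toFinite _)))
      (fun i j hij => Nat.cast_le.2 (gvol_mono G (hmono i j hij)))
      (by exact_mod_cast hpos _) (by exact_mod_cast hdeg _)
      (fun i => by
        have := Nat.mul_le_mul (hcard (gball G c (8 ^ i * R / 2)))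
          (gvol_le_sq G (gball G c (8 ^ i * R / 2)))
        calc _ ≤ (Fintype.card V : ℝ) * (Fintype.card V * Fintype.card V) := by exact_mod_cast this
          _ = _ := by ring)
      (by
        rw [← Real.rpow_natCast (_ ^ ε), ← Real.rpow_mul (by positivity), ← Real.rpow_natCast]
        apply Real.rpow_le_rpow_of_exponent_le
        · exact_mod_cast h1.le
        · push_cast; exact hK)
    exact ⟨i, hi, by rw [hrad]; exact ha, by rw [hrad]; exact hb⟩

/-- **Clustering.** There is an absolute constant `C` such that: for every
connected finite simple graph `G` on `n` vertices and `m` edges, every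
`0 < ε ≤ 1` and every positive integer `R`, there is a finite collection `B`
of balls (given as center–radius pairs `(c, r)`) such that: every radius
satisfies `R ≤ r ≤ 2^(10/ε) · R`; the balls cover all vertices;
`Σ |ball(c, r/2)| ≤ C·n/ε`; each ball satisfies
`|ball(c, 4r)| ≤ n^ε · |ball(c, r/2)|`; and
`Σ vol(ball(c, 4r)) ≤ C · m · n^ε / ε`. -/
theorem clustering :
    ∃ C : ℝ, 0 < C ∧
      ∀ (V : Type) [Fintype V] (G : SimpleGraph V), G.Connected →
        ∀ ε : ℝ, 0 < ε → ε ≤ 1 → ∀ R : ℕ, 0 < R →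
          ∃ B : Finset (V × ℕ),
            (∀ p ∈ B, R ≤ p.2 ∧ (p.2 : ℝ) ≤ (2 : ℝ) ^ ((10 : ℝ) / ε) * (R : ℝ)) ∧
            (∀ v : V, ∃ p ∈ B, v ∈ gball G p.1 p.2) ∧
            (∑ p ∈ B, ((gball G p.1 (p.2 / 2)).ncard : ℝ)) ≤
              C * (Fintype.card V : ℝ) / ε ∧
            (∀ p ∈ B, ((gball G p.1 (4 * p.2)).ncard : ℝ) ≤
              (Fintype.card V : ℝ) ^ ε * ((gball G p.1 (p.2 / 2)).ncard : ℝ)) ∧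
            (∑ p ∈ B, (gvol G (gball G p.1 (4 * p.2)) : ℝ)) ≤
              C * (G.edgeSet.ncard : ℝ) * (Fintype.card V : ℝ) ^ ε / ε := by
  classical
  refine ⟨8, by norm_num, ?_⟩
  intro V _ G hG ε hε hε1 R hR
  set n := Fintype.card V with hn
  set K := ⌊3 / ε⌋₊ with hKdef
  have hK1 : 3 ≤ ε * ((K : ℝ) + 1) := by
    have := (Nat.lt_floor_add_one (3 / ε)).le
    rw [div_le_iff₀ hε] at this
    linarith
  have hK2 : (K : ℝ) ≤ 3 / ε := Nat.floor_le (by positivity)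
  have hK3 : (K : ℝ) + 1 ≤ 4 / ε := by
    have : 1 ≤ 1 / ε := by rw [le_div_iff₀ hε]; linarith
    have : 4 / ε = 3 / ε + 1 / ε := by ring
    linarith
  choose s hsK hs1 hs2 using scale_exists G hG ε hε R K hK1
  choose T hTS hTd hTc using fun i : ℕ => exists_packing G {v | s v = i} (8 ^ i * R)
  let B : Finset (V × ℕ) :=
    (Finset.range (K + 1)).biUnion fun i => (T i).image fun c => (c, 8 ^ i * R)
  have hB : ∀ p ∈ B, ∃ i ≤ K, p.1 ∈ T i ∧ p.2 = 8 ^ i * R := by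
    intro p hp
    simp only [B, Finset.mem_biUnion, Finset.mem_range, Finset.mem_image] at hp
    obtain ⟨i, hi, c, hc, rfl⟩ := hp
    exact ⟨i, by omega, hc, rfl⟩
  have hsum : ∀ F : V × ℕ → ℝ, ∑ p ∈ B, F p =
      ∑ i ∈ Finset.range (K + 1), ∑ c ∈ T i, F (c, 8 ^ i * R) := by
    intro F
    simp only [B]
    rw [Finset.sum_biUnion]
    · refine Finset.sum_congr rfl fun i _ => ?_
      rw [Finset.sum_image]
      intro a _ b _ hab
      exact (Prod.mk.inj hab).1
    · intro i _ j _ hij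
      simp only [Function.onFun]
      rw [Finset.disjoint_left]
      intro p hp hq
      obtain ⟨c, _, rfl⟩ := Finset.mem_image.1 hp
      obtain ⟨d, _, h⟩ := Finset.mem_image.1 hq
      have h2 := (Prod.mk.inj h).2
      have h3 := Nat.eq_of_mul_eq_mul_right hR h2
      exact hij (Nat.pow_right_injective (le_refl 2 |>.trans (by norm_num) : 2 ≤ 8) h3).symm
  have hnpos : (0 : ℝ) ≤ (n : ℝ) ^ ε := by positivity
  refine ⟨B, ?_, ?_, ?_, ?_, ?_⟩
  · intro p hp
    obtain ⟨i, hi, -, h2⟩ := hB p hp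
    rw [h2]
    refine ⟨Nat.le_mul_of_pos_left _ (by positivity), ?_⟩
    push_cast
    gcongr
    have hi' : (i : ℝ) ≤ 3 / ε := le_trans (by exact_mod_cast hi) hK2
    have : (8 : ℝ) ^ i = (2 : ℝ) ^ ((3 : ℝ) * i) := by
      rw [Real.rpow_mul (by norm_num), Real.rpow_natCast]; norm_num
    rw [this]
    apply Real.rpow_le_rpow_of_exponent_le (by norm_num)
    have e1 : 10 / ε = 3 * (3 / ε) + 1 / ε := by ring
    have e2 : 0 < 1 / ε := by positivity
    linarith
  · intro v
    obtain ⟨t, ht, hv⟩ := hTc (s v) v rfl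
    refine ⟨(t, 8 ^ s v * R), ?_, hv⟩
    simp only [B, Finset.mem_biUnion, Finset.mem_range, Finset.mem_image]
    exact ⟨s v, Nat.lt_succ_of_le (hsK v), t, ht, rfl⟩
  · rw [hsum]
    calc _ ≤ ∑ i ∈ Finset.range (K + 1), (n : ℝ) := by
          refine Finset.sum_le_sum fun i _ => ?_
          have := packing_sum (fun _ => 1) (T i) (fun t => gball G t (8 ^ i * R / 2)) (hTd i)
          simp only [← ncard_as_sum] at this
          rw [Finset.sum_const, Finset.card_univ, smul_eq_mul, mul_one] at this
          exact_mod_cast this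
      _ = ((K : ℝ) + 1) * n := by simp
      _ ≤ (4 / ε) * n := by gcongr
      _ ≤ 8 * n / ε := by
          rw [div_mul_eq_mul_div]
          gcongr
          norm_num
  · intro p hp
    obtain ⟨i, hi, h1, h2⟩ := hB p hp
    have h3 : s p.1 = i := hTS i _ h1
    have := hs1 p.1
    rw [h3, ← h2] at this
    exact this
  · rw [hsum]
    calc _ ≤ ∑ i ∈ Finset.range (K + 1), (n : ℝ) ^ ε * (2 * G.edgeSet.ncard) := by
          refine Finset.sum_le_sum fun i _ => ?_
          have h := packing_sum (fun v => (G.neighborSet v).ncard) (T i)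
            (fun t => gball G t (8 ^ i * R / 2)) (hTd i)
          rw [total_vol] at h
          calc _ ≤ ∑ c ∈ T i, (n : ℝ) ^ ε * (gvol G (gball G c (8 ^ i * R / 2)) : ℝ) := by
                refine Finset.sum_le_sum fun c hc => ?_
                have h3 : s c = i := hTS i _ hc
                have := hs2 c
                rw [h3] at this
                exact this
            _ = (n : ℝ) ^ ε * ∑ c ∈ T i, (gvol G (gball G c (8 ^ i * R / 2)) : ℝ) := by
                rw [Finset.mul_sum]
            _ ≤ _ := by
                refine mul_le_mul_of_nonneg_left ?_ hnpos
                unfold gvol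
                exact_mod_cast h
      _ = ((K : ℝ) + 1) * ((n : ℝ) ^ ε * (2 * G.edgeSet.ncard)) := by simp
      _ ≤ (4 / ε) * ((n : ℝ) ^ ε * (2 * G.edgeSet.ncard)) := by gcongr
      _ = _ := by ring
end
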